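/- arXiv:2011.09024 — 3 statements merged into one kernel-verified Lean document; each statement's English description precedes it below -/
import Mathlib

section
/- For any integer d ≥ 2 and any positive integers r and s satisfying d(s-1) < (2^d - 1)r, there exist a constant c > 0 and a threshold N such that for every n ≥ N there is a d-uniform hypergraph on n vertices that contains no copy of K_{2,...,2}^{(d)} and has at least c · n^{d - r/s} edges. In other words, ex_d(n, K_{2,...,2}^{(d)}) = Ω(n^{d - r/s}). -/
/-!
The hypergraph comes from a random multilinear map `T : V ^ d → W` with `V = 𝔽_p ^ s` and
`W = 𝔽_p ^ r`, where `p` is a prime with `d * p ^ s ≤ n` and `p` comparable to `n ^ (1 / s)`. The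
vertices are `d` disjoint copies of `V`, and the edges are the tuples `v` with `T v = u`, for a
fixed `u ≠ 0`. On average there are about `p ^ (s d - r)` edges.

A box with sides `{v i, x i}` consisting of edges must have `v i` and `x i` linearly independent
for every `i`: if `x i = a • v i`, then `u = a • u`, so `a = 1` (`isBadBox_of_ne`). For such a box
the `2 ^ d` values of `T` are independent and uniform in `W` (`card_multilinear_of_grid`), so it
occurs with probability `p ^ (-r 2 ^ d)`, and the expected number of these bad boxes is at most
`p ^ (2 s d - r 2 ^ d)`.

By multilinearity, if `T = u` on a box, then `T = u` on the product of the affine lines through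
its sides (`multilinear_eq_on_lines`). Hence an edge lying in one bad box lies in at least
`(p - 1) ^ d` of them, and deleting all such edges costs on average only
`O(p ^ (2 s d - r 2 ^ d - d))` edges. This is a small fraction of `p ^ (s d - r)` exactly when
`d (s - 1) < (2 ^ d - 1) r` (`main_term_bound`), so some `T` leaves a positive proportion of
`p ^ (s d - r)` edges (`exists_multilinear_many_good`) and no box.
-/

/-- A `d`-uniform hypergraph with edge set `E` on vertex set `Fin n` contains a copy of
`K_{2,…,2}^{(d)}`: there are `2d` distinct vertices `a_1, b_1, …, a_d, b_d` such that all
`2^d` sets `{c_1, …, c_d}` with `c_j ∈ {a_j, b_j}` are edges. -/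
def HasBox (d n : ℕ) (E : Finset (Finset (Fin n))) : Prop :=
  ∃ a b : Fin d → Fin n,
    Function.Injective (fun p : Fin d × Bool => if p.2 then b p.1 else a p.1) ∧
    ∀ ε : Fin d → Bool,
      (Finset.image (fun j => if ε j then b j else a j) Finset.univ) ∈ E

/-! ### From tuples to hypergraphs -/

/-- `d` disjoint copies of `V` fit inside `Fin n`, and a set `G` of `d`-tuples of `V` becomes a
`d`-partite `d`-uniform hypergraph. A box of that hypergraph necessarily has its two vertices
`a_j, b_j` in a common part, so it comes from a box of `G` in the ordered sense. -/
lemma exists_hypergraph_of_tuples {d n : ℕ} {V : Type*} [Fintype V] [DecidableEq V]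
    (hn : d * Fintype.card V ≤ n) (G : Finset (Fin d → V))
    (hG : ∀ v x : Fin d → V, (∀ i, v i ≠ x i) →
      ¬ ∀ ε : Fin d → Bool, (fun i => if ε i then x i else v i) ∈ G) :
    ∃ E : Finset (Finset (Fin n)),
      (∀ e ∈ E, e.card = d) ∧ ¬ HasBox d n E ∧ E.card = G.card := by
  classical
  obtain ⟨f⟩ : Nonempty (Fin d × V ↪ Fin n) := by
    apply Function.Embedding.nonempty_of_card_le
    simpa using hn
  have hmem : ∀ (v : Fin d → V) (p : Fin d × V),
      f p ∈ Finset.univ.image (fun i => f (i, v i)) ↔ p.2 = v p.1 := by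
    rintro v ⟨i, y⟩
    simp only [Finset.mem_image, Finset.mem_univ, true_and, f.injective.eq_iff, Prod.mk.injEq]
    constructor
    · rintro ⟨j, rfl, rfl⟩
      rfl
    · rintro rfl
      exact ⟨i, rfl, rfl⟩
  refine ⟨G.image fun v => Finset.univ.image fun i => f (i, v i), ?_, ?_, ?_⟩
  · intro e he
    obtain ⟨v, -, rfl⟩ := Finset.mem_image.1 he
    rw [Finset.card_image_of_injective]
    · simp
    · intro i j hij
      exact congrArg Prod.fst (f.injective hij)
  · rintro ⟨a, b, hab, hE⟩
    have hE' : ∀ ε : Fin d → Bool, ∃ v ∈ G, Finset.univ.image (fun i => f (i, v i)) =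
        Finset.univ.image (fun j => if ε j then b j else a j) := by
      intro ε
      exact Finset.mem_image.1 (hE ε)
    have hrange : ∀ (ε : Fin d → Bool) j, ∃ p, f p = if ε j then b j else a j := by
      intro ε j
      obtain ⟨v, -, hv⟩ := hE' ε
      have : (if ε j then b j else a j) ∈ Finset.univ.image (fun i => f (i, v i)) := by
        rw [hv]
        exact Finset.mem_image_of_mem _ (Finset.mem_univ j)
      obtain ⟨i, -, hi⟩ := Finset.mem_image.1 this
      exact ⟨_, hi⟩
    choose α hα using fun j => hrange (fun _ => false) j
    choose β hβ using fun j => hrange (fun _ => true) j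
    simp only [Bool.false_eq_true, if_false, if_true] at hα hβ
    have hγ : ∀ ε : Fin d → Bool, ∃ v ∈ G, ∀ i, ∃ j, (if ε j then β j else α j) = (i, v i) := by
      intro ε
      obtain ⟨v, hvG, hv⟩ := hE' ε
      refine ⟨v, hvG, fun i => ?_⟩
      have : f (i, v i) ∈ Finset.univ.image (fun j => if ε j then b j else a j) := by
        rw [← hv]
        exact Finset.mem_image_of_mem _ (Finset.mem_univ i)
      obtain ⟨j, -, hj⟩ := Finset.mem_image.1 this
      refine ⟨j, f.injective ?_⟩
      rw [← hj, ← hα, ← hβ]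
      split_ifs <;> rfl
    have hsurj : ∀ ε : Fin d → Bool,
        Function.Surjective fun j => (if ε j then β j else α j).1 := by
      intro ε i
      obtain ⟨v, -, hv⟩ := hγ ε
      obtain ⟨j, hj⟩ := hv i
      exact ⟨j, by simp [hj]⟩
    have hbij : ∀ ε : Fin d → Bool,
        Function.Bijective fun j => (if ε j then β j else α j).1 := fun ε =>
      Finite.surjective_iff_bijective.1 (hsurj ε)
    have hα_bij : Function.Bijective fun j => (α j).1 := by
      simpa using hbij fun _ => false
    -- exchanging only `a_j` for `b_j` keeps the edge transversal, so the part is unchanged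
    have hpart : ∀ j, (β j).1 = (α j).1 := by
      intro j
      obtain ⟨k, hk⟩ := hα_bij.2 (β j).1
      by_cases hkj : k = j
      · subst hkj
        exact hk.symm
      · exact absurd ((hbij fun l => decide (l = j)).1 (a₁ := k) (a₂ := j)
          (by simpa [hkj] using hk)) hkj
    let σ := Equiv.ofBijective _ hα_bij
    have hσ : ∀ j, σ j = (α j).1 := fun j => rfl
    have hne : ∀ j, α j ≠ β j := by
      intro j h
      have := hab (a₁ := (j, true)) (a₂ := (j, false)) (by simp [← hα, ← hβ, h])
      simp at this
    refine hG (fun i => (α (σ.symm i)).2) (fun i => (β (σ.symm i)).2) ?_ ?_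
    · intro i h
      exact hne (σ.symm i) (Prod.ext (hpart _).symm h)
    · intro ε
      obtain ⟨v, hvG, hv⟩ := hγ (fun j => ε (σ j))
      convert hvG using 1
      funext i
      obtain ⟨j, hj⟩ := hv i
      have h1 : (if ε (σ j) then β j else α j).1 = σ j := by
        split_ifs
        · exact hpart j
        · rfl
      have h2 : i = σ j := by rw [← h1, hj]
      have h3 : v i = (if ε (σ j) then β j else α j).2 := by rw [hj]
      rw [h3, h2]
      simp only [Equiv.symm_apply_apply]
      split_ifs <;> rfl
  · apply Finset.card_image_of_injective
    intro v w hvw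
    funext i
    refine (hmem w (i, v i)).1 ?_
    have hvw' : Finset.univ.image (fun i => f (i, v i)) =
      Finset.univ.image (fun i => f (i, w i)) := hvw
    rw [← hvw']
    exact Finset.mem_image_of_mem (fun i => f (i, v i)) (Finset.mem_univ i)

/-! ### Multilinear maps on grids and boxes -/

section Multilinear

variable {K V W : Type*} [Field K] [AddCommGroup V] [Module K V] [AddCommGroup W] [Module K W]

lemma exists_dual_family {κ : Type*} [DecidableEq κ] {p : κ → V}
    (hp : LinearIndependent K p) :
    ∃ ψ : κ → (V →ₗ[K] K), ∀ a b, ψ a (p b) = if a = b then 1 else 0 := by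
  obtain ⟨g, hg⟩ := LinearMap.exists_leftInverse_of_injective (Finsupp.linearCombination K p)
    (LinearMap.ker_eq_bot.2 hp)
  refine ⟨fun a => Finsupp.lapply a ∘ₗ g, fun a b => ?_⟩
  have := LinearMap.congr_fun hg (Finsupp.single b 1)
  simp only [LinearMap.comp_apply, Finsupp.linearCombination_single, one_smul,
    LinearMap.id_apply] at this
  simp [this, Finsupp.single_apply, eq_comm]

/-- The values of a multilinear map on a grid of linearly independent families can be prescribed
arbitrarily. -/
lemma exists_multilinear_of_grid {d : ℕ} {κ : Type*} [Fintype κ]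
    {p : Fin d → κ → V} (hp : ∀ i, LinearIndependent K (p i)) (c : (Fin d → κ) → W) :
    ∃ T : MultilinearMap K (fun _ : Fin d => V) W, ∀ δ, T (fun i => p i (δ i)) = c δ := by
  classical
  choose ψ hψ using fun i => exists_dual_family (hp i)
  refine ⟨∑ ε : Fin d → κ, ((MultilinearMap.mkPiRing K (Fin d) (c ε)).compLinearMap
    fun i => ψ i (ε i)), fun δ => ?_⟩
  rw [_root_.sum_apply, Finset.sum_eq_single δ]
  · simp [hψ]
  · intro ε _ hε
    obtain ⟨i, hi⟩ := Function.ne_iff.1 hε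
    have : ∏ j, ψ j (ε j) (p j (δ j)) = 0 :=
      Finset.prod_eq_zero (Finset.mem_univ i) (by simp [hψ, hi])
    simp [this]
  · simp

/-- A uniformly random multilinear map takes independent uniformly random values on a grid of
linearly independent families. -/
lemma card_multilinear_of_grid {d : ℕ} {κ : Type*} [Fintype κ] [Fintype W]
    [Fintype (MultilinearMap K (fun _ : Fin d => V) W)]
    {p : Fin d → κ → V} (hp : ∀ i, LinearIndependent K (p i)) (u : W)
    [DecidablePred fun T : MultilinearMap K (fun _ : Fin d => V) W =>
      ∀ δ : Fin d → κ, T (fun i => p i (δ i)) = u] :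
    (Finset.univ.filter fun T : MultilinearMap K (fun _ : Fin d => V) W =>
      ∀ δ : Fin d → κ, T (fun i => p i (δ i)) = u).card *
        Fintype.card W ^ (Fintype.card κ ^ d) =
      Fintype.card (MultilinearMap K (fun _ : Fin d => V) W) := by
  classical
  let ev : MultilinearMap K (fun _ : Fin d => V) W →+ ((Fin d → κ) → W) :=
    { toFun := fun T δ => T (fun i => p i (δ i))
      map_zero' := by ext; simp
      map_add' := by intros; ext; simp }
  have hsurj : ∀ c, c ∈ Set.range ev := by
    intro c
    obtain ⟨T, hT⟩ := exists_multilinear_of_grid hp c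
    exact ⟨T, funext hT⟩
  have h1 := Finset.card_eq_sum_card_fiberwise (f := ev) (s := Finset.univ) (t := Finset.univ)
    (by intro; simp)
  have h2 : ∀ c ∈ (Finset.univ : Finset ((Fin d → κ) → W)),
      (Finset.univ.filter fun T => ev T = c).card =
        (Finset.univ.filter fun T => ev T = fun _ => u).card := fun c _ =>
    AddMonoidHom.card_fiber_eq_of_mem_range ev (hsurj _) (hsurj _)
  rw [Finset.sum_congr rfl h2, Finset.sum_const, Finset.card_univ, Finset.card_univ] at h1
  rw [h1, smul_eq_mul, mul_comm]
  congr 1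
  · simp
  · congr 1
    ext T
    simp only [Finset.mem_filter, Finset.mem_univ, true_and]
    exact funext_iff.symm

/-- A multilinear map that is constant on the vertices of a box is constant on the product of the
affine lines spanned by the sides of the box. -/
lemma multilinear_eq_on_lines {d : ℕ} (T : MultilinearMap K (fun _ : Fin d => V) W) (u : W)
    (v x : Fin d → V) (h : ∀ ε : Fin d → Bool, T (fun i => if ε i then x i else v i) = u)
    (t : Fin d → K) : T (fun i => v i + t i • (x i - v i)) = u := by
  classical
  suffices H : ∀ S : Finset (Fin d), ∀ ε : Fin d → Bool,
      T (fun i => if i ∈ S then v i + t i • (x i - v i) else if ε i then x i else v i) = u by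
    simpa using H Finset.univ fun _ => false
  intro S
  induction S using Finset.induction_on with
  | empty => simpa using h
  | insert k S hk ih =>
    intro ε
    set y : Fin d → V := fun i =>
      if i ∈ S then v i + t i • (x i - v i) else if ε i then x i else v i with hy
    have e1 : (fun i => if i ∈ insert k S then v i + t i • (x i - v i)
        else if ε i then x i else v i) =
        Function.update y k ((1 - t k) • v k + t k • x k) := by
      funext i
      by_cases hi : i = k
      · subst hi
        simp
        module
      · simp [hy, hi]
    have e2 : ∀ β : Bool, T (Function.update y k (if β then x k else v k)) = u := by
      intro β
      rw [← ih (Function.update ε k β)]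
      congr 1
      funext i
      by_cases hi : i = k
      · subst hi
        simp [hk]
      · simp [hy, hi]
    rw [e1, MultilinearMap.map_update_add, MultilinearMap.map_update_smul,
      MultilinearMap.map_update_smul]
    have e3 := e2 true
    have e4 := e2 false
    simp only [Bool.false_eq_true, if_false, if_true] at e3 e4
    rw [e3, e4]
    module

/-- `x` is the vertex opposite to `v` of a box on which `T` is constantly `u` and whose two
vertices in each direction are linearly independent. -/
def IsBadBox {d : ℕ} (T : MultilinearMap K (fun _ : Fin d => V) W) (u : W)
    (v x : Fin d → V) : Prop :=
  (∀ i, LinearIndependent K ![v i, x i]) ∧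
    ∀ ε : Fin d → Bool, T (fun i => if ε i then x i else v i) = u

lemma IsBadBox.rescale {d : ℕ} {T : MultilinearMap K (fun _ : Fin d => V) W} {u : W}
    {v x : Fin d → V} (h : IsBadBox T u v x) (t : Fin d → Kˣ) :
    IsBadBox T u v (fun i => v i + (t i : K) • (x i - v i)) := by
  refine ⟨fun i => ?_, fun ε => ?_⟩
  · have h1 := LinearIndependent.pair_iff.1 (h.1 i)
    rw [LinearIndependent.pair_iff]
    intro a b hab
    obtain ⟨h2, h3⟩ := h1 (a + b - b * t i) (b * t i) (by rw [← hab]; module)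
    have hb : b = 0 := by simpa using h3
    subst hb
    simpa using h2
  · rw [← multilinear_eq_on_lines T u v x h.2 fun i => if ε i then (t i : K) else 0]
    congr 1
    funext i
    split_ifs <;> simp

/-- A non-degenerate box on which `T` takes a constant nonzero value has linearly independent
vertices in each direction: if `x i = a • v i` then `u = a • u`, so `a = 1`. -/
lemma isBadBox_of_ne {d : ℕ} {T : MultilinearMap K (fun _ : Fin d => V) W} {u : W} (hu : u ≠ 0)
    {v x : Fin d → V} (hne : ∀ i, v i ≠ x i)
    (h : ∀ ε : Fin d → Bool, T (fun i => if ε i then x i else v i) = u) :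
    IsBadBox T u v x := by
  classical
  refine ⟨fun i => ?_, h⟩
  have hv : T v = u := by simpa using h fun _ => false
  have hvi : v i ≠ 0 := fun h0 => hu (by rw [← hv]; exact T.map_coord_zero i h0)
  rw [LinearIndependent.pair_iff' hvi]
  intro a ha
  have h1 : T (Function.update v i (a • v i)) = u := by
    rw [← h fun j => decide (j = i), ha]
    congr 1
    funext j
    by_cases hj : j = i
    · subst hj
      simp
    · simp [hj]
  rw [MultilinearMap.map_update_smul, Function.update_eq_self, hv] at h1
  have h2 : (a - 1) • u = 0 := by rw [sub_smul, h1]; simp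
  have h3 : a = 1 := by
    rcases smul_eq_zero.1 h2 with h3 | h3
    · exact sub_eq_zero.1 h3
    · exact absurd h3 hu
  exact hne i (by rw [← ha, h3, one_smul])

open Classical in
/-- Each tuple that has to be deleted carries at least `(q - 1) ^ d` bad boxes, one for each choice
of a second point on the `d` lines through it. -/
lemma card_units_pow_le_card_isBadBox {d : ℕ} [Fintype K] [Fintype V]
    {T : MultilinearMap K (fun _ : Fin d => V) W} {u : W} {v x : Fin d → V}
    (h : IsBadBox T u v x) :
    (Fintype.card K - 1) ^ d ≤ (Finset.univ.filter fun x' => IsBadBox T u v x').card := by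
  rw [← Fintype.card_units]
  have : Fintype.card Kˣ ^ d = (Finset.univ : Finset (Fin d → Kˣ)).card := by simp
  rw [this]
  refine Finset.card_le_card_of_injOn
    (fun t i => v i + (t i : K) • (x i - v i)) ?_ ?_
  · intro t _
    simpa using h.rescale t
  · intro t _ t' _ htt
    funext i
    have h1 := congrFun htt i
    simp only [add_right_inj] at h1
    have hne : x i - v i ≠ 0 := by
      intro h0
      have := (LinearIndependent.pair_iff.1 (h.1 i)) (-1) 1
        (by rw [← h0]; module)
      simp at this
    exact Units.ext (smul_left_injective K hne h1)

/-! ### The first moment argument -/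

open Classical in
/-- The first moment argument, with `q = |K|`, `|V|` and `|W|` kept abstract. -/
lemma exists_multilinear_many_good {d : ℕ} [Fintype K] [Fintype V] [Fintype W] (u : W) :
    ∃ T : MultilinearMap K (fun _ : Fin d => V) W,
      ((Fintype.card V : ℝ) - 1) ^ d / (Fintype.card W : ℝ) -
        (Fintype.card V : ℝ) ^ (2 * d) /
          ((Fintype.card W : ℝ) ^ 2 ^ d * ((Fintype.card K : ℝ) - 1) ^ d) ≤
      ((Finset.univ.filter fun v => T v = u ∧ ¬ ∃ x, IsBadBox T u v x).card : ℝ) := by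
  let M := MultilinearMap K (fun _ : Fin d => V) W
  have : Finite M := Finite.of_injective (fun T : M => (T : (Fin d → V) → W))
    DFunLike.coe_injective
  have : Fintype M := Fintype.ofFinite M
  set q := Fintype.card K with hq
  have hq1 : 1 < q := Fintype.one_lt_card
  have hq1' : (1 : ℝ) < q := by exact_mod_cast hq1
  have hqd : (0 : ℝ) < ((q : ℝ) - 1) ^ d := pow_pos (by linarith) d
  have hWpos : (0 : ℝ) < Fintype.card W := by
    have : Nonempty W := ⟨u⟩
    exact_mod_cast Fintype.card_pos
  -- pointwise in `T`: good ≥ edges - (bad boxes) / (q - 1) ^ d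
  have hpt : ∀ T : M,
      ((Finset.univ.filter fun v : Fin d → V => T v = u ∧ ∀ i, v i ≠ 0).card : ℝ) -
        ((Finset.univ.filter fun vx : (Fin d → V) × (Fin d → V) =>
          IsBadBox T u vx.1 vx.2).card : ℝ) / ((q : ℝ) - 1) ^ d ≤
      ((Finset.univ.filter fun v => T v = u ∧ ¬ ∃ x, IsBadBox T u v x).card : ℝ) := by
    intro T
    set D := Finset.univ.filter fun v : Fin d → V => ∃ x, IsBadBox T u v x with hD
    have h1 : D.card * (q - 1) ^ d ≤ (Finset.univ.filter fun vx : (Fin d → V) × (Fin d → V) =>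
          IsBadBox T u vx.1 vx.2).card := by
      rw [Finset.card_filter (fun vx : (Fin d → V) × (Fin d → V) => IsBadBox T u vx.1 vx.2),
        Fintype.sum_prod_type]
      simp only [← Finset.card_filter]
      calc D.card * (q - 1) ^ d = ∑ v ∈ D, (q - 1) ^ d := by simp
        _ ≤ ∑ v ∈ D, (Finset.univ.filter fun x => IsBadBox T u v x).card := by
            refine Finset.sum_le_sum fun v hv => ?_
            obtain ⟨x, hx⟩ := (Finset.mem_filter.1 hv).2
            exact card_units_pow_le_card_isBadBox hx
        _ ≤ _ := Finset.sum_le_sum_of_subset (Finset.subset_univ _)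
    have h1' : (D.card : ℝ) ≤ ((Finset.univ.filter fun vx : (Fin d → V) × (Fin d → V) =>
          IsBadBox T u vx.1 vx.2).card : ℝ) / ((q : ℝ) - 1) ^ d := by
      rw [le_div_iff₀ hqd]
      have h2 : ((q - 1 : ℕ) : ℝ) = (q : ℝ) - 1 := by
        rw [Nat.cast_sub hq1.le, Nat.cast_one]
      rw [← h2]
      exact_mod_cast h1
    have h3 : (Finset.univ.filter fun v : Fin d → V => T v = u ∧ ∀ i, v i ≠ 0).card ≤
        (Finset.univ.filter fun v => T v = u ∧ ¬ ∃ x, IsBadBox T u v x).card + D.card := by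
      refine le_trans (Finset.card_le_card ?_) (Finset.card_union_le _ _)
      intro v hv
      simp only [Finset.mem_filter, Finset.mem_univ, true_and, Finset.mem_union, hD] at hv ⊢
      tauto
    have h3' : ((Finset.univ.filter fun v : Fin d → V => T v = u ∧ ∀ i, v i ≠ 0).card : ℝ) ≤
        ((Finset.univ.filter fun v => T v = u ∧ ¬ ∃ x, IsBadBox T u v x).card : ℝ) + D.card := by
      exact_mod_cast h3
    linarith
  -- the number of edges summed over all `T`
  have hedge : ∑ T : M,
      ((Finset.univ.filter fun v : Fin d → V => T v = u ∧ ∀ i, v i ≠ 0).card : ℝ) =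
      ((Fintype.card V : ℝ) - 1) ^ d * (Fintype.card M / Fintype.card W) := by
    have h1 : ∀ v : Fin d → V, (∀ i, v i ≠ 0) →
        ((Finset.univ.filter fun T : M => T v = u).card : ℝ) =
          Fintype.card M / Fintype.card W := by
      intro v hv
      rw [eq_div_iff hWpos.ne']
      have h2 := card_multilinear_of_grid (K := K) (W := W) (κ := Unit)
        (p := fun i _ => v i)
        (fun i => LinearIndependent.of_subsingleton (R := K) (v := fun _ : Unit => v i) () (hv i)) u
      simp only [forall_const, Fintype.card_unit, one_pow, pow_one] at h2
      exact_mod_cast h2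
    have h2 : ((Finset.univ.filter fun v : Fin d → V => ∀ i, v i ≠ 0).card : ℝ) =
        ((Fintype.card V : ℝ) - 1) ^ d := by
      have h3 : (Finset.univ.filter fun v : Fin d → V => ∀ i, v i ≠ 0) =
          Fintype.piFinset fun _ => Finset.univ.erase (0 : V) := by
        ext v
        simp
      have hV : 1 ≤ Fintype.card V := Fintype.card_pos
      rw [h3, Fintype.card_piFinset]
      simp [Finset.card_erase_of_mem, Nat.cast_sub hV]
    calc ∑ T : M, ((Finset.univ.filter fun v : Fin d → V => T v = u ∧ ∀ i, v i ≠ 0).card : ℝ)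
        = ∑ T : M, ∑ v ∈ Finset.univ.filter fun v : Fin d → V => ∀ i, v i ≠ 0,
            if T v = u then (1 : ℝ) else 0 := by
          refine Finset.sum_congr rfl fun T _ => ?_
          rw [Finset.sum_boole, Finset.filter_filter]
          simp only [and_comm]
      _ = ∑ v ∈ Finset.univ.filter fun v : Fin d → V => ∀ i, v i ≠ 0,
            ((Finset.univ.filter fun T : M => T v = u).card : ℝ) := by
          rw [Finset.sum_comm]
          simp only [Finset.sum_boole]
      _ = _ := by
          rw [Finset.sum_congr rfl fun v hv => h1 v (Finset.mem_filter.1 hv).2,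
            Finset.sum_const, nsmul_eq_mul, h2]
  -- the number of bad boxes summed over all `T`
  have hbad : ∑ T : M,
      ((Finset.univ.filter fun vx : (Fin d → V) × (Fin d → V) =>
          IsBadBox T u vx.1 vx.2).card : ℝ) ≤
      (Fintype.card V : ℝ) ^ (2 * d) * (Fintype.card M / (Fintype.card W : ℝ) ^ 2 ^ d) := by
    have h1 : ∀ vx : (Fin d → V) × (Fin d → V),
        ((Finset.univ.filter fun T : M => IsBadBox T u vx.1 vx.2).card : ℝ) ≤
          Fintype.card M / (Fintype.card W : ℝ) ^ 2 ^ d := by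
      rintro ⟨v, x⟩
      by_cases hLI : ∀ i, LinearIndependent K ![v i, x i]
      · have hLI' : ∀ i, LinearIndependent K (fun b : Bool => if b then x i else v i) := by
          intro i
          have h3 := (hLI i).comp (fun b : Bool => if b then (1 : Fin 2) else 0)
            (by intro b b'; cases b <;> cases b' <;> simp)
          convert h3 using 1
          funext b
          cases b <;> simp
        have h2 := card_multilinear_of_grid (K := K) (W := W) hLI' u
        rw [Fintype.card_bool] at h2
        rw [le_div_iff₀ (pow_pos hWpos _)]
        apply le_of_eq
        have h4 : (Finset.univ.filter fun T : M => IsBadBox T u v x) =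
          Finset.univ.filter fun T : M =>
            ∀ δ : Fin d → Bool, T (fun i => if δ i then x i else v i) = u := by
          ext T
          simp [IsBadBox, hLI]
        simp only [h4]
        exact_mod_cast h2
      · have h4 : (Finset.univ.filter fun T : M => IsBadBox T u v x) = ∅ := by
          ext T
          simp [IsBadBox, hLI]
        simp only [h4, Finset.card_empty, Nat.cast_zero]
        positivity
    calc ∑ T : M, ((Finset.univ.filter fun vx : (Fin d → V) × (Fin d → V) =>
          IsBadBox T u vx.1 vx.2).card : ℝ)
        = ∑ vx : (Fin d → V) × (Fin d → V),
            ((Finset.univ.filter fun T : M => IsBadBox T u vx.1 vx.2).card : ℝ) := by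
          simp only [← Finset.sum_boole]
          rw [Finset.sum_comm]
      _ ≤ ∑ vx : (Fin d → V) × (Fin d → V),
            (Fintype.card M / (Fintype.card W : ℝ) ^ 2 ^ d) :=
          Finset.sum_le_sum fun vx _ => h1 vx
      _ = _ := by
          rw [Finset.sum_const, nsmul_eq_mul]
          congr 1
          simp
          ring
  have key : ∑ T : M, (((Fintype.card V : ℝ) - 1) ^ d / (Fintype.card W : ℝ) -
        (Fintype.card V : ℝ) ^ (2 * d) /
          ((Fintype.card W : ℝ) ^ 2 ^ d * ((q : ℝ) - 1) ^ d)) ≤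
      ∑ T : M, (((Finset.univ.filter fun v : Fin d → V => T v = u ∧ ∀ i, v i ≠ 0).card : ℝ) -
        ((Finset.univ.filter fun vx : (Fin d → V) × (Fin d → V) =>
          IsBadBox T u vx.1 vx.2).card : ℝ) / ((q : ℝ) - 1) ^ d) := by
    rw [Finset.sum_const, nsmul_eq_mul, Finset.card_univ, Finset.sum_sub_distrib, hedge,
      ← Finset.sum_div]
    have h1 := div_le_div_of_nonneg_right hbad hqd.le
    calc _ = ((Fintype.card V : ℝ) - 1) ^ d * (Fintype.card M / Fintype.card W) -
          (Fintype.card V : ℝ) ^ (2 * d) * (Fintype.card M / (Fintype.card W : ℝ) ^ 2 ^ d) /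
            ((q : ℝ) - 1) ^ d := by
          field_simp
      _ ≤ _ := by linarith
  obtain ⟨T, -, hT⟩ := Finset.exists_le_of_sum_le
    (Finset.univ_nonempty (α := M)) key
  exact ⟨T, hT.trans (hpt T)⟩

end Multilinear

/-! ### Choice of parameters -/

/-- The exponent condition makes the deleted edges a `2 ^ (2 * d) / q` fraction of all edges. -/
lemma main_term_bound {d r s q : ℕ} (hs : 0 < s)
    (hrs : d * (s - 1) < (2 ^ d - 1) * r) (hq : 2 ^ (2 * d + 1) ≤ q) :
    (q : ℝ) ^ (s * d) / ((q : ℝ) ^ r * 2 ^ (d + 1)) ≤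
      ((q : ℝ) ^ s - 1) ^ d / (q : ℝ) ^ r -
        ((q : ℝ) ^ s) ^ (2 * d) / (((q : ℝ) ^ r) ^ 2 ^ d * ((q : ℝ) - 1) ^ d) := by
  have hq2 : 2 ≤ q := le_trans (by rw [pow_succ]; have := Nat.one_le_two_pow (n := 2 * d); omega) hq
  have hq2' : (2 : ℝ) ≤ q := by exact_mod_cast hq2
  have hq0 : (0 : ℝ) < q := by linarith
  have hqs : (2 : ℝ) ≤ (q : ℝ) ^ s := by
    calc (2 : ℝ) ≤ q := hq2'
      _ ≤ (q : ℝ) ^ s := le_self_pow₀ (by linarith) hs.ne'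
  have hA : (q : ℝ) ^ (s * d) / 2 ^ d ≤ ((q : ℝ) ^ s - 1) ^ d := by
    rw [pow_mul, ← div_pow]
    exact pow_le_pow_left₀ (by positivity) (by linarith) d
  have hB : (q : ℝ) ^ d / 2 ^ d ≤ ((q : ℝ) - 1) ^ d := by
    rw [← div_pow]
    exact pow_le_pow_left₀ (by positivity) (by linarith) d
  have hexp : s * (2 * d) + r + 1 ≤ s * d + r * 2 ^ d + d := by
    obtain ⟨s, rfl⟩ : ∃ s', s = s' + 1 := ⟨s - 1, by omega⟩
    obtain ⟨m, hm⟩ : ∃ m, 2 ^ d = m + 1 := ⟨2 ^ d - 1, by have := Nat.one_le_two_pow (n := d); omega⟩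
    rw [hm] at hrs ⊢
    simp only [Nat.add_sub_cancel] at hrs
    nlinarith
  have hpow : (q : ℝ) ^ (s * (2 * d)) * q ^ r * q ≤ q ^ (s * d) * q ^ (r * 2 ^ d) * q ^ d := by
    rw [← pow_add, ← pow_succ, ← pow_add, ← pow_add]
    exact pow_le_pow_right₀ (by linarith) hexp
  have hC : ((q : ℝ) ^ s) ^ (2 * d) / (((q : ℝ) ^ r) ^ 2 ^ d * ((q : ℝ) - 1) ^ d) ≤
      (q : ℝ) ^ (s * d) / ((q : ℝ) ^ r * 2 ^ (d + 1)) := by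
    have hq' : (2 : ℝ) ^ (2 * d + 1) ≤ q := by exact_mod_cast hq
    calc _ ≤ ((q : ℝ) ^ s) ^ (2 * d) / (((q : ℝ) ^ r) ^ 2 ^ d * ((q : ℝ) ^ d / 2 ^ d)) := by
          gcongr
      _ ≤ _ := by
          rw [← pow_mul, ← pow_mul, div_le_div_iff₀ (by positivity) (by positivity), mul_div_assoc',
            mul_div_assoc', le_div_iff₀ (by positivity)]
          calc (q : ℝ) ^ (s * (2 * d)) * (q ^ r * 2 ^ (d + 1)) * 2 ^ d
              = (q : ℝ) ^ (s * (2 * d)) * q ^ r * 2 ^ (2 * d + 1) := by ring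
            _ ≤ (q : ℝ) ^ (s * (2 * d)) * q ^ r * q := by gcongr
            _ ≤ _ := hpow
            _ = _ := by ring
  have hD : 2 * ((q : ℝ) ^ (s * d) / ((q : ℝ) ^ r * 2 ^ (d + 1))) ≤
      ((q : ℝ) ^ s - 1) ^ d / (q : ℝ) ^ r := by
    calc _ = (q : ℝ) ^ (s * d) / 2 ^ d / (q : ℝ) ^ r := by
          rw [pow_succ]; field_simp
      _ ≤ _ := by gcongr
  linarith

/-- The construction over the prime field with `p` elements. -/
lemma exists_hypergraph_of_prime {d r s p n : ℕ} (hr : 0 < r) (hs : 0 < s)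
    (hrs : d * (s - 1) < (2 ^ d - 1) * r) (hp : p.Prime) (hpd : 2 ^ (2 * d + 1) ≤ p)
    (hn : d * p ^ s ≤ n) :
    ∃ E : Finset (Finset (Fin n)), (∀ e ∈ E, e.card = d) ∧ ¬ HasBox d n E ∧
      (p : ℝ) ^ (s * d) / ((p : ℝ) ^ r * 2 ^ (d + 1)) ≤ (E.card : ℝ) := by
  classical
  have : Fact p.Prime := ⟨hp⟩
  let u : Fin r → ZMod p := fun _ => 1
  have hu : u ≠ 0 := fun h => one_ne_zero (congrFun h ⟨0, hr⟩)
  obtain ⟨T, hT⟩ := exists_multilinear_many_good (K := ZMod p) (V := Fin s → ZMod p) (d := d) u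
  obtain ⟨E, hE1, hE2, hE3⟩ := exists_hypergraph_of_tuples (d := d) (n := n)
    (V := Fin s → ZMod p) (by simpa [ZMod.card] using hn)
    (Finset.univ.filter fun v => T v = u ∧ ¬ ∃ x, IsBadBox T u v x) (by
      intro v x hvx h
      simp only [Finset.mem_filter, Finset.mem_univ, true_and] at h
      have h0 := (h fun _ => false).2
      simp only [Bool.false_eq_true, if_false] at h0
      exact h0 ⟨x, isBadBox_of_ne hu hvx fun ε => (h ε).1⟩)
  refine ⟨E, hE1, hE2, ?_⟩
  rw [hE3]
  refine le_trans (main_term_bound hs hrs hpd) (le_trans (le_of_eq ?_) (hT.trans (le_of_eq ?_)))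
  · simp [ZMod.card]
  · congr!

/-- Theorem 2 (main theorem): if `d ≥ 2` and `r, s` are positive integers with
`d(s-1) < (2^d - 1) r`, then `ex_d(n, K_{2,…,2}^{(d)}) = Ω(n^{d - r/s})`. -/
theorem box_problem_lower_bound (d r s : ℕ) (hd : 2 ≤ d) (hr : 0 < r) (hs : 0 < s)
    (hrs : d * (s - 1) < (2 ^ d - 1) * r) :
    ∃ c : ℝ, 0 < c ∧ ∃ N : ℕ, ∀ n : ℕ, N ≤ n →
      ∃ E : Finset (Finset (Fin n)),
        (∀ e ∈ E, e.card = d) ∧ ¬ HasBox d n E ∧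
        c * (n : ℝ) ^ ((d : ℝ) - (r : ℝ) / (s : ℝ)) ≤ (E.card : ℝ) := by
  have hd0 : (0 : ℝ) < d := by exact_mod_cast (by omega : 0 < d)
  have hs0 : (0 : ℝ) < s := by exact_mod_cast hs
  set α : ℝ := (d : ℝ) - (r : ℝ) / (s : ℝ) with hα
  have hdα : (0 : ℝ) < (d : ℝ) ^ α := Real.rpow_pos_of_pos hd0 _
  refine ⟨1 / ((d : ℝ) ^ α * 2 ^ (s * d) * 2 ^ (d + 1)), by positivity,
    d * (2 * 2 ^ (2 * d + 1)) ^ s, fun n hn => ?_⟩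
  -- `y` is the real number with `d * y ^ s = n`; a prime is chosen in `(y / 2, y]`
  set y : ℝ := ((n : ℝ) / d) ^ ((1 : ℝ) / s) with hy
  have hnR : (d : ℝ) * (2 * 2 ^ (2 * d + 1)) ^ s ≤ n := by exact_mod_cast hn
  have hys : y ^ s = (n : ℝ) / d := by
    rw [hy, ← Real.rpow_natCast, ← Real.rpow_mul (by positivity)]
    simp [hs0.ne']
  have hylow : (2 * 2 ^ (2 * d + 1) : ℝ) ≤ y := by
    refine le_of_pow_le_pow_left₀ hs.ne' (by positivity) ?_
    rw [hys, le_div_iff₀ hd0]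
    linarith
  have hy0 : 0 < y := lt_of_lt_of_le (by positivity) hylow
  set m := ⌊y / 2⌋₊ with hm
  have hm1 : 2 ^ (2 * d + 1) ≤ m := by
    apply Nat.le_floor
    push_cast
    linarith
  have hm0 : m ≠ 0 := by
    have := Nat.one_le_two_pow (n := 2 * d + 1)
    omega
  obtain ⟨p, hp, hmp, hpm⟩ := Nat.exists_prime_lt_and_le_two_mul m hm0
  have hp0 : (0 : ℝ) < p := by exact_mod_cast hp.pos
  have hpy : (p : ℝ) ≤ y := by
    have h1 : (m : ℝ) ≤ y / 2 := Nat.floor_le (by positivity)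
    have h2 : (p : ℝ) ≤ 2 * m := by exact_mod_cast hpm
    linarith
  have hyp : y ≤ 2 * p := by
    have h1 : y / 2 < m + 1 := Nat.lt_floor_add_one _
    have h2 : (m : ℝ) + 1 ≤ p := by exact_mod_cast hmp
    linarith
  have hpn : d * p ^ s ≤ n := by
    have h1 : (p : ℝ) ^ s ≤ n / d := by
      rw [← hys]
      exact pow_le_pow_left₀ hp0.le hpy s
    rw [le_div_iff₀ hd0] at h1
    have h2 : (d : ℝ) * (p : ℝ) ^ s ≤ n := by linarith
    exact_mod_cast h2
  obtain ⟨E, hE1, hE2, hE3⟩ :=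
    exists_hypergraph_of_prime hr hs hrs hp (hm1.trans hmp.le) hpn
  refine ⟨E, hE1, hE2, le_trans ?_ hE3⟩
  have hnα : (n : ℝ) ^ α = (d : ℝ) ^ α * (y ^ (s * d) / y ^ r) := by
    have h1 : (n : ℝ) = d * y ^ s := by
      rw [hys]
      field_simp
    rw [h1, Real.mul_rpow hd0.le (by positivity), ← Real.rpow_natCast y s,
      ← Real.rpow_mul hy0.le, ← Real.rpow_natCast y (s * d), ← Real.rpow_natCast y r,
      ← Real.rpow_sub hy0]
    congr 2
    rw [hα]
    push_cast
    field_simp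
  have hyb : y ^ (s * d) / y ^ r ≤ (2 * (p : ℝ)) ^ (s * d) / (p : ℝ) ^ r := by
    gcongr
  rw [hnα]
  calc _ = (y ^ (s * d) / y ^ r) / (2 ^ (s * d) * 2 ^ (d + 1)) := by
        field_simp
    _ ≤ ((2 * (p : ℝ)) ^ (s * d) / (p : ℝ) ^ r) / (2 ^ (s * d) * 2 ^ (d + 1)) := by
        gcongr
    _ = _ := by
        rw [mul_pow]
        field_simp
end

section
/- For any integer d ≥ 2, there exist a constant c > 0 and a threshold N such that for every n ≥ N there is a d-uniform hypergraph on n vertices that contains no copy of K_{2,...,2}^{(d)} and has at least c · n^{d - 1/⌈(2^d-1)/d⌉} edges. In other words, ex_d(n, K_{2,...,2}^{(d)}) = Ω(n^{d - ⌈(2^d-1)/d⌉^{-1}}). -/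
/-- The vertex of the combinatorial box spanned by `v` and `w` selected by `ε`. -/
def boxPoint {d : ℕ} {A : Type*} (v w : Fin d → A) (ε : Fin d → Bool) : Fin d → A :=
  fun j => if ε j then w j else v j

/-! ### Counting multilinear forms -/

theorem card_fiber_mul_card {G H : Type*} [AddGroup G] [AddGroup H] [Fintype G] [Fintype H]
    [DecidableEq H] (f : G →+ H) (hf : Function.Surjective f) (y : H) :
    (Finset.univ.filter (fun g => f g = y)).card * Fintype.card H = Fintype.card G := by
  have h := Finset.card_eq_sum_card_fiberwise (f := f) (s := Finset.univ) (t := Finset.univ)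
    (fun _ _ => Finset.mem_coe.2 (Finset.mem_univ _))
  rw [Finset.sum_congr rfl
    (fun b _ => AddMonoidHom.card_fiber_eq_of_mem_range f (hf b) (hf y))] at h
  simpa [mul_comm] using h.symm

section Multilinear

variable {F V : Type*} [Field F] [AddCommGroup V] [Module F V] {d : ℕ}

/-- The values of a multilinear form on a grid whose sides are linearly independent families can
be prescribed arbitrarily: products of dual functionals realise the indicator functions. -/
theorem eval_grid_surjective {κ : Type*} [Fintype κ] [DecidableEq κ] (u : Fin d → κ → V)
    (hu : ∀ j, LinearIndependent F (u j)) (y : (Fin d → κ) → F) :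
    ∃ T : MultilinearMap F (fun _ : Fin d => V) F, ∀ ε, T (fun j => u j (ε j)) = y ε := by
  have h : ∀ j, ∃ g : V →ₗ[F] (κ →₀ F), ∀ k, g (u j k) = Finsupp.single k 1 := by
    intro j
    obtain ⟨g, hg⟩ := LinearMap.exists_leftInverse_of_injective
      (Finsupp.linearCombination F (u j)) (LinearMap.ker_eq_bot.2 (hu j))
    refine ⟨g, fun k => ?_⟩
    have := LinearMap.congr_fun hg (Finsupp.single k 1)
    simpa using this
  choose g hg using h
  let D : (Fin d → κ) → MultilinearMap F (fun _ : Fin d => V) F := fun ε =>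
    (MultilinearMap.mkPiAlgebra F (Fin d) F).compLinearMap (fun j => Finsupp.lapply (ε j) ∘ₗ g j)
  refine ⟨∑ ε, y ε • D ε, fun ε => ?_⟩
  rw [sum_apply, Finset.sum_eq_single ε]
  · simp [D, hg]
  · intro δ _ hδ
    obtain ⟨j, hj⟩ := Function.ne_iff.1 hδ
    have : D δ (fun j => u j (ε j)) = 0 := by
      simp only [D, MultilinearMap.compLinearMap_apply, MultilinearMap.mkPiAlgebra_apply]
      refine Finset.prod_eq_zero (Finset.mem_univ j) ?_
      simp [hg, hj.symm]
    simp [this]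
  · simp

/-- A uniformly random multilinear form is identically `1` on such a grid with probability
`q ^ (-|κ| ^ d)`. Used with `κ = Unit` for single points and `κ = Bool` for boxes. -/
theorem card_grid {κ : Type*} [Fintype κ] [DecidableEq κ] [Fintype F] [DecidableEq F]
    [Fintype (MultilinearMap F (fun _ : Fin d => V) F)] (u : Fin d → κ → V)
    (hu : ∀ j, LinearIndependent F (u j)) :
    (Finset.univ.filter (fun T : MultilinearMap F (fun _ : Fin d => V) F =>
      ∀ ε : Fin d → κ, T (fun j => u j (ε j)) = 1)).card * Fintype.card F ^ (Fintype.card κ ^ d)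
      = Fintype.card (MultilinearMap F (fun _ : Fin d => V) F) := by
  let f : MultilinearMap F (fun _ : Fin d => V) F →+ ((Fin d → κ) → F) :=
    { toFun := fun T ε => T (fun j => u j (ε j))
      map_zero' := by ext; simp
      map_add' := by intros; ext; simp }
  have h := card_fiber_mul_card f (fun y => (eval_grid_surjective u hu y).imp fun T h => funext h) 1
  rw [← h]
  simp [f, funext_iff]

/-- The sides of a nondegenerate box on which `T = 1` are automatically linearly independent:
a relation `α w j + β v j = 0` gives `α + β = 0` upon applying `T`, hence `α (w j - v j) = 0`. -/
theorem linearIndependent_of_box (T : MultilinearMap F (fun _ : Fin d => V) F)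
    (v w : Fin d → V) (hne : ∀ j, v j ≠ w j) (h : ∀ ε, T (boxPoint v w ε) = 1) (j : Fin d) :
    LinearIndependent F (fun b : Bool => if b then w j else v j) := by
  rw [Fintype.linearIndependent_iff]
  intro c hc
  simp only [Fintype.sum_bool, if_true, Bool.false_eq_true, if_false] at hc
  have hv : T (Function.update v j (v j)) = 1 := by
    rw [← h (fun _ => false)]; congr 1; ext i; simp [boxPoint]
  have hw : T (Function.update v j (w j)) = 1 := by
    rw [← h (fun i => decide (i = j))]; congr 1; ext i
    by_cases hi : i = j
    · subst hi; simp [boxPoint]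
    · simp [boxPoint, hi]
  have h0 : T (Function.update v j (c true • w j + c false • v j)) = 0 := by
    rw [hc]; exact T.map_update_zero _ _
  rw [T.map_update_add, T.map_update_smul, T.map_update_smul, hv, hw] at h0
  simp only [smul_eq_mul, mul_one] at h0
  have h1 : c false = - c true := by linear_combination h0
  rw [h1, neg_smul, ← sub_eq_add_neg, ← smul_sub, smul_eq_zero, sub_eq_zero] at hc
  have h2 : c true = 0 := hc.resolve_right (hne j).symm
  intro b; cases b <;> simp [h1, h2]

/-- If `T = 1` on the vertices of a box then `T = 1` on the product of the lines through its
sides, by expanding `T` and using that the affine weights `c j` and `1 - c j` sum to `1`. -/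
theorem map_line_eq_one (T : MultilinearMap F (fun _ : Fin d => V) F)
    (v w : Fin d → V) (h : ∀ ε, T (boxPoint v w ε) = 1) (c : Fin d → F) :
    T (fun j => v j + c j • (w j - v j)) = 1 := by
  have e : (fun j => v j + c j • (w j - v j))
      = (fun j => c j • w j) + (fun j => (1 - c j) • v j) := by
    ext j; simp only [Pi.add_apply]; module
  rw [e, T.map_add_univ]
  have : ∀ s : Finset (Fin d), T (s.piecewise (fun j => c j • w j) (fun j => (1 - c j) • v j))
      = (∏ i ∈ s, c i) * ∏ i ∈ Finset.univ \ s, (1 - c i) := by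
    intro s
    have e2 : s.piecewise (fun j => c j • w j) (fun j => (1 - c j) • v j)
        = fun j => (s.piecewise c (fun j => 1 - c j) j) •
          boxPoint v w (fun j => decide (j ∈ s)) j := by
      ext j; by_cases hj : j ∈ s <;> simp [boxPoint, hj]
    rw [e2, T.map_smul_univ, h, Finset.prod_piecewise]; simp
  rw [Finset.sum_congr rfl (fun s _ => this s), ← Finset.powerset_univ, ← Finset.prod_add]
  simp

/-- `v` and `w` are opposite vertices of a nondegenerate box on which `T` is identically `1`. -/
def BadAt (T : MultilinearMap F (fun _ : Fin d => V) F) (v w : Fin d → V) : Prop :=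
  (∀ j, v j ≠ w j) ∧ ∀ ε, T (boxPoint v w ε) = 1

theorem BadAt.scale {T : MultilinearMap F (fun _ : Fin d => V) F} {v w : Fin d → V}
    (h : BadAt T v w) (c : Fin d → Fˣ) :
    BadAt T v (fun j => v j + (c j : F) • (w j - v j)) := by
  refine ⟨fun j hj => ?_, fun ε => ?_⟩
  · have : (c j : F) • (w j - v j) = 0 := by simpa using hj.symm
    exact h.1 j (sub_eq_zero.1 (((smul_eq_zero.1 this).resolve_left (c j).ne_zero))).symm
  · rw [← map_line_eq_one T v w h.2 (fun j => if ε j then c j else 0)]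
    congr 1; ext j; by_cases hj : ε j <;> simp [boxPoint, hj]

open Classical in
/-- Rescaling the sides of a box shows that a point lying in one box lies in at least
`(q - 1) ^ d` of them. This gain over counting boxes one by one is what improves the exponent. -/
theorem card_units_pow_le [Fintype F] [Fintype V] {T : MultilinearMap F (fun _ : Fin d => V) F}
    {v w : Fin d → V} (h : BadAt T v w) :
    (Fintype.card F - 1) ^ d ≤ (Finset.univ.filter (fun w => BadAt T v w)).card := by
  have : (Fintype.card F - 1) ^ d = (Finset.univ : Finset (Fin d → Fˣ)).card := by
    simp [Fintype.card_units]
  rw [this]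
  refine Finset.card_le_card_of_injOn (fun c j => v j + (c j : F) • (w j - v j))
    (fun c _ => by simpa using h.scale c) (fun c _ c₂ _ hcc => ?_)
  ext j
  have h1 := congrFun hcc j
  simp only [add_right_inj] at h1
  exact smul_left_injective F (sub_ne_zero.2 (h.1 j).symm) h1

/-- The deletion argument. If `|V| = q ^ s` with `d (s - 1) ≤ 2 ^ d - 2` and `q` is large, some
multilinear form `T` has at least `q ^ (d s - 1) / 2 ^ (d + 1)` points of value `1` left after all
points lying in a box of value `1` are deleted; what is left spans no box. -/
theorem exists_boxFree [Fintype F] [Fintype V] (s : ℕ)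
    (hV : Fintype.card V = Fintype.card F ^ s) (hs : 1 ≤ s)
    (hds : d * s + 2 ≤ 2 ^ d + d) (hq : 2 * 4 ^ d ≤ Fintype.card F) :
    ∃ S : Finset (Fin d → V), (¬ ∃ v w : Fin d → V, (∀ j, v j ≠ w j) ∧ ∀ ε, boxPoint v w ε ∈ S) ∧
      Fintype.card F ^ (d * s) ≤ S.card * (2 ^ (d + 1) * Fintype.card F) := by
  classical
  set q := Fintype.card F with hqdef
  have : Finite (MultilinearMap F (fun _ : Fin d => V) F) := by
    have : Module.Finite F V := Module.Finite.of_finite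
    exact Module.finite_of_finite F
  let _ : Fintype (MultilinearMap F (fun _ : Fin d => V) F) := Fintype.ofFinite _
  set M := MultilinearMap F (fun _ : Fin d => V) F
  set g := Fintype.card M with hg
  have gpos : 0 < g := Fintype.card_pos
  -- `X T` are the edges given by `T`, and `Y T` those of them that lie in a box
  let X : M → Finset (Fin d → V) := fun T => Finset.univ.filter (fun v => T v = 1)
  let Y : M → Finset (Fin d → V) := fun T => Finset.univ.filter (fun v => ∃ w, BadAt T v w)
  have hX : (q ^ s - 1) ^ d * g ≤ (∑ T, (X T).card) * q := by
    have e : ∑ T, (X T).card = ∑ v : Fin d → V, (Finset.univ.filter (fun T : M => T v = 1)).card :=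
      Finset.sum_card_bipartiteAbove_eq_sum_card_bipartiteBelow (fun (T : M) v => T v = 1)
    rw [e, Finset.sum_mul]
    have hc : (q ^ s - 1) ^ d
        = (Finset.univ.filter (fun v : Fin d → V => ∀ j, v j ≠ 0)).card := by
      have : (Finset.univ.filter (fun v : Fin d → V => ∀ j, v j ≠ 0))
          = Fintype.piFinset (fun _ => Finset.univ.erase (0 : V)) := by
        ext v; simp
      rw [this, Fintype.card_piFinset]
      simp [hV]
    rw [hc, ← smul_eq_mul]
    refine (Finset.card_nsmul_le_sum _
      (fun v => (Finset.univ.filter (fun T : M => T v = 1)).card * q) g ?_).trans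
      (Finset.sum_le_sum_of_subset (Finset.subset_univ _))
    intro v hv
    have hv : ∀ j, v j ≠ 0 := by simpa using hv
    have := card_grid (F := F) (κ := Unit) (fun j _ => v j)
      (fun j => LinearIndependent.of_subsingleton () (hv j))
    simp only [Fintype.card_unit, one_pow, pow_one] at this
    rw [hg, ← this]
    simp [q, M]
  have hZ : (∑ T, (Y T).card) * (q - 1) ^ d * q ^ 2 ^ d ≤ (q ^ s) ^ (2 * d) * g := by
    have h1 : (∑ T, (Y T).card) * (q - 1) ^ d
        ≤ ∑ T : M, ∑ v, (Finset.univ.filter (fun w => BadAt T v w)).card := by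
      rw [Finset.sum_mul]
      refine Finset.sum_le_sum fun T _ => ?_
      rw [← smul_eq_mul]
      refine (Finset.card_nsmul_le_sum _
        (fun v => (Finset.univ.filter (fun w => BadAt T v w)).card) _ ?_).trans
        (Finset.sum_le_sum_of_subset (Finset.subset_univ _))
      intro v hv
      obtain ⟨w, hw⟩ := (Finset.mem_filter.1 hv).2
      exact card_units_pow_le hw
    have h2 : ∑ T : M, ∑ v, (Finset.univ.filter (fun w => BadAt T v w)).card
        = ∑ v : Fin d → V, ∑ w : Fin d → V, (Finset.univ.filter (fun T : M => BadAt T v w)).card := by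
      rw [Finset.sum_comm]
      exact Finset.sum_congr rfl fun v _ =>
        Finset.sum_card_bipartiteAbove_eq_sum_card_bipartiteBelow (fun (T : M) w => BadAt T v w)
    have h3 : ∀ v w : Fin d → V,
        (Finset.univ.filter (fun T : M => BadAt T v w)).card * q ^ 2 ^ d ≤ g := by
      intro v w
      by_cases hex : ∃ T : M, BadAt T v w
      · obtain ⟨T, hT⟩ := hex
        have := card_grid (F := F) (κ := Bool) (fun j b => if b then w j else v j)
          (linearIndependent_of_box T v w hT.1 hT.2)
        rw [hg, ← this, Fintype.card_bool]
        exact Nat.mul_le_mul_right _ (Finset.card_le_card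
          (Finset.monotone_filter_right _ fun T _ h => h.2))
      · push Not at hex
        simp [hex]
    calc _ ≤ _ := Nat.mul_le_mul_right _ (h1.trans h2.le)
      _ ≤ ∑ v : Fin d → V, ∑ w : Fin d → V, g := by
        simp_rw [Finset.sum_mul]
        exact Finset.sum_le_sum fun v _ => Finset.sum_le_sum fun w _ => h3 v w
      _ = _ := by
        simp [hV]; ring
  have hq2 : 2 ≤ q := by
    have : 1 ≤ 4 ^ d := Nat.one_le_pow _ _ (by norm_num)
    omega
  set x := ∑ T, (X T).card
  set y := ∑ T, (Y T).card
  -- on average over `T`: `|X T| ≥ q ^ (d s - 1) / 2 ^ d` and `|Y T| ≤ 2 ^ d q ^ (d s - 2)`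
  have hx : q ^ (d * s) * g ≤ 2 ^ d * (x * q) := by
    have : q ^ s ≤ 2 * (q ^ s - 1) := by
      have : 2 ≤ q ^ s := hq2.trans (Nat.le_self_pow (by omega) q)
      omega
    calc q ^ (d * s) * g = (q ^ s) ^ d * g := by rw [← pow_mul, mul_comm d s]
      _ ≤ (2 * (q ^ s - 1)) ^ d * g := by gcongr
      _ = 2 ^ d * ((q ^ s - 1) ^ d * g) := by rw [mul_pow]; ring
      _ ≤ _ := by gcongr
  have hy : y * q ^ 2 ≤ 2 ^ d * (q ^ (d * s) * g) := by
    have hqq : q ≤ 2 * (q - 1) := by omega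
    have : (y * q ^ 2) * q ^ (d * s) ≤ (2 ^ d * (q ^ (d * s) * g)) * q ^ (d * s) := by
      calc (y * q ^ 2) * q ^ (d * s) = y * q ^ (d * s + 2) := by rw [pow_add]; ring
        _ ≤ y * q ^ (2 ^ d + d) := by gcongr; omega
        _ = y * q ^ d * q ^ 2 ^ d := by rw [pow_add]; ring
        _ ≤ y * (2 * (q - 1)) ^ d * q ^ 2 ^ d := by gcongr
        _ = 2 ^ d * (y * (q - 1) ^ d * q ^ 2 ^ d) := by rw [mul_pow]; ring
        _ ≤ 2 ^ d * ((q ^ s) ^ (2 * d) * g) := by gcongr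
        _ = _ := by rw [← pow_mul, show s * (2 * d) = d * s + d * s by ring, pow_add]; ring
    exact Nat.le_of_mul_le_mul_right this (by positivity)
  have hfin : ∑ _T : M, (q ^ (d * s) + 2 ^ (d + 1) * q * (Y _T).card)
      ≤ ∑ T : M, 2 ^ (d + 1) * q * (X T).card := by
    rw [Finset.sum_add_distrib, ← Finset.mul_sum, ← Finset.mul_sum]
    simp only [Finset.sum_const, Finset.card_univ, smul_eq_mul]
    change g * q ^ (d * s) + 2 ^ (d + 1) * q * y ≤ 2 ^ (d + 1) * q * x
    have h5 : 2 ^ (d + 1) * q * y ≤ g * q ^ (d * s) := by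
      have : (2 ^ (d + 1) * q * y) * q ≤ (g * q ^ (d * s)) * q := by
        calc (2 ^ (d + 1) * q * y) * q = 2 ^ (d + 1) * (y * q ^ 2) := by ring
          _ ≤ 2 ^ (d + 1) * (2 ^ d * (q ^ (d * s) * g)) := by gcongr
          _ = (2 * 4 ^ d) * (q ^ (d * s) * g) := by
            rw [show (4 : ℕ) = 2 * 2 by norm_num, mul_pow]; ring
          _ ≤ q * (q ^ (d * s) * g) := by gcongr
          _ = _ := by ring
      exact Nat.le_of_mul_le_mul_right this (by omega)
    calc g * q ^ (d * s) + 2 ^ (d + 1) * q * y ≤ 2 * (q ^ (d * s) * g) := by linarith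
      _ ≤ 2 * (2 ^ d * (x * q)) := by gcongr
      _ = _ := by ring
  obtain ⟨T, -, hT⟩ := Finset.exists_le_of_sum_le Finset.univ_nonempty hfin
  refine ⟨X T \ Y T, ?_, ?_⟩
  · rintro ⟨v, w, hne, h⟩
    have h1 : ∀ ε, T (boxPoint v w ε) = 1 := fun ε =>
      (Finset.mem_filter.1 (Finset.mem_sdiff.1 (h ε)).1).2
    have h2 : v ∈ X T \ Y T := h (fun _ => false)
    exact (Finset.mem_sdiff.1 h2).2 (Finset.mem_filter.2 ⟨Finset.mem_univ _, w, hne, h1⟩)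
  · have := Finset.le_card_sdiff (Y T) (X T)
    have h6 : (X T).card ≤ (X T \ Y T).card + (Y T).card := by omega
    have h7 : 2 ^ (d + 1) * q * (X T).card ≤ 2 ^ (d + 1) * q * ((X T \ Y T).card + (Y T).card) :=
      Nat.mul_le_mul_left _ h6
    linarith

end Multilinear

/-! ### From tuples to hypergraphs -/

/-- A set of `d`-tuples spanning no box gives a box-free `d`-partite hypergraph, with parts
the images of `{j} × A` under `φ`. The point is that in a copy of `K_{2,…,2}` in a `d`-partite
hypergraph, `a j` and `b j` must lie in the same part. -/
theorem exists_hypergraph {d n : ℕ} {A : Type*} (S : Finset (Fin d → A))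
    (hS : ¬ ∃ v w : Fin d → A, (∀ j, v j ≠ w j) ∧ ∀ ε, boxPoint v w ε ∈ S)
    (φ : Fin d × A ↪ Fin n) :
    ∃ E : Finset (Finset (Fin n)), (∀ e ∈ E, e.card = d) ∧ ¬ HasBox d n E ∧ E.card = S.card := by
  classical
  let edge : (Fin d → A) → Finset (Fin n) := fun v => Finset.univ.image fun j => φ (j, v j)
  have mem_edge : ∀ v j x, φ (j, x) ∈ edge v ↔ v j = x := by
    intro v j x
    simp only [edge, Finset.mem_image, Finset.mem_univ, true_and, φ.injective.eq_iff, Prod.mk.injEq]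
    constructor
    · rintro ⟨i, rfl, h⟩; exact h
    · intro h; exact ⟨j, rfl, h⟩
  have edge_inj : Function.Injective edge := by
    intro v w h
    ext j
    exact ((mem_edge w j (v j)).1 (h ▸ (mem_edge v j (v j)).2 rfl)).symm
  refine ⟨S.image edge, ?_, ?_, Finset.card_image_of_injective _ edge_inj⟩
  · intro e he
    obtain ⟨v, -, rfl⟩ := Finset.mem_image.1 he
    rw [Finset.card_image_of_injective _ (fun i j h => (Prod.mk.inj (φ.injective h)).1)]
    simp
  rintro ⟨a, b, hinj, hE⟩
  have hc_inj : ∀ ε : Fin d → Bool, Function.Injective (fun j => if ε j then b j else a j) := by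
    intro ε i j hij
    exact congrArg Prod.fst (@hinj (i, ε i) (j, ε j) hij)
  -- every choice of one vertex per pair lists the vertices of a transversal, up to a permutation
  have key : ∀ ε : Fin d → Bool, ∃ v ∈ S, ∃ σ : Fin d → Fin d, Function.Bijective σ ∧
      ∀ j, (if ε j then b j else a j) = φ (σ j, v (σ j)) := by
    intro ε
    obtain ⟨v, hv, hve⟩ := Finset.mem_image.1 (hE ε)
    have h1 : ∀ j, ∃ i, (if ε j then b j else a j) = φ (i, v i) := by
      intro j
      have : (if ε j then b j else a j) ∈ edge v := by
        rw [hve]; exact Finset.mem_image_of_mem _ (Finset.mem_univ j)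
      obtain ⟨i, -, hi⟩ := Finset.mem_image.1 this
      exact ⟨i, hi.symm⟩
    choose σ hσ using h1
    refine ⟨v, hv, σ, Finite.injective_iff_bijective.1 ?_, hσ⟩
    intro i j hij
    apply hc_inj ε
    simp only
    rw [hσ i, hσ j, hij]
  obtain ⟨v, -, σ, hσ, hav⟩ := key (fun _ => false)
  simp only [Bool.false_eq_true, if_false] at hav
  -- replacing the single vertex `a j` by `b j` leaves only the part of `a j` available
  have hb : ∀ j, ∃ x, b j = φ (σ j, x) := by
    intro j
    obtain ⟨w, -, τ, hτ, hw⟩ := key (fun i => decide (i = j))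
    have hne : ∀ i, i ≠ j → τ i = σ i := by
      intro i hi
      have := hw i
      simp only [hi, decide_false, Bool.false_eq_true, if_false, hav] at this
      exact (Prod.mk.inj (φ.injective this)).1.symm
    have hj : τ j = σ j := by
      obtain ⟨i, hi⟩ := hτ.2 (σ j)
      by_cases hij : i = j
      · rw [← hij, hi, hij]
      · exact absurd (hσ.1 ((hne i hij).symm.trans hi)) hij
    exact ⟨w (τ j), by rw [← hj]; simpa using hw j⟩
  choose x hx using hb
  let e := Equiv.ofBijective σ hσ
  have hxs : ∀ i, b (e.symm i) = φ (i, x (e.symm i)) := fun i => by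
    rw [hx]; congr 2; exact e.apply_symm_apply i
  have hvs : ∀ i, a (e.symm i) = φ (i, v i) := fun i => by
    rw [hav]; have : σ (e.symm i) = i := e.apply_symm_apply i
    rw [this]
  refine hS ⟨v, fun i => x (e.symm i), fun i hi => ?_, fun ε => ?_⟩
  · have h1 : a (e.symm i) = b (e.symm i) := by rw [hxs, hvs, hi]
    have := @hinj (e.symm i, false) (e.symm i, true) (by simpa using h1)
    simp at this
  · obtain ⟨u, hu, hue⟩ := Finset.mem_image.1 (hE (fun j => ε (e j)))
    convert hu
    ext i
    refine ((mem_edge u i _).1 ?_).symm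
    rw [hue]
    refine Finset.mem_image.2 ⟨e.symm i, Finset.mem_univ _, ?_⟩
    simp only [e.apply_symm_apply, boxPoint, hxs, hvs]
    split_ifs <;> rfl

/-! ### Choice of the field size -/

/-- Bertrand's postulate supplies a prime `q` with `q ^ s` of order `n` and `d q ^ s ≤ n`. -/
theorem exists_prime_scale (d s Q : ℕ) (hd : 1 ≤ d) (hs : 1 ≤ s) (hQ : 1 ≤ Q) (n : ℕ)
    (hn : d * (2 * Q) ^ s ≤ n) :
    ∃ q, q.Prime ∧ Q ≤ q ∧ d * q ^ s ≤ n ∧ n ≤ (2 * d * q) ^ s := by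
  have hbound : ∀ m, d * (2 * m) ^ s ≤ n → m ≤ n := by
    intro m hm
    calc m ≤ 2 * m := by omega
      _ ≤ (2 * m) ^ s := Nat.le_self_pow (by omega) _
      _ ≤ d * (2 * m) ^ s := Nat.le_mul_of_pos_left _ hd
      _ ≤ n := hm
  set m := Nat.findGreatest (fun m => d * (2 * m) ^ s ≤ n) n with hmdef
  have hQm : Q ≤ m := Nat.le_findGreatest (hbound Q hn) hn
  have hm : d * (2 * m) ^ s ≤ n :=
    Nat.findGreatest_spec (P := fun m => d * (2 * m) ^ s ≤ n) (hbound Q hn) hn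
  have hm1 : n < d * (2 * (m + 1)) ^ s := by
    by_contra! h
    exact Nat.findGreatest_is_greatest (P := fun m => d * (2 * m) ^ s ≤ n)
      (Nat.lt_succ_self m) (hbound _ h) h
  obtain ⟨q, hq, h1, h2⟩ := Nat.exists_prime_lt_and_le_two_mul m (by omega)
  refine ⟨q, hq, by omega, le_trans (by gcongr) hm, ?_⟩
  calc n ≤ d * (2 * (m + 1)) ^ s := hm1.le
    _ ≤ d ^ s * (2 * q) ^ s := by
      gcongr
      · exact Nat.le_self_pow (by omega) _
      · omega
    _ = _ := by rw [← mul_pow]; congr 1; ring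

/-- Corollary 3: for any `d ≥ 2`,
`ex_d(n, K_{2,…,2}^{(d)}) = Ω(n^{d - 1/⌈(2^d - 1)/d⌉})`. -/
theorem box_problem_lower_bound_ceil (d : ℕ) (hd : 2 ≤ d) :
    ∃ c : ℝ, 0 < c ∧ ∃ N : ℕ, ∀ n : ℕ, N ≤ n →
      ∃ E : Finset (Finset (Fin n)),
        (∀ e ∈ E, e.card = d) ∧ ¬ HasBox d n E ∧
        c * (n : ℝ) ^ ((d : ℝ) - 1 / (⌈((2 ^ d - 1 : ℚ)) / (d : ℚ)⌉₊ : ℝ)) ≤ (E.card : ℝ) := by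
  set s := ⌈((2 ^ d - 1 : ℚ)) / (d : ℚ)⌉₊ with hsdef
  have hdq : (0 : ℚ) < d := by exact_mod_cast (by omega : 0 < d)
  have hpow : (1 : ℚ) < 2 ^ d := one_lt_pow₀ (by norm_num) (by omega)
  have hpos : (0 : ℚ) < (2 ^ d - 1) / d := div_pos (by linarith) hdq
  have hs : 1 ≤ s := Nat.ceil_pos.2 hpos
  -- `s - 1 < (2 ^ d - 1) / d`, cleared of denominators
  have hds : d * s + 2 ≤ 2 ^ d + d := by
    have h1 : (s : ℚ) < (2 ^ d - 1) / d + 1 := Nat.ceil_lt_add_one hpos.le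
    have h2 : (d : ℚ) * s < 2 ^ d - 1 + d := by
      have := mul_lt_mul_of_pos_left h1 hdq
      rwa [mul_add, mul_div_cancel₀ _ hdq.ne', mul_one] at this
    have h3 : d * s + 1 < 2 ^ d + d := by
      have : ((d * s + 1 : ℕ) : ℚ) < ((2 ^ d + d : ℕ) : ℚ) := by push_cast; linarith
      exact_mod_cast this
    omega
  have hds1 : 1 ≤ d * s := Nat.mul_pos (by omega) hs
  clear_value s
  refine ⟨1 / ((2 * d : ℝ) ^ (d * s - 1) * 2 ^ (d + 1)), by positivity,
    d * (2 * (2 * 4 ^ d)) ^ s, fun n hn => ?_⟩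
  obtain ⟨q, hq, hQq, hqn, hnq⟩ := exists_prime_scale d s (2 * 4 ^ d) (by omega) hs
    (Nat.mul_pos (by norm_num) (by positivity)) n hn
  have : Fact q.Prime := ⟨hq⟩
  obtain ⟨S, hS, hcard⟩ := exists_boxFree (F := ZMod q) (V := Fin s → ZMod q) (d := d) s
    (by simp) hs hds (by simpa [ZMod.card] using hQq)
  rw [ZMod.card] at hcard
  obtain ⟨φ⟩ : Nonempty (Fin d × (Fin s → ZMod q) ↪ Fin n) :=
    Function.Embedding.nonempty_of_card_le (by simpa [ZMod.card] using hqn)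
  obtain ⟨E, hE1, hE2, hE3⟩ := exists_hypergraph S hS φ
  refine ⟨E, hE1, hE2, ?_⟩
  rw [hE3]
  have hqpos : (0 : ℝ) < q := by exact_mod_cast hq.pos
  have hsR : (s : ℝ) ≠ 0 := by exact_mod_cast (by omega : s ≠ 0)
  have hexp : (s : ℝ) * ((d : ℝ) - 1 / s) = ((d * s - 1 : ℕ) : ℝ) := by
    rw [Nat.cast_sub hds1]; push_cast; field_simp
  have hexp0 : 0 ≤ (d : ℝ) - 1 / s := by
    have h0 : 0 ≤ (s : ℝ) * ((d : ℝ) - 1 / s) := hexp ▸ Nat.cast_nonneg _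
    exact nonneg_of_mul_nonneg_right h0 (by positivity)
  have hnR : (n : ℝ) ^ ((d : ℝ) - 1 / s) ≤ (2 * d * q : ℝ) ^ (d * s - 1) := by
    have h1 : (n : ℝ) ≤ (2 * d * q : ℝ) ^ s := by exact_mod_cast hnq
    calc (n : ℝ) ^ ((d : ℝ) - 1 / s) ≤ ((2 * d * q : ℝ) ^ s) ^ ((d : ℝ) - 1 / s) :=
          Real.rpow_le_rpow (Nat.cast_nonneg _) h1 hexp0
      _ = _ := by
        rw [← Real.rpow_natCast, ← Real.rpow_mul (by positivity), hexp, Real.rpow_natCast]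
  have hcardR : (q : ℝ) ^ (d * s - 1) ≤ S.card * 2 ^ (d + 1) := by
    have h1 : (q : ℝ) ^ (d * s) ≤ S.card * (2 ^ (d + 1) * q) := by exact_mod_cast hcard
    rw [← Nat.sub_add_cancel hds1, pow_succ, ← mul_assoc] at h1
    exact le_of_mul_le_mul_right h1 hqpos
  rw [one_div_mul_eq_div, div_le_iff₀ (by positivity)]
  calc _ ≤ _ := hnR
    _ = (2 * d : ℝ) ^ (d * s - 1) * (q : ℝ) ^ (d * s - 1) := mul_pow _ _ _
    _ ≤ (2 * d : ℝ) ^ (d * s - 1) * (S.card * 2 ^ (d + 1)) := by gcongr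
    _ = _ := by ring
end

section
/- For any integer d ≥ 2, there exists a positive constant C depending only on d and an infinite set S of positive integers such that for every n ∈ S, the number of d-uniform hypergraphs with vertex set {1,...,n} containing no copy of K_{2,...,2}^{(d)} is at most 2^{C · ex_d(n, K_{2,...,2}^{(d)})}. -/
/-- `ex_d(n, K_{2,…,2}^{(d)})`: the maximum number of edges in a `d`-uniform hypergraph
on `n` vertices containing no copy of `K_{2,…,2}^{(d)}`. -/
noncomputable def exBox (d n : ℕ) : ℕ :=
  sSup {m : ℕ | ∃ E : Finset (Finset (Fin n)),
    (∀ e ∈ E, e.card = d) ∧ ¬ HasBox d n E ∧ E.card = m}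

namespace BoxCount

open Finset

/-! ### Weighted containers -/

section Containers

/-- Degree of the set `T` in the weighted hypergraph `w`: the total weight of the edges containing
`T`. A weighted hypergraph is a function on all finite sets, its edges being the support; `deg w ∅`
is the total weight. -/
noncomputable def deg {α : Type} [Fintype α] [DecidableEq α] (w : Finset α → ℝ)
    (T : Finset α) : ℝ := ∑ E with T ⊆ E, w E

/-- The weighted link of the vertex `u`: a set `F` not containing `u` gets the weight of
`F ∪ {u}`. -/
noncomputable def link {α : Type} [DecidableEq α] (w : Finset α → ℝ) (u : α) :
    Finset α → ℝ := fun F => if u ∈ F then 0 else w (insert u F)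

variable {α : Type} [Fintype α] [DecidableEq α]

lemma deg_nonneg {w : Finset α → ℝ} (hw : ∀ E, 0 ≤ w E) (T : Finset α) : 0 ≤ deg w T :=
  sum_nonneg fun E _ => hw E

lemma deg_mono {w w' : Finset α → ℝ} (h : ∀ E, w E ≤ w' E) (T : Finset α) :
    deg w T ≤ deg w' T := sum_le_sum fun E _ => h E

lemma deg_add (w w' : Finset α → ℝ) (T : Finset α) :
    deg (fun E => w E + w' E) T = deg w T + deg w' T := sum_add_distrib

lemma deg_div (w : Finset α → ℝ) (p : ℝ) (T : Finset α) :
    deg (fun E => w E / p) T = deg w T / p := (sum_div _ _ _).symm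

lemma deg_empty (w : Finset α → ℝ) : deg w ∅ = ∑ E, w E := by
  simp [deg]

lemma deg_eq_zero {w : Finset α → ℝ} {T : Finset α} (h : ∀ E, T ⊆ E → w E = 0) :
    deg w T = 0 := sum_eq_zero fun E hE => h E (by simpa using hE)

lemma deg_link_of_mem (w : Finset α → ℝ) {u : α} {T : Finset α} (h : u ∈ T) :
    deg (link w u) T = 0 := deg_eq_zero fun E hE => by simp [link, hE h]

lemma deg_link (w : Finset α → ℝ) {u : α} {T : Finset α} (h : u ∉ T) :
    deg (link w u) T = deg w (insert u T) := by
  unfold deg link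
  rw [sum_ite, sum_const_zero, zero_add, filter_filter]
  refine sum_nbij' (fun F => insert u F) (fun E => E.erase u) ?_ ?_ ?_ ?_ ?_
  · intro F hF
    simp only [mem_filter, mem_univ, true_and] at hF ⊢
    exact insert_subset_insert _ hF.1
  · intro E hE
    simp only [mem_filter, mem_univ, true_and] at hE ⊢
    refine ⟨?_, by simp⟩
    intro x hx
    refine mem_erase.2 ⟨?_, hE (mem_insert_of_mem hx)⟩
    rintro rfl; exact h hx
  · intro F hF
    simp only [mem_filter, mem_univ, true_and] at hF
    exact erase_insert hF.2
  · intro E hE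
    simp only [mem_filter, mem_univ, true_and] at hE
    exact insert_erase (hE (mem_insert_self _ _))
  · intro F _; rfl

/-- Summing all degrees counts each edge `E` with multiplicity `2 ^ |E|`. -/
lemma sum_deg (w : Finset α → ℝ) (k : ℕ) (hk : ∀ E, w E ≠ 0 → E.card = k) :
    ∑ T, deg w T = 2 ^ k * deg w ∅ := by
  rw [deg_empty, mul_sum]
  unfold deg
  simp_rw [sum_filter]
  rw [sum_comm]
  refine sum_congr rfl fun E _ => ?_
  rw [← sum_filter, sum_const, nsmul_eq_mul]
  by_cases h : w E = 0
  · simp [h]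
  · rw [show (univ.filter (· ⊆ E)) = E.powerset by ext; simp, card_powerset, hk E h]
    norm_num

/-- The part of `w` still available after the vertices of `Y` have been selected and their links
added to `H`: the edges disjoint from `Y` that contain no saturated set, i.e. no nonempty `T` with
`deg H T > D p ^ |T|`. -/
noncomputable def surv (w H : Finset α → ℝ) (Y : Finset α) (D p : ℝ) : Finset α → ℝ :=
  open Classical in fun E =>
  if Disjoint E Y ∧ ∀ T ⊆ E, T.Nonempty → deg H T ≤ D * p ^ T.card then w E else 0

lemma surv_nonneg {w H : Finset α → ℝ} {Y : Finset α} {D p : ℝ} (hw : ∀ E, 0 ≤ w E) (E) :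
    0 ≤ surv w H Y D p E := by
  unfold surv; split_ifs; exacts [hw E, le_rfl]

lemma surv_le {w H : Finset α → ℝ} {Y : Finset α} {D p : ℝ} (hw : ∀ E, 0 ≤ w E) (E) :
    surv w H Y D p E ≤ w E := by
  unfold surv; split_ifs; exacts [le_rfl, hw E]

lemma surv_eq_zero_of_mem {w H : Finset α → ℝ} {Y : Finset α} {D p : ℝ} {E : Finset α} {v : α}
    (hv : v ∈ Y) (hE : v ∈ E) : surv w H Y D p E = 0 := by
  unfold surv; rw [if_neg]; rintro ⟨h, -⟩; exact disjoint_left.1 h hE hv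

lemma surv_eq_zero_of_sat {w H : Finset α → ℝ} {Y : Finset α} {D p : ℝ} {E T : Finset α}
    (hT : T ⊆ E) (hne : T.Nonempty) (h : D * p ^ T.card < deg H T) :
    surv w H Y D p E = 0 := by
  unfold surv; rw [if_neg]; rintro ⟨-, h'⟩; exact absurd (h' T hT hne) (not_le.2 h)

/-- Few edges are lost in `surv`: those meeting `Y` are paid by vertex degrees, and those containing
a saturated set by the degrees of `H`, whose sum is `2 ^ k` times the weight of `H`. -/
lemma surv_lower {w H : Finset α → ℝ} {Y : Finset α} {D p : ℝ} {k : ℕ} (hp : 0 < p)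
    (hw : ∀ E, 0 ≤ w E) (hH : ∀ E, 0 ≤ H E) (hk : ∀ E, H E ≠ 0 → E.card = k)
    (hdeg : ∀ T : Finset α, T.Nonempty → p * deg w T ≤ D * p ^ T.card) :
    deg w ∅ - D * Y.card - 2 ^ k * deg H ∅ / p ≤ deg (surv w H Y D p) ∅ := by
  classical
  set S : Finset (Finset α) := univ.filter fun T => T.Nonempty ∧ D * p ^ T.card < deg H T with hS
  have h1 : deg w ∅ ≤ deg (surv w H Y D p) ∅ + ∑ v ∈ Y, deg w {v} + ∑ T ∈ S, deg w T := by
    have e1 : ∑ v ∈ Y, deg w {v} = ∑ E, ∑ v ∈ Y, if ({v} : Finset α) ⊆ E then w E else 0 := by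
      simp_rw [deg, sum_filter]; exact sum_comm
    have e2 : ∑ T ∈ S, deg w T = ∑ E, ∑ T ∈ S, if T ⊆ E then w E else 0 := by
      simp_rw [deg, sum_filter]; exact sum_comm
    rw [deg_empty, deg_empty, e1, e2, ← sum_add_distrib, ← sum_add_distrib]
    refine sum_le_sum fun E _ => ?_
    have n1 : 0 ≤ ∑ v ∈ Y, if ({v} : Finset α) ⊆ E then w E else 0 :=
      sum_nonneg fun v _ => by split_ifs; exacts [hw E, le_rfl]
    have n2 : 0 ≤ ∑ T ∈ S, if T ⊆ E then w E else 0 :=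
      sum_nonneg fun v _ => by split_ifs; exacts [hw E, le_rfl]
    by_cases hd : Disjoint E Y
    · by_cases hs : ∀ T ⊆ E, T.Nonempty → deg H T ≤ D * p ^ T.card
      · have : surv w H Y D p E = w E := by unfold surv; rw [if_pos ⟨hd, hs⟩]
        linarith
      · push Not at hs
        obtain ⟨T, hT, hne, hlt⟩ := hs
        have : w E ≤ ∑ T ∈ S, if T ⊆ E then w E else 0 := by
          have hmem : T ∈ S := by simp [hS, hne, hlt]
          calc w E = if T ⊆ E then w E else 0 := by rw [if_pos hT]
            _ ≤ _ := single_le_sum (f := fun T => if T ⊆ E then w E else 0)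
              (fun v _ => by split_ifs; exacts [hw E, le_rfl]) hmem
        have := surv_nonneg (H := H) (Y := Y) (D := D) (p := p) hw E
        linarith
    · obtain ⟨v, hvE, hvY⟩ := not_disjoint_iff.1 hd
      have : w E ≤ ∑ v ∈ Y, if ({v} : Finset α) ⊆ E then w E else 0 := by
        calc w E = if ({v} : Finset α) ⊆ E then w E else 0 := by rw [if_pos (by simpa using hvE)]
          _ ≤ _ := single_le_sum (f := fun v => if ({v} : Finset α) ⊆ E then w E else 0)
            (fun v _ => by split_ifs; exacts [hw E, le_rfl]) hvY
      have := surv_nonneg (H := H) (Y := Y) (D := D) (p := p) hw E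
      linarith
  have h2 : ∑ v ∈ Y, deg w {v} ≤ D * Y.card := by
    calc ∑ v ∈ Y, deg w {v} ≤ ∑ v ∈ Y, D := sum_le_sum fun v _ => by
          have := hdeg {v} (by simp)
          simp only [card_singleton, pow_one] at this
          rw [mul_comm D] at this
          exact le_of_mul_le_mul_left this hp
      _ = _ := by simp [mul_comm]
  have h3 : ∑ T ∈ S, deg w T ≤ 2 ^ k * deg H ∅ / p := by
    rw [le_div_iff₀ hp, mul_comm, mul_sum, ← sum_deg H k hk]
    calc ∑ T ∈ S, p * deg w T ≤ ∑ T ∈ S, deg H T := sum_le_sum fun T hT => by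
          simp only [hS, mem_filter, mem_univ, true_and] at hT
          exact (hdeg T hT.1).trans hT.2.le
      _ ≤ ∑ T, deg H T := sum_le_sum_of_subset_of_nonneg (subset_univ _)
          fun T _ _ => deg_nonneg hH T
  linarith

/-- A hypergraph of large weight `x` and vertex degrees at most `D` has many vertices of degree
above `τ`: the total weight is at most the sum of the degrees over `G`. -/
lemma card_low_degree {A : Finset α → ℝ} {G : Finset α} {D τ x : ℝ}
    (hA : ∀ E, 0 ≤ A E) (hsupp : ∀ E, A E ≠ 0 → E ⊆ G ∧ E.Nonempty)
    (hD : ∀ v, deg A {v} ≤ D) (hτ : 0 ≤ τ) (hx : x ≤ deg A ∅) :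
    x ≤ τ * G.card + D * (G.card - (G.filter fun v => deg A {v} ≤ τ).card) := by
  classical
  have h1 : deg A ∅ ≤ ∑ v ∈ G, deg A {v} := by
    have e1 : ∑ v ∈ G, deg A {v} = ∑ E, ∑ v ∈ G, if ({v} : Finset α) ⊆ E then A E else 0 := by
      simp_rw [deg, sum_filter]; exact sum_comm
    rw [e1, deg_empty]
    refine sum_le_sum fun E _ => ?_
    by_cases h : A E = 0
    · simp [h]
    · obtain ⟨hs, v, hv⟩ := hsupp E h
      calc A E = if ({v} : Finset α) ⊆ E then A E else 0 := by rw [if_pos (by simpa using hv)]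
        _ ≤ _ := single_le_sum (f := fun v => if ({v} : Finset α) ⊆ E then A E else 0)
          (fun v _ => by split_ifs; exacts [hA E, le_rfl]) (hs hv)
  rw [← sum_filter_add_sum_filter_not G (fun v => deg A {v} ≤ τ)] at h1
  have h2 : ∑ v ∈ G with deg A {v} ≤ τ, deg A {v} ≤ τ * (G.filter fun v => deg A {v} ≤ τ).card := by
    calc _ ≤ ∑ v ∈ G with deg A {v} ≤ τ, τ := sum_le_sum fun v hv => (mem_filter.1 hv).2
      _ = _ := by simp [mul_comm]
  have h3 : ∑ v ∈ G with ¬ deg A {v} ≤ τ, deg A {v} ≤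
      D * (G.filter fun v => ¬ deg A {v} ≤ τ).card := by
    calc _ ≤ ∑ v ∈ G with ¬ deg A {v} ≤ τ, D := sum_le_sum fun v hv => hD v
      _ = _ := by simp [mul_comm]
  have h4 : ((G.filter fun v => deg A {v} ≤ τ).card : ℝ) +
      (G.filter fun v => ¬ deg A {v} ≤ τ).card = G.card := by
    exact_mod_cast card_filter_add_card_filter_not (s := G) (fun v => deg A {v} ≤ τ)
  have h5 : τ * (G.filter fun v => deg A {v} ≤ τ).card ≤ τ * G.card := by
    gcongr; exact filter_subset _ _
  have h6 : ((G.filter fun v => ¬ deg A {v} ≤ τ).card : ℝ) =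
    G.card - (G.filter fun v => deg A {v} ≤ τ).card := by linarith
  rw [h6] at h3
  linarith


/-- One round of the container algorithm, for a `(k + 1)`-uniform `w`. The state consists of the
vertices `U` not yet queried, the selected vertices `Y`, and a `k`-uniform hypergraph `H`
accumulated from links of selected vertices; a member `I` of `𝓘` compatible with the state contains
no edge of `w` or `H` and lies in `U ∪ Y`. Query an unqueried vertex of degree above `a / 4` in the
surviving hypergraph; if it belongs to `I`, select it and add its link to `H`. The round stops
either when `H` is heavy, and the bound `R` for `k`-uniform hypergraphs applies, or when no vertex of
high degree remains, so that `I` lies in a set of size at most `(1 - δ) |G|`, and the bound `Q`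
applies. At most `y` vertices are selected; weighing a selection by `p⁻¹` makes the number of
branches at most `(1 + p) ^ |U| p ^ (-y)`. -/
lemma container_round {k : ℕ} {D a p δ R Q : ℝ} {y : ℕ} {G : Finset α} {w : Finset α → ℝ}
    {𝓘 : Finset (Finset α)} (hD : 0 < D) (ha : 0 < a) (hp : 0 < p) (hp1 : p ≤ 1)
    (hpD : p * D ≤ a / 4) (hδD : δ * D ≤ a / 4) (hy : p * G.card ≤ y)
    (hw : ∀ E, 0 ≤ w E) (hsupp : ∀ E, w E ≠ 0 → E ⊆ G ∧ E.card = k + 1)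
    (hdeg : ∀ T : Finset α, T.Nonempty → p * deg w T ≤ D * p ^ T.card)
    (htot : a * G.card ≤ deg w ∅)
    (hQ : ∀ C ⊆ G, (C.card : ℝ) ≤ (1 - δ) * G.card → ((𝓘.filter (· ⊆ C)).card : ℝ) ≤ Q)
    (hQR : Q ≤ R) (hR0 : 0 ≤ R)
    (hR : ∀ H : Finset α → ℝ, (∀ E, 0 ≤ H E) → (∀ E, H E ≠ 0 → E ⊆ G ∧ E.card = k) →
      (∀ T : Finset α, T.Nonempty → deg H T ≤ 2 * D * p ^ T.card) →
      a / 2 ^ (k + 3) * (p * G.card) ≤ deg H ∅ →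
      ((𝓘.filter fun I => I ⊆ G ∧ ∀ E ⊆ I, H E = 0).card : ℝ) ≤ R)
    (u : ℕ) : ∀ (U Y : Finset α) (H : Finset α → ℝ), U.card = u → U ⊆ G →
      (∀ E, 0 ≤ H E) → (∀ E, H E ≠ 0 → E ⊆ G ∧ E.card = k) →
      (∀ T : Finset α, T.Nonempty → deg H T ≤ 2 * D * p ^ T.card) →
      a / 4 * Y.card ≤ deg H ∅ →
      ((𝓘.filter fun I => I ⊆ G ∧ (∀ E ⊆ I, w E = 0) ∧ (∀ E ⊆ I, H E = 0) ∧
        ∀ v ∈ I, v ∈ U ∨ v ∈ Y).card : ℝ) ≤ (1 + p) ^ u * (p⁻¹) ^ (y - Y.card) * R := by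
  classical
  induction u with
  | zero => ?_
  | succ u ih => ?_
  all_goals
    intro U Y H hU hUG hH hHs hHd hY
    have one_le : ∀ a b : ℕ, 1 ≤ (1 + p) ^ a * (p⁻¹) ^ b := fun a b =>
      one_le_mul_of_one_le_of_one_le (one_le_pow₀ (by linarith))
        (one_le_pow₀ ((one_le_inv₀ hp).2 hp1))
    by_cases hbig : a / 2 ^ (k + 3) * (p * G.card) ≤ deg H ∅
    · refine le_trans ?_ ((hR H hH hHs hHd hbig).trans (le_mul_of_one_le_left hR0 (one_le _ _)))
      exact_mod_cast card_le_card fun I hI => by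
        simp only [mem_filter] at hI ⊢
        exact ⟨hI.1, hI.2.1, hI.2.2.2.1⟩
    push Not at hbig
    have h2k : (0:ℝ) < 2 ^ k := by positivity
    have hGc : (0:ℝ) ≤ G.card := by positivity
    have hpG : 0 ≤ p * G.card := by positivity
    have hYlt : (Y.card : ℝ) < p * G.card := by
      have h8 : a / 2 ^ (k + 3) ≤ a / 4 := by
        gcongr
        calc (4:ℝ) = 2 ^ 2 := by norm_num
          _ ≤ 2 ^ (k + 3) := pow_le_pow_right₀ (by norm_num) (by omega)
      have : a / 4 * Y.card < a / 4 * (p * G.card) :=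
        lt_of_le_of_lt hY (hbig.trans_le (by gcongr))
      exact lt_of_mul_lt_mul_left this (by positivity)
    set A := surv w H Y D p with hAdef
    have hAnn : ∀ E, 0 ≤ A E := surv_nonneg hw
    have hAle : ∀ E, A E ≤ w E := surv_le hw
    have hA0 : ∀ E, w E = 0 → A E = 0 := fun E h => le_antisymm ((hAle E).trans h.le) (hAnn E)
    by_cases hex : ∃ v ∈ U, a / 4 < deg A {v}
    swap
    · push Not at hex
      have hAtot : a / 2 * G.card ≤ deg A ∅ := by
        have h1 := surv_lower (Y := Y) hp hw hH (fun E hE => (hHs E hE).2) hdeg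
        have h2 : 2 ^ k * deg H ∅ / p ≤ a / 8 * G.card := by
          rw [div_le_iff₀ hp]
          calc 2 ^ k * deg H ∅ ≤ 2 ^ k * (a / 2 ^ (k + 3) * (p * G.card)) := by gcongr
            _ = a / 8 * G.card * p := by rw [pow_add]; field_simp; ring
        have h3 : D * Y.card ≤ a / 4 * G.card := by
          calc D * Y.card ≤ D * (p * G.card) := by gcongr
            _ = p * D * G.card := by ring
            _ ≤ _ := by gcongr
        nlinarith
      have hlow := card_low_degree (G := G) (D := D) (τ := a / 4) hAnn (fun E hE => by
        have := hsupp E fun h => hE (hA0 E h)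
        exact ⟨this.1, card_pos.1 (by omega)⟩) (fun v => by
          have h1 := hdeg {v} (by simp)
          simp only [card_singleton, pow_one] at h1
          rw [mul_comm D] at h1
          exact (deg_mono hAle _).trans (le_of_mul_le_mul_left h1 hp)) (by positivity) hAtot
      have hC := hQ (G.filter fun v => deg A {v} ≤ a / 4) (filter_subset _ _) (by
        have : D * (G.filter fun v => deg A {v} ≤ a / 4).card ≤ D * ((1 - δ) * G.card) := by
          nlinarith
        exact le_of_mul_le_mul_left this hD)
      refine le_trans ?_ ((hC.trans hQR).trans (le_mul_of_one_le_left hR0 (one_le _ _)))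
      -- Selected vertices have surviving degree `0`, unqueried ones at most `a / 4`.
      exact_mod_cast card_le_card fun I hI => by
        simp only [mem_filter] at hI ⊢
        refine ⟨hI.1, fun v hv => mem_filter.2 ⟨hI.2.1 hv, ?_⟩⟩
        rcases hI.2.2.2.2 v hv with h | h
        · exact hex v h
        · rw [deg_eq_zero fun E hE => surv_eq_zero_of_mem h (hE (mem_singleton_self v))]
          positivity
    obtain ⟨v, hvU, hv⟩ := hex
  · rw [card_eq_zero.1 hU] at hvU; simp at hvU
  -- The query: branch on whether `v` belongs to the independent set.
  have hYy : Y.card + 1 ≤ y := by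
    have : (Y.card : ℝ) < y := hYlt.trans_le hy
    exact_mod_cast this
  have hUe : (U.erase v).card = u := by rw [card_erase_of_mem hvU, hU]; rfl
  have hno := ih (U.erase v) Y H hUe ((erase_subset _ _).trans hUG) hH hHs hHd hY
  have hvY : v ∉ Y := by
    intro h
    rw [deg_eq_zero fun E hE => surv_eq_zero_of_mem h (hE (mem_singleton_self v))] at hv
    linarith
  have hlnn : ∀ F, 0 ≤ link A v F := fun F => by
    unfold link; split_ifs; exacts [le_rfl, hAnn _]
  have hyes := ih (U.erase v) (insert v Y) (fun F => H F + link A v F) hUe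
    ((erase_subset _ _).trans hUG) (fun E => add_nonneg (hH E) (hlnn E)) (by
      intro E hE
      by_cases h : H E = 0
      · simp only [h, zero_add] at hE
        unfold link at hE
        split_ifs at hE with hvE
        · exact absurd rfl hE
        · have := hsupp _ fun h => hE (hA0 _ h)
          rw [card_insert_of_notMem hvE] at this
          exact ⟨(subset_insert _ _).trans this.1, by omega⟩
      · exact hHs E h) (by
      intro T hT
      rw [deg_add]
      by_cases hvT : v ∈ T
      · rw [deg_link_of_mem _ hvT, add_zero]; exact hHd T hT
      rw [deg_link _ hvT]
      by_cases hsat : deg H T ≤ D * p ^ T.card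
      · have h1 : deg A (insert v T) ≤ D * p ^ T.card := by
          have h2 := hdeg (insert v T) (by simp)
          rw [card_insert_of_notMem hvT, pow_succ,
            show D * (p ^ T.card * p) = p * (D * p ^ T.card) by ring] at h2
          exact (deg_mono hAle _).trans (le_of_mul_le_mul_left h2 hp)
        linarith
      · push Not at hsat
        rw [deg_eq_zero fun E hE =>
          surv_eq_zero_of_sat ((subset_insert _ _).trans hE) hT hsat, add_zero]
        exact hHd T hT) (by
      rw [deg_add, deg_link _ (notMem_empty v), card_insert_of_notMem hvY]
      have : deg A (insert v ∅) = deg A {v} := rfl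
      rw [this]
      push_cast
      linarith)
  have hsplit : ((𝓘.filter fun I => I ⊆ G ∧ (∀ E ⊆ I, w E = 0) ∧ (∀ E ⊆ I, H E = 0) ∧
        ∀ v ∈ I, v ∈ U ∨ v ∈ Y).card : ℝ) ≤
      (𝓘.filter fun I => I ⊆ G ∧ (∀ E ⊆ I, w E = 0) ∧ (∀ E ⊆ I, H E = 0) ∧
        ∀ x ∈ I, x ∈ U.erase v ∨ x ∈ Y).card +
      (𝓘.filter fun I => I ⊆ G ∧ (∀ E ⊆ I, w E = 0) ∧ (∀ E ⊆ I, H E + link A v E = 0) ∧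
        ∀ x ∈ I, x ∈ U.erase v ∨ x ∈ insert v Y).card := by
    rw [← Nat.cast_add]
    refine Nat.cast_le.2 (le_trans (card_le_card ?_) (card_union_le _ _))
    intro I hI
    simp only [mem_filter, mem_union] at hI ⊢
    obtain ⟨hI1, hI2, hI3, hI4, hI5⟩ := hI
    by_cases hvI : v ∈ I
    · right
      refine ⟨hI1, hI2, hI3, fun E hE => ?_, fun x hx => ?_⟩
      · rw [hI4 E hE, zero_add]
        unfold link
        split_ifs
        · rfl
        · exact hA0 _ (hI3 _ (insert_subset hvI hE))
      · by_cases hxv : x = v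
        · right; simp [hxv]
        · rcases hI5 x hx with h | h
          · left; exact mem_erase.2 ⟨hxv, h⟩
          · right; exact mem_insert_of_mem h
    · left
      refine ⟨hI1, hI2, hI3, hI4, fun x hx => ?_⟩
      rcases hI5 x hx with h | h
      · left; exact mem_erase.2 ⟨fun h => hvI (h ▸ hx), h⟩
      · right; exact h
  rw [card_insert_of_notMem hvY] at hyes
  obtain ⟨t, ht⟩ : ∃ t, y - Y.card = t + 1 := ⟨y - Y.card - 1, by omega⟩
  have ht' : y - (Y.card + 1) = t := by omega
  rw [ht] at hno ⊢
  rw [ht'] at hyes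
  refine hsplit.trans ((add_le_add hno hyes).trans (le_of_eq ?_))
  rw [pow_succ (1 + p), pow_succ (p⁻¹)]
  field_simp

end Containers

/-- Weighted container theorem in counting form. If the `k`-uniform hypergraph `w` on `G` has weight
at least `a |G|` and is balanced, `p · deg w T ≤ D p ^ |T|` for nonempty `T`, and if every subset of
`G` of relative size `1 - δ` contains at most `Q` members of `𝓘`, then at most
`((1 + p) ^ |G| p ^ (-y)) ^ k Q` members of `𝓘` inside `G` are independent in `w`, where
`y ≥ p |G|`. The constants `p₀`, `δ` depend only on `k`, `D`, `a`. -/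
theorem container_count (k : ℕ) : ∀ D a : ℝ, 0 < D → 0 < a → ∃ p₀ δ : ℝ, 0 < p₀ ∧ p₀ ≤ 1 ∧ 0 < δ ∧
    δ < 1 ∧ ∀ {α : Type} [Fintype α] [DecidableEq α] (G : Finset α) (w : Finset α → ℝ)
    (𝓘 : Finset (Finset α)) (p Q : ℝ) (y : ℕ), 0 < p → p ≤ p₀ → p * G.card ≤ y →
    0 < G.card → 0 ≤ Q →
    (∀ E, 0 ≤ w E) → (∀ E, w E ≠ 0 → E ⊆ G ∧ E.card = k) →
    (∀ T : Finset α, T.Nonempty → p * deg w T ≤ D * p ^ T.card) →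
    (a * G.card ≤ deg w ∅) →
    (∀ C ⊆ G, (C.card : ℝ) ≤ (1 - δ) * G.card → ((𝓘.filter (· ⊆ C)).card : ℝ) ≤ Q) →
    ((𝓘.filter fun I => I ⊆ G ∧ ∀ E ⊆ I, w E = 0).card : ℝ) ≤
      ((1 + p) ^ G.card * (p⁻¹) ^ y) ^ k * Q := by
  induction k with
  | zero =>
    intro D a hD ha
    refine ⟨1, 1 / 2, one_pos, le_rfl, by norm_num, by norm_num, ?_⟩
    intro α _ _ G w 𝓘 p Q y hp hp0 hy hG hQ0 hw hsupp hdeg htot hQ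
    -- The only possible edge is `∅`, which is contained in every set.
    have h0 : w ∅ ≠ 0 := by
      intro h
      have : deg w ∅ = 0 := deg_eq_zero fun E _ => by
        by_contra hE
        rw [card_eq_zero.1 (hsupp E hE).2] at hE
        exact hE h
      have : 0 < a * G.card := by positivity
      linarith
    rw [filter_eq_empty_iff.2]
    · simpa using hQ0
    · rintro I - ⟨-, h⟩
      exact h0 (h ∅ (empty_subset _))
  | succ k ih =>
    intro D a hD ha
    obtain ⟨p₁, δ₁, hp₁, hp₁1, hδ₁, hδ₁1, H⟩ := ih (2 * D) (a / 2 ^ (k + 3)) (by positivity) (by positivity)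
    refine ⟨min p₁ (a / (4 * D)), min δ₁ (a / (4 * D)), by positivity,
      (min_le_left _ _).trans hp₁1, by positivity, (min_le_left _ _).trans_lt hδ₁1, ?_⟩
    intro α _ _ G w 𝓘 p Q y hp hp0 hy hG hQ0 hw hsupp hdeg htot hQ
    have hp1 : p ≤ 1 := hp0.trans ((min_le_left _ _).trans hp₁1)
    have hfac : 1 ≤ (1 + p) ^ G.card * (p⁻¹) ^ y :=
      one_le_mul_of_one_le_of_one_le (one_le_pow₀ (by linarith))
        (one_le_pow₀ ((one_le_inv₀ hp).2 hp1))
    have hle : ∀ {x : ℝ}, x ≤ a / (4 * D) → x * D ≤ a / 4 := fun {x} hx => by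
      calc x * D ≤ a / (4 * D) * D := by gcongr
        _ = a / 4 := by field_simp
    have key := container_round (R := ((1 + p) ^ G.card * (p⁻¹) ^ y) ^ k * Q) (y := y) (𝓘 := 𝓘) hD ha hp hp1
      (hle (hp0.trans (min_le_right _ _))) (hle (min_le_right δ₁ _)) hy hw hsupp hdeg htot hQ
      (le_mul_of_one_le_left hQ0 (one_le_pow₀ hfac)) (by positivity) (by
        intro H' hH hHs hHd hHt
        have := H G (fun E => H' E / p) 𝓘 p Q y hp (hp0.trans (min_le_left _ _)) hy hG hQ0
          (fun E => div_nonneg (hH E) hp.le)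
          (fun E hE => hHs E fun h => hE (by simp [h]))
          (fun T hT => by rw [deg_div, mul_div_cancel₀ _ hp.ne']; exact hHd T hT)
          (by rw [deg_div, le_div_iff₀ hp]; linarith)
          (fun C hC hc => hQ C hC (hc.trans (by gcongr; exact min_le_left _ _)))
        simpa [hp.ne'] using this)
      G.card G ∅ (fun _ => 0) rfl subset_rfl (fun _ => le_rfl) (by simp)
      (fun T _ => by simp only [deg, sum_const_zero]; positivity) (by simp [deg])
    refine le_trans (le_of_eq ?_) (key.trans (le_of_eq ?_))
    · congr 2
      ext I
      simp only [mem_filter, and_congr_right_iff]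
      intro _ hI
      simp only [implies_true, true_and]
      constructor
      · exact fun h => ⟨h, fun v hv => Or.inl (hI hv)⟩
      · exact fun h => h.1
    · simp only [card_empty, Nat.sub_zero]
      rw [pow_succ]; ring

/-! ### Balanced weights or cheap covers -/

section Greedy
variable {α : Type} [Fintype α] [DecidableEq α]

/-- Either some weight on the `r`-uniform family `𝓑` is balanced and has total at least `x`, or some
family `𝒢` of nonempty sets covers `𝓑` (each `B ∈ 𝓑` contains a member of `𝒢`) at small cost
`∑ p ^ |T|`. The weight is `p ^ (r - 1)` on each edge of a largest subfamily keeping it balanced;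
if its total is small, the sets whose degree is at least half the allowed value form the cover, by
maximality. -/
lemma balanced_or_cover (𝓑 : Finset (Finset α)) (r : ℕ) (hr : 1 ≤ r)
    (h𝓑 : ∀ B ∈ 𝓑, B.card = r) (p x : ℝ) (hp : 0 < p) (hp1 : p ≤ 1) :
    (∃ w : Finset α → ℝ, (∀ E, 0 ≤ w E) ∧ (∀ E, w E ≠ 0 → E ∈ 𝓑) ∧
      (∀ T : Finset α, T.Nonempty → p * deg w T ≤ 2 * p ^ T.card) ∧ x ≤ deg w ∅) ∨
    ∃ 𝒢 : Finset (Finset α), (∀ T ∈ 𝒢, T.Nonempty ∧ ∃ B ∈ 𝓑, T ⊆ B) ∧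
      (∀ B ∈ 𝓑, ∃ T ∈ 𝒢, T ⊆ B) ∧ ∑ T ∈ 𝒢, p ^ T.card ≤ p * 2 ^ r * x := by
  classical
  let W : Finset (Finset α) → Finset α → ℝ := fun 𝓕 E => if E ∈ 𝓕 then p ^ r / p else 0
  have hWnn : ∀ 𝓕 E, 0 ≤ W 𝓕 E := fun 𝓕 E => by
    simp only [W]; split_ifs <;> positivity
  let Good : Finset (Finset α) → Prop := fun 𝓕 =>
    ∀ T : Finset α, T.Nonempty → p * deg (W 𝓕) T ≤ 2 * p ^ T.card
  obtain ⟨𝓕, h𝓕, hmax⟩ := exists_max_image (𝓑.powerset.filter Good) card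
    ⟨∅, by
      simp only [mem_filter, mem_powerset, empty_subset, true_and]
      intro T _
      rw [deg_eq_zero fun E _ => by simp [W], mul_zero]
      positivity⟩
  simp only [mem_filter, mem_powerset] at h𝓕 hmax
  obtain ⟨h𝓕𝓑, hgood⟩ := h𝓕
  have hsup : ∀ E, W 𝓕 E ≠ 0 → E ∈ 𝓕 := fun E hE => by
    by_contra h; exact hE (by simp [W, h])
  by_cases hx : x ≤ deg (W 𝓕) ∅
  · exact Or.inl ⟨W 𝓕, hWnn 𝓕, fun E hE => h𝓕𝓑 (hsup E hE), hgood, hx⟩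
  push Not at hx
  right
  refine ⟨univ.filter fun T => T.Nonempty ∧ p ^ T.card ≤ p * deg (W 𝓕) T, ?_, ?_, ?_⟩
  · intro T hT
    simp only [mem_filter, mem_univ, true_and] at hT
    refine ⟨hT.1, ?_⟩
    by_contra hno
    push Not at hno
    rw [deg_eq_zero fun E hE => by
      by_contra h; exact hno E (h𝓕𝓑 (hsup E h)) hE] at hT
    have : 0 < p ^ T.card := by positivity
    linarith [hT.2]
  · intro B hB
    by_contra hno
    push Not at hno
    have hBne : B.Nonempty := card_pos.1 (by rw [h𝓑 B hB]; omega)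
    have hun : ∀ T ⊆ B, T.Nonempty → p * deg (W 𝓕) T < p ^ T.card := by
      intro T hT hne
      by_contra h
      push Not at h
      exact hno T (by simp [hne, h]) hT
    have hB𝓕 : B ∉ 𝓕 := by
      intro h
      have h1 := hun B subset_rfl hBne
      have h2 : W 𝓕 B ≤ deg (W 𝓕) B :=
        single_le_sum (f := W 𝓕) (fun E _ => hWnn 𝓕 E) (by simp)
      have h3 : W 𝓕 B = p ^ r / p := by simp [W, h]
      rw [h𝓑 B hB] at h1
      rw [h3, div_le_iff₀ hp] at h2
      linarith
    have hWins : ∀ E, W (insert B 𝓕) E = W 𝓕 E + if E = B then p ^ r / p else 0 := by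
      intro E
      by_cases h : E = B
      · subst h; simp [W, hB𝓕]
      · simp [W, h]
    have := hmax (insert B 𝓕) ⟨insert_subset hB h𝓕𝓑, fun T hT => by
      have hd : deg (W (insert B 𝓕)) T = deg (W 𝓕) T + if T ⊆ B then p ^ r / p else 0 := by
        unfold deg
        simp_rw [hWins]
        rw [sum_add_distrib, sum_ite_eq' (univ.filter (T ⊆ ·)) B]
        simp
      rw [hd, mul_add]
      split_ifs with h
      · have h1 := hun T h hT
        have h2 : p ^ r ≤ p ^ T.card :=
          pow_le_pow_of_le_one hp.le hp1 ((card_le_card h).trans (h𝓑 B hB).le)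
        rw [mul_div_cancel₀ _ hp.ne']
        linarith
      · rw [mul_zero, add_zero]; exact hgood T hT⟩
    rw [card_insert_of_notMem hB𝓕] at this
    omega
  · calc _ ≤ ∑ T with T.Nonempty ∧ p ^ T.card ≤ p * deg (W 𝓕) T, p * deg (W 𝓕) T :=
          sum_le_sum fun T hT => (mem_filter.1 hT).2.2
      _ ≤ ∑ T, p * deg (W 𝓕) T := sum_le_sum_of_subset_of_nonneg (subset_univ _)
          fun T _ _ => mul_nonneg hp.le (deg_nonneg (hWnn 𝓕) T)
      _ = p * (2 ^ r * deg (W 𝓕) ∅) := by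
          rw [← mul_sum, sum_deg _ r fun E hE => h𝓑 E (h𝓕𝓑 (hsup E hE))]
      _ ≤ _ := by rw [mul_assoc]; gcongr

end Greedy

/-! ### Boxes -/

section Boxes

/-- The edge `{g (j, ε j) : j}` of the box with vertex pairs `g (j, false)`, `g (j, true)`. -/
def boxEdge {X : Type} [DecidableEq X] {d : ℕ} (g : Fin d × Bool → X) (ε : Fin d → Bool) :
    Finset X := univ.image fun j => g (j, ε j)

/-- The edge set of the box, i.e. the copy of `K_{2,…,2}^{(d)}`, with vertices given by `g`. -/
def box {X : Type} [DecidableEq X] {d : ℕ} (g : Fin d × Bool → X) : Finset (Finset X) :=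
  univ.image (boxEdge g)

/-- `E` contains a box, on an arbitrary vertex type; see `hasBox_iff`. -/
def BoxIn {X : Type} [DecidableEq X] (d : ℕ) (E : Finset (Finset X)) : Prop :=
  ∃ g : Fin d × Bool → X, Function.Injective g ∧ box g ⊆ E

variable {X : Type} [DecidableEq X] {d : ℕ}

lemma mem_boxEdge {g : Fin d × Bool → X} (hg : Function.Injective g) {ε : Fin d → Bool}
    {j : Fin d} {β : Bool} : g (j, β) ∈ boxEdge g ε ↔ ε j = β := by
  unfold boxEdge
  simp only [mem_image, mem_univ, true_and]
  constructor
  · rintro ⟨i, hi⟩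
    have := hg hi
    simp only [Prod.mk.injEq] at this
    rw [← this.1]; exact this.2
  · intro h; exact ⟨j, by rw [h]⟩

lemma boxEdge_injective {g : Fin d × Bool → X} (hg : Function.Injective g) :
    Function.Injective (boxEdge g) := by
  intro ε ε₂ h
  funext j
  have : g (j, ε₂ j) ∈ boxEdge g ε := by rw [h]; exact (mem_boxEdge hg).2 rfl
  exact (mem_boxEdge hg).1 this

lemma card_box {g : Fin d × Bool → X} (hg : Function.Injective g) : (box g).card = 2 ^ d := by
  unfold box
  rw [card_image_of_injective _ (boxEdge_injective hg)]
  simp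

lemma card_boxEdge {g : Fin d × Bool → X} (hg : Function.Injective g) (ε : Fin d → Bool) :
    (boxEdge g ε).card = d := by
  unfold boxEdge
  rw [card_image_of_injective]
  · simp
  · intro i j h
    exact (Prod.mk.inj (hg h)).1

/-- A nonempty set `T` of edges of a box that uses both vertices of exactly `j` of the `d` pairs has
at most `2 ^ j` edges and spans at least `d + j` vertices. -/
lemma span_of_subset_box {g : Fin d × Bool → X} (hg : Function.Injective g)
    {T : Finset (Finset X)} (hT : T.Nonempty) (hTg : T ⊆ box g) :
    ∃ j ≤ d, d + j ≤ (T.sup id).card ∧ T.card ≤ 2 ^ j := by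
  classical
  set V := T.sup id with hV
  have hmem : ∀ {e}, e ∈ T → e ⊆ V := fun {e} he => le_sup (f := id) he
  set J : Finset (Fin d) := univ.filter fun i => g (i, false) ∈ V ∧ g (i, true) ∈ V with hJ
  refine ⟨J.card, by simpa using card_le_univ J, ?_, ?_⟩
  · obtain ⟨e, he⟩ := hT
    obtain ⟨ε, -, rfl⟩ := mem_image.1 (hTg he)
    have hdisj : Disjoint (boxEdge g ε) (J.image fun i => g (i, !ε i)) := by
      rw [disjoint_left]
      intro x hx hx'
      obtain ⟨i, -, rfl⟩ := mem_image.1 hx'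
      have := (mem_boxEdge hg).1 hx
      simp at this
    have hcard : (J.image fun i => g (i, !ε i)).card = J.card :=
      card_image_of_injective _ fun i j h => (Prod.mk.inj (hg h)).1
    have hsub : boxEdge g ε ∪ (J.image fun i => g (i, !ε i)) ⊆ V := by
      refine union_subset (hmem he) ?_
      intro x hx
      obtain ⟨i, hi, rfl⟩ := mem_image.1 hx
      simp only [hJ, mem_filter, mem_univ, true_and] at hi
      cases ε i
      · exact hi.2
      · exact hi.1
    have := card_le_card hsub
    rwa [card_union_of_disjoint hdisj, hcard, card_boxEdge hg] at this
  · rw [← card_powerset]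
    refine card_le_card_of_injOn (fun e => J.filter fun i => g (i, true) ∈ e) ?_ ?_
    · intro e _
      exact mem_coe.2 (mem_powerset.2 (filter_subset _ _))
    · intro e he e' he' h
      obtain ⟨ε, -, rfl⟩ := mem_image.1 (hTg he)
      obtain ⟨ε₂, -, rfl⟩ := mem_image.1 (hTg he')
      congr 1
      funext i
      by_contra hne
      have m1 := hmem he ((mem_boxEdge hg (ε := ε) (j := i)).2 rfl)
      have m2 := hmem he' ((mem_boxEdge hg (ε := ε₂) (j := i)).2 rfl)
      have hiJ : i ∈ J := by
        simp only [hJ, mem_filter, mem_univ, true_and]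
        cases h1 : ε i <;> cases h2 : ε₂ i <;> simp_all
      have := Finset.ext_iff.1 h i
      simp only [mem_filter, hiJ, true_and, mem_boxEdge hg] at this
      cases h1 : ε i <;> cases h2 : ε₂ i <;> simp_all

lemma box_image {Z : Type} [DecidableEq Z] (f : X → Z) (g : Fin d × Bool → X) :
    box (f ∘ g) = (box g).image (fun e => e.image f) := by
  unfold box boxEdge
  rw [image_image]
  congr 1
  funext ε
  simp [image_image, Function.comp_def]

end Boxes

/-! ### Boxes in random vertex subsets -/

lemma hasBox_iff {d n : ℕ} {E : Finset (Finset (Fin n))} : HasBox d n E ↔ BoxIn d E := by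
  constructor
  · rintro ⟨a, b, hinj, h⟩
    refine ⟨_, hinj, ?_⟩
    intro e he
    obtain ⟨ε, -, rfl⟩ := mem_image.1 he
    exact h ε
  · rintro ⟨g, hg, h⟩
    have : (fun p : Fin d × Bool => if p.2 then g (p.1, true) else g (p.1, false)) = g := by
      funext ⟨j, β⟩; cases β <;> simp
    refine ⟨fun j => g (j, false), fun j => g (j, true), by rwa [this], fun ε => ?_⟩
    refine h (mem_image.2 ⟨ε, mem_univ _, ?_⟩)
    unfold boxEdge
    congr 1
    funext j
    cases h : ε j <;> simp

lemma le_exBox_fin {d n : ℕ} {E : Finset (Finset (Fin n))} (hd : ∀ e ∈ E, e.card = d)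
    (hE : ¬ BoxIn d E) : E.card ≤ exBox d n := by
  refine le_csSup ⟨Fintype.card (Finset (Fin n)), ?_⟩ ⟨E, hd, by rwa [hasBox_iff], rfl⟩
  rintro m ⟨F, -, -, rfl⟩
  exact card_le_univ F

/-- `exBox` bounds box-free `d`-uniform hypergraphs on any `m`-element vertex set `R`. -/
lemma le_exBox {X : Type} [DecidableEq X] {d m : ℕ} {E : Finset (Finset X)} {R : Finset X}
    (hR : R.card = m) (hsub : ∀ e ∈ E, e ⊆ R) (hd : ∀ e ∈ E, e.card = d)
    (hE : ¬ BoxIn d E) : E.card ≤ exBox d m := by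
  classical
  let φ : Fin m ≃ R := (R.equivFinOfCardEq hR).symm
  let f : Fin m → X := fun i => (φ i : X)
  have hf : Function.Injective f := fun i j h => φ.injective (Subtype.ext h)
  let E' : Finset (Finset (Fin m)) := univ.filter fun e => e.image f ∈ E
  have hcard : E.card ≤ E'.card := by
    have : E ⊆ E'.image fun e => e.image f := by
      intro e he
      have hpre : (univ.filter fun i => f i ∈ e).image f = e := by
        ext x
        simp only [mem_image, mem_filter, mem_univ, true_and]
        constructor
        · rintro ⟨i, hi, rfl⟩; exact hi
        · intro hx
          refine ⟨φ.symm ⟨x, hsub e he hx⟩, ?_, ?_⟩ <;> simp [f, hx]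
      exact mem_image.2 ⟨univ.filter fun i => f i ∈ e, by
        simp only [E', mem_filter, mem_univ, true_and, hpre, he], hpre⟩
    exact (card_le_card this).trans card_image_le
  refine hcard.trans (le_exBox_fin ?_ ?_)
  · intro e he
    have := hd _ (mem_filter.1 he).2
    rwa [card_image_of_injective _ hf] at this
  · rintro ⟨g, hg, hbox⟩
    refine hE ⟨f ∘ g, hf.comp hg, ?_⟩
    rw [box_image]
    intro e he
    obtain ⟨e', he', rfl⟩ := mem_image.1 he
    exact (mem_filter.1 (hbox he')).2

section Sampling

/-- The number of `m`-subsets of an `n`-set containing a given `v`-subset. -/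
noncomputable def cnt (n m v : ℕ) : ℝ := if v ≤ m then ((n - v).choose (m - v) : ℝ) else 0

lemma cnt_nonneg (n m v : ℕ) : 0 ≤ cnt n m v := by
  unfold cnt; split_ifs <;> positivity

lemma card_superset {n m : ℕ} (V : Finset (Fin n)) :
    (((powersetCard m (univ : Finset (Fin n))).filter (V ⊆ ·)).card : ℝ) = cnt n m V.card := by
  unfold cnt
  split_ifs with h
  · rw [card_filter_powersetCard_subset V univ m (subset_univ V) h, card_univ, Fintype.card_fin]
  · rw [Nat.cast_eq_zero, card_eq_zero, filter_eq_empty_iff]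
    intro R hR hV
    exact h ((card_le_card hV).trans (mem_powersetCard.1 hR).2.le)

lemma cnt_succ_mul {n m v : ℕ} (hmn : m ≤ n) (hv : v ≤ m) :
    cnt n m (v + 1) * ((n : ℝ) - v) = cnt n m v * ((m : ℝ) - v) := by
  rcases hv.eq_or_lt with rfl | hv
  · simp [cnt]
  obtain ⟨k, rfl⟩ : ∃ k, m = v + (k + 1) := ⟨m - v - 1, by omega⟩
  obtain ⟨l, rfl⟩ : ∃ l, n = v + (l + 1) := ⟨n - v - 1, by omega⟩
  have := Nat.add_one_mul_choose_eq l k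
  unfold cnt
  rw [if_pos (by omega), if_pos (by omega)]
  rw [show v + (l + 1) - (v + 1) = l by omega, show v + (k + 1) - (v + 1) = k by omega,
    show v + (l + 1) - v = l + 1 by omega, show v + (k + 1) - v = k + 1 by omega]
  have h2 : ((l:ℝ) + 1) * (l.choose k : ℝ) = ((l+1).choose (k+1) : ℝ) * ((k:ℝ) + 1) := by
    exact_mod_cast this
  push_cast
  linarith

lemma cnt_succ_le {n m : ℕ} (hmn : m ≤ n) (hn : 0 < n) (v : ℕ) :
    cnt n m (v + 1) ≤ (m / n : ℝ) * cnt n m v := by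
  have h0 := cnt_nonneg n m v
  by_cases hv : v < m
  · have h := cnt_succ_mul hmn hv.le
    have hv' : (v : ℝ) < m := by exact_mod_cast hv
    have hmn' : (m : ℝ) ≤ n := by exact_mod_cast hmn
    have hn' : (0 : ℝ) < n := by exact_mod_cast hn
    have hvn : (0 : ℝ) < n - v := by linarith
    rw [show cnt n m (v + 1) = cnt n m v * ((m : ℝ) - v) / (n - v) by field_simp; exact h,
      div_mul_eq_mul_div, div_le_div_iff₀ hvn hn']
    have : ((m : ℝ) - v) * n ≤ m * (n - v) := by
      have : (0:ℝ) ≤ v := by positivity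
      nlinarith
    nlinarith
  · have : cnt n m (v + 1) = 0 := by unfold cnt; rw [if_neg (by omega)]
    rw [this]; positivity

lemma cnt_add_le {n m : ℕ} (hmn : m ≤ n) (hn : 0 < n) (v j : ℕ) :
    cnt n m (v + j) ≤ (m / n : ℝ) ^ j * cnt n m v := by
  induction j with
  | zero => simp
  | succ j ih =>
    calc cnt n m (v + j + 1) ≤ (m / n : ℝ) * cnt n m (v + j) := cnt_succ_le hmn hn _
      _ ≤ (m / n : ℝ) * ((m / n : ℝ) ^ j * cnt n m v) := by gcongr
      _ = _ := by ring

lemma cnt_lower {n m d : ℕ} (hmn : m ≤ n) (hn : 0 < n) (hd : 2 * d ≤ m) :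
    ∀ v ≤ d, (m / (2 * n) : ℝ) ^ v * cnt n m 0 ≤ cnt n m v := by
  intro v
  induction v with
  | zero => intro _; simp
  | succ v ih =>
    intro hv
    have hmn' : (m : ℝ) ≤ n := by exact_mod_cast hmn
    have hn' : (0 : ℝ) < n := by exact_mod_cast hn
    have h2 : 2 * ((v : ℝ) + 1) ≤ m := by exact_mod_cast (by omega : 2 * (v + 1) ≤ m)
    have hvn : (0 : ℝ) < n - v := by
      have : (0:ℝ) ≤ v := by positivity
      linarith
    have h := cnt_succ_mul hmn (by omega : v ≤ m)
    have h0 := cnt_nonneg n m v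
    rw [show cnt n m (v + 1) = cnt n m v * ((m : ℝ) - v) / (n - v) by field_simp; exact h]
    calc (m / (2 * n) : ℝ) ^ (v + 1) * cnt n m 0
        = (m / (2 * n) : ℝ) * ((m / (2 * n) : ℝ) ^ v * cnt n m 0) := by ring
      _ ≤ (m / (2 * n) : ℝ) * cnt n m v := by gcongr; exact ih (by omega)
      _ ≤ _ := by
        rw [div_mul_eq_mul_div, div_le_div_iff₀ (by positivity) hvn]
        have : (m : ℝ) * (n - v) ≤ ((m : ℝ) - v) * (2 * n) := by
          have : (0:ℝ) ≤ v := by positivity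
          nlinarith
        nlinarith

/-- If the boxes inside `G` have a cover `𝒢` of cost at most `p |G| / 2`, then `ex(m)` is at least a
constant times `|G| (m / n) ^ d`. In a random `m`-set of vertices, the expected number of members of
`𝒢` is at most half the expected number of edges of `G`, by `span_of_subset_box` and `hpm`; deleting
one edge from each such member leaves a box-free hypergraph. -/
theorem no_cheap_cover {d n m : ℕ} (hn : 0 < n) (hmn : m ≤ n) (hdm : 2 * d ≤ m)
    {G : Finset (Finset (Fin n))} (hG : ∀ e ∈ G, e.card = d)
    {𝒢 : Finset (Finset (Finset (Fin n)))}
    (h𝒢 : ∀ T ∈ 𝒢, T.Nonempty ∧ ∃ g : Fin d × Bool → Fin n, Function.Injective g ∧ T ⊆ box g)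
    (hcov : ∀ g : Fin d × Bool → Fin n, Function.Injective g → box g ⊆ G → ∃ T ∈ 𝒢, T ⊆ box g)
    {p : ℝ} (hp : 0 < p) (hp1 : p ≤ 1)
    (hpm : ∀ j ≤ d, (m / n : ℝ) ^ j * p ≤ p ^ (2 ^ j))
    (hcost : ∑ T ∈ 𝒢, p ^ T.card ≤ p * (G.card / 2)) :
    (G.card : ℝ) / 2 * (m / (2 * n)) ^ d ≤ exBox d m := by
  classical
  set 𝓡 := powersetCard m (univ : Finset (Fin n)) with h𝓡
  have hx1 : (m / n : ℝ) ≤ 1 := by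
    rw [div_le_one (by exact_mod_cast hn)]; exact_mod_cast hmn
  -- Deleting one edge from each member of the cover inside `R` destroys all boxes in `R`.
  have hR : ∀ R ∈ 𝓡, ((G.filter (· ⊆ R)).card : ℝ) ≤
      exBox d m + (𝒢.filter fun T => T.sup id ⊆ R).card := by
    intro R hR
    choose! c hc using fun T hT => (h𝒢 T hT).1
    set Del := (𝒢.filter fun T => T.sup id ⊆ R).image c with hDel
    have hle : ((G.filter (· ⊆ R)) \ Del).card ≤ exBox d m := by
      refine le_exBox (R := R) (mem_powersetCard.1 hR).2 ?_ ?_ ?_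
      · intro e he; exact (mem_filter.1 (mem_sdiff.1 he).1).2
      · intro e he; exact hG e (mem_filter.1 (mem_sdiff.1 he).1).1
      · rintro ⟨g, hg, hbox⟩
        obtain ⟨T, hT, hTg⟩ := hcov g hg fun e he => (mem_filter.1 (mem_sdiff.1 (hbox he)).1).1
        have hTR : T.sup id ⊆ R := Finset.sup_le fun e he =>
          (mem_filter.1 (mem_sdiff.1 (hbox (hTg he))).1).2
        exact (mem_sdiff.1 (hbox (hTg (hc T hT)))).2
          (mem_image.2 ⟨T, mem_filter.2 ⟨hT, hTR⟩, rfl⟩)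
    have h1 : (G.filter (· ⊆ R)).card ≤ ((G.filter (· ⊆ R)) \ Del).card + Del.card := by
      have := card_le_card (subset_union_left (s₁ := G.filter (· ⊆ R)) (s₂ := Del))
      rw [← sdiff_union_self_eq_union] at this
      exact this.trans (card_union_le _ _)
    have h2 : Del.card ≤ (𝒢.filter fun T => T.sup id ⊆ R).card := card_image_le
    exact_mod_cast (by omega)
  have hsum := sum_le_sum hR
  have e1 : ∑ R ∈ 𝓡, ((G.filter (· ⊆ R)).card : ℝ) = G.card * cnt n m d := by
    have : ∀ R : Finset (Fin n), ((G.filter (· ⊆ R)).card : ℝ) = ∑ e ∈ G, if e ⊆ R then 1 else 0 :=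
      fun R => by simp
    simp_rw [this]
    rw [sum_comm]
    calc _ = ∑ e ∈ G, cnt n m d := sum_congr rfl fun e he => by
          rw [← hG e he, ← card_superset]; simp [h𝓡]
      _ = _ := by simp
  have e2 : ∑ R ∈ 𝓡, ((𝒢.filter fun T => T.sup id ⊆ R).card : ℝ) =
      ∑ T ∈ 𝒢, cnt n m (T.sup id).card := by
    have : ∀ R : Finset (Fin n), ((𝒢.filter fun T => T.sup id ⊆ R).card : ℝ) =
        ∑ T ∈ 𝒢, if T.sup id ⊆ R then 1 else 0 := fun R => by simp
    simp_rw [this]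
    rw [sum_comm]
    exact sum_congr rfl fun T _ => by rw [← card_superset]; simp [h𝓡]
  have e3 : (𝓡.card : ℝ) = cnt n m 0 := by
    simp [h𝓡, cnt]
  rw [sum_add_distrib, sum_const, nsmul_eq_mul, e1, e2, e3] at hsum
  have hcd := cnt_nonneg n m d
  have hT : ∑ T ∈ 𝒢, cnt n m (T.sup id).card ≤ G.card / 2 * cnt n m d := by
    have h1 : ∀ T ∈ 𝒢, p * cnt n m (T.sup id).card ≤ p ^ T.card * cnt n m d := by
      intro T hT
      obtain ⟨hne, g, hg, hTg⟩ := h𝒢 T hT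
      obtain ⟨j, hj, hdj, hTj⟩ := span_of_subset_box hg hne hTg
      obtain ⟨i, hi⟩ := Nat.exists_eq_add_of_le hdj
      rw [hi]
      calc p * cnt n m (d + j + i) ≤ p * ((m / n : ℝ) ^ (j + i) * cnt n m d) := by
            gcongr; rw [add_assoc]; exact cnt_add_le hmn hn _ _
        _ ≤ p * ((m / n : ℝ) ^ j * cnt n m d) := by
            gcongr p * (?_ * _)
            exact pow_le_pow_of_le_one (by positivity) hx1 (by omega)
        _ = (m / n : ℝ) ^ j * p * cnt n m d := by ring
        _ ≤ p ^ T.card * cnt n m d := by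
            gcongr
            exact (hpm j hj).trans (pow_le_pow_of_le_one hp.le hp1 hTj)
    have h2 := sum_le_sum h1
    rw [← mul_sum, ← sum_mul] at h2
    have h3 : (∑ T ∈ 𝒢, p ^ T.card) * cnt n m d ≤ p * (G.card / 2) * cnt n m d := by gcongr
    rw [mul_assoc] at h3
    exact le_of_mul_le_mul_left (h2.trans h3) hp
  have hlow := cnt_lower hmn hn hdm d le_rfl
  have hpos : 0 < cnt n m 0 := by
    simp only [cnt, zero_le, if_true, Nat.sub_zero]
    exact_mod_cast Nat.choose_pos hmn
  have hfin : cnt n m 0 * ((G.card : ℝ) / 2 * (m / (2 * n)) ^ d) ≤ cnt n m 0 * exBox d m := by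
    have : (G.card : ℝ) / 2 * ((m / (2 * n) : ℝ) ^ d * cnt n m 0) ≤ G.card / 2 * cnt n m d := by
      gcongr
    linarith
  exact le_of_mul_le_mul_left hfin hpos

end Sampling

/-! ### Random multilinear forms -/

section Tensor
set_option linter.unusedSectionVars false
variable {F : Type} [Field F] [Fintype F] [DecidableEq F] {d s : ℕ}

/-- The `d`-linear form on `(F ^ s) ^ d` with coefficient tensor `c`. -/
def form (c : (Fin d → Fin s) → F) (v : Fin d → Fin s → F) : F :=
  ∑ J, c J * ∏ i, v i (J i)

variable {κ : Type} [Fintype κ] [DecidableEq κ]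

lemma form_expand (c : (Fin d → Fin s) → F) (l : Fin d → κ → F) (u : Fin d → κ → Fin s → F) :
    form c (fun i j => ∑ k, l i k * u i k j) =
      ∑ σ : Fin d → κ, (∏ i, l i (σ i)) * form c (fun i => u i (σ i)) := by
  unfold form
  simp_rw [Fintype.prod_sum, mul_sum]
  rw [sum_comm]
  refine sum_congr rfl fun σ _ => sum_congr rfl fun J _ => ?_
  rw [prod_mul_distrib]; ring

/-- If the form is `1` at all vertices of a box, it is determined by multilinearity on the whole
span; in particular it is `1` on the affine span (all coefficient sums equal to `1`). -/
lemma form_affine {c : (Fin d → Fin s) → F} {u : Fin d → κ → Fin s → F}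
    (h : ∀ σ : Fin d → κ, form c (fun i => u i (σ i)) = 1) (l : Fin d → κ → F) :
    form c (fun i j => ∑ k, l i k * u i k j) = ∏ i, ∑ k, l i k := by
  rw [form_expand, Fintype.prod_sum]
  exact sum_congr rfl fun σ _ => by rw [h, mul_one]

lemma exists_dual {u : κ → Fin s → F} (hu : LinearIndependent F u) :
    ∃ φ : κ → Fin s → F, ∀ k k', ∑ j, φ k j * u k' j = if k = k' then 1 else 0 := by
  obtain ⟨g, hg⟩ := (Fintype.linearCombination F u).exists_leftInverse_of_injective
    (LinearMap.ker_eq_bot.2 (hu.fintypeLinearCombination_injective))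
  refine ⟨fun k j => g (Pi.single j 1) k, fun k k' => ?_⟩
  have h1 : g (u k') = Pi.single k' 1 := by
    have := LinearMap.congr_fun hg (Pi.single k' 1)
    simpa using this
  have h2 := LinearMap.pi_apply_eq_sum_univ g (u k')
  rw [h1] at h2
  have h3 := congrFun h2 k
  simp only [Pi.single_apply, Finset.sum_apply, Pi.smul_apply, smul_eq_mul] at h3
  rw [h3]
  refine sum_congr rfl fun j _ => ?_
  have h4 : (Pi.single j 1 : Fin s → F) = fun i => if j = i then 1 else 0 := by
    funext i
    simp [Pi.single_apply, eq_comm]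
  rw [mul_comm]
  beta_reduce
  rw [h4]

/-- Equidistribution: when each of the `d` families is linearly independent, the values of a random
form at the `|κ| ^ d` vertices are independent and uniform, so all equal `1` with probability
`q ^ (-|κ| ^ d)`. -/
lemma card_form_fiber {u : Fin d → κ → Fin s → F} (hu : ∀ i, LinearIndependent F (u i)) :
    (univ.filter fun c : (Fin d → Fin s) → F =>
      ∀ σ : Fin d → κ, form c (fun i => u i (σ i)) = 1).card *
      Fintype.card F ^ (Fintype.card κ ^ d) = Fintype.card F ^ (s ^ d) := by
  classical
  choose φ hφ using fun i => exists_dual (hu i)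
  let f : ((Fin d → Fin s) → F) →+ ((Fin d → κ) → F) :=
    { toFun := fun c σ => form c (fun i => u i (σ i))
      map_zero' := by funext σ; simp [form]
      map_add' := fun c c' => by funext σ; simp [form, add_mul, sum_add_distrib] }
  have hsurj : Function.Surjective f := by
    intro y
    refine ⟨fun J => ∑ σ : Fin d → κ, y σ * ∏ i, φ i (σ i) (J i), ?_⟩
    funext τ
    change form _ _ = _
    unfold form
    simp_rw [sum_mul]
    rw [sum_comm]
    have : ∀ σ : Fin d → κ, ∑ J : Fin d → Fin s,
        y σ * (∏ i, φ i (σ i) (J i)) * ∏ i, u i (τ i) (J i) = if σ = τ then y σ else 0 := by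
      intro σ
      have h1 : ∑ J : Fin d → Fin s, (∏ i, φ i (σ i) (J i)) * ∏ i, u i (τ i) (J i) =
          ∏ i, ∑ j, φ i (σ i) j * u i (τ i) j := by
        rw [Fintype.prod_sum]
        exact sum_congr rfl fun J _ => prod_mul_distrib.symm
      simp_rw [mul_assoc]
      rw [← mul_sum, h1]
      simp_rw [hφ]
      by_cases h : σ = τ
      · subst h; simp
      · obtain ⟨i, hi⟩ := Function.ne_iff.1 h
        rw [prod_eq_zero (mem_univ i) (by rw [if_neg hi]), mul_zero, if_neg h]
    simp_rw [this]
    simp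
  have hfib : ∀ y : (Fin d → κ) → F, (univ.filter fun c => f c = y).card =
      (univ.filter fun c => f c = fun _ => 1).card := fun y =>
    AddMonoidHom.card_fiber_eq_of_mem_range f (hsurj _) (hsurj _)
  have htot := card_eq_sum_card_fiberwise (s := (univ : Finset ((Fin d → Fin s) → F)))
    (t := univ) (f := f) (fun _ _ => by simp)
  simp_rw [hfib] at htot
  simp only [sum_const, card_univ, Fintype.card_fun, Fintype.card_fin, smul_eq_mul] at htot
  rw [htot, mul_comm]
  congr 2
  ext c
  simp only [mem_filter, mem_univ, true_and]
  exact ⟨fun h => funext h, fun h σ => congrFun h σ⟩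

/-- The vectors `b` together with `v` form a box on which the form is identically `1`. -/
def Spans (c : (Fin d → Fin s) → F) (v b : Fin d → Fin s → F) : Prop :=
  (∀ i, b i ≠ v i) ∧
    ∀ σ : Fin d → Bool, form c (fun i => (fun β : Bool => if β then b i else v i) (σ i)) = 1

/-- By `form_affine`, a vanishing combination of `b i₀` and `v i₀` has coefficient sum `0`, so it is
a multiple of `b i₀ - v i₀ ≠ 0`. -/
lemma Spans.linearIndependent {c : (Fin d → Fin s) → F} {v b : Fin d → Fin s → F}
    (h : Spans c v b) (i₀ : Fin d) :
    LinearIndependent F (fun β : Bool => if β then b i₀ else v i₀) := by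
  rw [Fintype.linearIndependent_iff]
  intro g hg
  have key := form_affine (κ := Bool) (u := fun i β => if β then b i else v i) h.2
    (fun i => if i = i₀ then g else fun β => if β then 0 else 1)
  have hz : form c (fun i j => ∑ k : Bool, (if i = i₀ then g else fun β => if β then 0 else 1) k *
      (if k then b i else v i) j) = 0 := by
    unfold form
    refine sum_eq_zero fun J _ => ?_
    rw [prod_eq_zero (mem_univ i₀), mul_zero]
    have := congrFun hg (J i₀)
    simpa using this
  rw [hz, prod_eq_single i₀] at key
  · simp only [if_true, Fintype.sum_bool] at key
    simp only [Fintype.sum_bool, if_true] at hg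
    have hgt : g true = - g false := by linear_combination -key
    have hff : g false = 0 := by
      by_contra hne
      refine h.1 i₀ ?_
      rw [hgt] at hg
      have : g false • (v i₀ - b i₀) = 0 := by
        rw [smul_sub]; simpa [sub_eq_neg_add] using hg
      rcases smul_eq_zero.1 this with h' | h'
      · exact absurd h' hne
      · exact (sub_eq_zero.1 h').symm
    intro β
    cases β
    · exact hff
    · rw [hgt, hff, neg_zero]
  · intro i _ hi
    simp [hi]
  · simp

/-- Moving each `b i` along the line through `v i` and `b i` gives another box through `v`. -/
lemma Spans.scale {c : (Fin d → Fin s) → F} {v b : Fin d → Fin s → F}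
    (h : Spans c v b) {t : Fin d → F} (ht : ∀ i, t i ≠ 0) :
    Spans c v (fun i => v i + t i • (b i - v i)) := by
  constructor
  · intro i hi
    rw [add_eq_left, smul_eq_zero] at hi
    rcases hi with h' | h'
    · exact ht i h'
    · exact h.1 i (sub_eq_zero.1 h')
  · intro σ
    have key := form_affine (κ := Bool) (u := fun i β => if β then b i else v i) h.2
      (fun i β => if σ i then (if β then t i else 1 - t i) else (if β then 0 else 1))
    rw [prod_eq_one] at key
    · rw [← key]
      congr 1
      funext i j
      cases σ i <;> simp
      ring
    · intro i _
      cases σ i <;> simp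

open Classical in
lemma card_spans_lower {c : (Fin d → Fin s) → F} {v b : Fin d → Fin s → F} (h : Spans c v b) :
    (Fintype.card F - 1) ^ d ≤ (univ.filter fun b' => Spans c v b').card := by
  have h1 : (Fintype.piFinset fun _ : Fin d => (univ.erase (0 : F))).card =
      (Fintype.card F - 1) ^ d := by
    rw [Fintype.card_piFinset]; simp [card_erase_of_mem, card_univ]
  rw [← h1]
  refine card_le_card_of_injOn (fun t i => v i + t i • (b i - v i)) ?_ ?_
  · intro t ht
    simp only [Fintype.coe_piFinset, Set.mem_pi, mem_coe, mem_erase, mem_univ, and_true] at ht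
    simpa using h.scale fun i => ht i trivial
  · intro t _ t' _ hh
    funext i
    have h2 := congrFun hh i
    simp only [add_right_inj] at h2
    exact smul_left_injective F (sub_ne_zero.2 (h.1 i)) h2

/-- The tuples where the form is `1` and that lie in no box of such tuples. -/
noncomputable def good (c : (Fin d → Fin s) → F) : Finset (Fin d → Fin s → F) :=
  open Classical in univ.filter fun v => form c v = 1 ∧ ¬ ∃ b, Spans c v b

/-- The tuple `v` as an edge of the `d`-partite hypergraph with `d` disjoint copies of `F ^ s` as
parts. -/
def graphEdge (v : Fin d → Fin s → F) : Finset (Fin d × (Fin s → F)) :=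
  univ.image fun i => (i, v i)

lemma mem_graphEdge {v : Fin d → Fin s → F} {x : Fin d × (Fin s → F)} :
    x ∈ graphEdge v ↔ v x.1 = x.2 := by
  unfold graphEdge
  simp only [mem_image, mem_univ, true_and]
  constructor
  · rintro ⟨i, rfl⟩; rfl
  · intro h; exact ⟨x.1, by rw [h]⟩

lemma graphEdge_injective : Function.Injective (graphEdge : (Fin d → Fin s → F) → _) := by
  intro v v' h
  funext i
  have : (i, v' i) ∈ graphEdge v := by rw [h]; exact mem_graphEdge.2 rfl
  exact mem_graphEdge.1 this

lemma card_graphEdge (v : Fin d → Fin s → F) : (graphEdge v).card = d := by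
  unfold graphEdge
  rw [card_image_of_injective _ fun i j h => (Prod.mk.inj h).1]
  simp

lemma not_boxIn_good (c : (Fin d → Fin s) → F) : ¬ BoxIn d ((good c).image graphEdge) := by
  rintro ⟨g, hg, hbox⟩
  have hE : ∀ ε, ∃ v ∈ good c, graphEdge v = boxEdge g ε := fun ε =>
    mem_image.1 (hbox (mem_image.2 ⟨ε, mem_univ _, rfl⟩))
  have hval : ∀ ε v, graphEdge v = boxEdge g ε → ∀ j, v (g (j, ε j)).1 = (g (j, ε j)).2 := by
    intro ε v hv j
    exact mem_graphEdge.1 (by rw [hv]; exact (mem_boxEdge hg).2 rfl)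
  have hinj : ∀ ε : Fin d → Bool, Function.Injective fun j => (g (j, ε j)).1 := by
    intro ε i j hij
    obtain ⟨v, -, hv⟩ := hE ε
    have : g (i, ε i) = g (j, ε j) := by
      refine Prod.ext hij ?_
      rw [← hval ε v hv i, ← hval ε v hv j]
      exact congrArg v hij
    exact (Prod.mk.inj (hg this)).1
  -- Swapping one vertex of a transversal cannot change its part.
  have hpart : ∀ j β, (g (j, β)).1 = (g (j, false)).1 := by
    intro j β
    obtain ⟨i, hi⟩ := (Finite.injective_iff_surjective.1 (hinj fun _ => false)) (g (j, β)).1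
    by_cases hij : i = j
    · rw [← hi, hij]
    · have h1 := hinj (Function.update (fun _ => false) j β) (a₁ := i) (a₂ := j) (by
        simp only [Function.update_self, Function.update_of_ne hij]; exact hi)
      exact absurd h1 hij
  let ρ : Fin d ≃ Fin d := Equiv.ofBijective (fun j => (g (j, false)).1)
    (Finite.injective_iff_bijective.1 (hinj fun _ => false))
  have hρ : ∀ i β, (g (ρ.symm i, β)).1 = i := fun i β => by
    rw [hpart]; exact ρ.apply_symm_apply i
  let z : Fin d → Bool → Fin s → F := fun i β => (g (ρ.symm i, β)).2
  have hz : ∀ σ : Fin d → Bool, (fun i => z i (σ i)) ∈ good c := by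
    intro σ
    obtain ⟨v, hvg, hv⟩ := hE (fun j => σ (ρ j))
    convert hvg using 1
    funext i
    have := hval _ v hv (ρ.symm i)
    simp only [Equiv.apply_symm_apply, hρ] at this
    exact this.symm
  have hform : ∀ σ : Fin d → Bool, form c (fun i => z i (σ i)) = 1 := fun σ => by
    have := hz σ
    simp only [good, mem_filter] at this
    exact this.2.1
  have h0 := hz fun _ => false
  simp only [good, mem_filter, mem_univ, true_and] at h0
  refine h0.2 ⟨fun i => z i true, ?_, ?_⟩
  · intro i hi
    have : g (ρ.symm i, true) = g (ρ.symm i, false) :=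
      Prod.ext (by rw [hρ, hρ]) hi
    simpa using hg this
  · intro σ
    rw [← hform σ]
    congr 1
    funext i
    cases σ i <;> simp

lemma good_card_le_exBox (c : (Fin d → Fin s) → F) :
    (good c).card ≤ exBox d (d * Fintype.card F ^ s) := by
  rw [← card_image_of_injective (good c) graphEdge_injective]
  refine le_exBox (R := univ) (by simp [card_univ]) (fun _ _ => subset_univ _) ?_ (not_boxIn_good c)
  intro e he
  obtain ⟨v, -, rfl⟩ := mem_image.1 he
  exact card_graphEdge v

/-- A random form is `1` at each tuple of nonzero vectors with probability `1 / q`. -/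
lemma sum_edges_lower :
    (Fintype.card F ^ s - 1) ^ d * Fintype.card F ^ (s ^ d) ≤ Fintype.card F *
      ∑ c : (Fin d → Fin s) → F, (univ.filter fun v => form c v = 1).card := by
  have h1 : ∑ c : (Fin d → Fin s) → F, (univ.filter fun v => form c v = 1).card =
      ∑ v : Fin d → Fin s → F, (univ.filter fun c => form c v = 1).card := by
    simp_rw [card_filter]; exact sum_comm
  have h2 : ∀ v ∈ Fintype.piFinset fun _ : Fin d => (univ.erase (0 : Fin s → F)),
      Fintype.card F * (univ.filter fun c => form c v = 1).card = Fintype.card F ^ (s ^ d) := by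
    intro v hv
    simp only [Fintype.mem_piFinset, mem_erase, mem_univ, and_true] at hv
    have := card_form_fiber (κ := Unit) (u := fun i _ => v i) fun i =>
      LinearIndependent.of_subsingleton () (hv i)
    rw [← this, mul_comm]
    simp
  rw [h1, mul_sum]
  calc _ = ∑ v ∈ Fintype.piFinset fun _ : Fin d => (univ.erase (0 : Fin s → F)),
        Fintype.card F ^ (s ^ d) := by
        rw [sum_const, Fintype.card_piFinset]; simp [card_erase_of_mem, card_univ]
    _ = ∑ v ∈ Fintype.piFinset fun _ : Fin d => (univ.erase (0 : Fin s → F)),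
        Fintype.card F * (univ.filter fun c => form c v = 1).card :=
        sum_congr rfl fun v hv => (h2 v hv).symm
    _ ≤ _ := sum_le_sum_of_subset (subset_univ _)

open Classical in
/-- First moment bound for tuples lying in a box: each box occurs with probability `q ^ (-2 ^ d)`,
and a tuple in one box lies in at least `(q - 1) ^ d` of them. The last fact gains a factor of about
`q ^ d` over the naive union bound. -/
lemma sum_bad_upper :
    (∑ c : (Fin d → Fin s) → F, (univ.filter fun v => ∃ b, Spans c v b).card) *
      (Fintype.card F - 1) ^ d * Fintype.card F ^ (2 ^ d) ≤
      Fintype.card F ^ (2 * (s * d)) * Fintype.card F ^ (s ^ d) := by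
  have h1 : (∑ c : (Fin d → Fin s) → F, (univ.filter fun v => ∃ b, Spans c v b).card) *
      (Fintype.card F - 1) ^ d ≤ ∑ c : (Fin d → Fin s) → F, ∑ v : Fin d → Fin s → F,
        (univ.filter fun b => Spans c v b).card := by
    rw [sum_mul]
    refine sum_le_sum fun c _ => ?_
    rw [← smul_eq_mul, ← sum_const]
    refine (sum_le_sum (g := fun v => (univ.filter fun b => Spans c v b).card) ?_).trans
      (sum_le_sum_of_subset (subset_univ _))
    intro v hv
    obtain ⟨b, hb⟩ := (mem_filter.1 hv).2
    exact card_spans_lower hb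
  have h2 : ∑ c : (Fin d → Fin s) → F, ∑ v : Fin d → Fin s → F,
        (univ.filter fun b => Spans c v b).card =
      ∑ v : Fin d → Fin s → F, ∑ b : Fin d → Fin s → F,
        (univ.filter fun c => Spans c v b).card := by
    simp_rw [card_filter]
    rw [sum_comm]
    exact sum_congr rfl fun v _ => sum_comm
  have h3 : ∀ v b : Fin d → Fin s → F,
      (univ.filter fun c => Spans c v b).card * Fintype.card F ^ (2 ^ d) ≤
        Fintype.card F ^ (s ^ d) := by
    intro v b
    by_cases hne : ∃ c, Spans (F := F) c v b
    · obtain ⟨c, hc⟩ := hne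
      have := card_form_fiber (κ := Bool) (u := fun i β => if β then b i else v i)
        hc.linearIndependent
      rw [← this, Fintype.card_bool]
      gcongr
      intro h
      exact h.2
    · rw [filter_eq_empty_iff.2 fun c _ h => hne ⟨c, h⟩]
      simp
  calc _ ≤ (∑ v : Fin d → Fin s → F, ∑ b : Fin d → Fin s → F,
        (univ.filter fun c => Spans c v b).card) * Fintype.card F ^ (2 ^ d) := by
        rw [← h2]; gcongr
    _ ≤ ∑ v : Fin d → Fin s → F, ∑ b : Fin d → Fin s → F, Fintype.card F ^ (s ^ d) := by
        simp_rw [sum_mul]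
        exact sum_le_sum fun v _ => sum_le_sum fun b _ => h3 v b
    _ = _ := by
        simp only [sum_const, card_univ, Fintype.card_fun, Fintype.card_fin, smul_eq_mul]
        rw [← mul_assoc, ← pow_mul, ← pow_add, two_mul]

set_option maxHeartbeats 1000000 in
/-- The lower bound `ex(d q ^ s) ≥ 2 ^ (-d - 1) q ^ (s d - 1)`, i.e. `ex(n) ≥ c n ^ (d - 1 / s)` for
`n = d q ^ s`: on average over forms, at most half of the edges lie in a box. -/
lemma pow_le_exBox (hs : s * d + 2 ≤ 2 ^ d + d) (hs1 : 1 ≤ s)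
    (hq : 2 ^ (2 * d + 1) ≤ Fintype.card F) :
    (Fintype.card F : ℝ) ^ (s * d) ≤
      2 ^ (d + 1) * (Fintype.card F * exBox d (d * Fintype.card F ^ s)) := by
  classical
  set q := Fintype.card F with hqdef
  set X : ℝ := (exBox d (d * q ^ s) : ℝ) with hX
  have hq2 : 2 ≤ q := le_trans (by
    calc 2 = 2 ^ 1 := rfl
      _ ≤ 2 ^ (2 * d + 1) := Nat.pow_le_pow_right (by norm_num) (by omega)) hq
  have hqR : (2 : ℝ) ≤ q := by exact_mod_cast hq2
  have hqR' : (2 : ℝ) ^ (2 * d + 1) ≤ q := by exact_mod_cast hq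
  have hq0 : (0 : ℝ) < q := by linarith
  set e : ℝ := ((∑ c : (Fin d → Fin s) → F, (univ.filter fun v => form c v = 1).card : ℕ) : ℝ)
    with he
  set b : ℝ := ((∑ c : (Fin d → Fin s) → F, (univ.filter fun v => ∃ b, Spans c v b).card : ℕ) : ℝ)
    with hb
  set N : ℝ := (q : ℝ) ^ (s ^ d) with hN
  have hN0 : 0 < N := by positivity
  have hqs : (2 : ℝ) ≤ (q : ℝ) ^ s :=
    hqR.trans (by simpa using pow_le_pow_right₀ (by linarith : (1 : ℝ) ≤ q) hs1)
  have h1 : ((q : ℝ) ^ s - 1) ^ d * N ≤ q * e := by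
    have := sum_edges_lower (F := F) (d := d) (s := s)
    have h' : (((q ^ s - 1) ^ d * q ^ (s ^ d) : ℕ) : ℝ) ≤ q * e := by
      rw [he]; exact_mod_cast this
    rw [Nat.cast_mul, Nat.cast_pow, Nat.cast_sub (Nat.one_le_pow _ _ (by omega))] at h'
    simpa using h'
  have h2 : b * ((q : ℝ) - 1) ^ d * (q : ℝ) ^ (2 ^ d) ≤ (q : ℝ) ^ (2 * (s * d)) * N := by
    have := sum_bad_upper (F := F) (d := d) (s := s)
    have h' : b * ((q - 1 : ℕ) : ℝ) ^ d * (q : ℝ) ^ (2 ^ d) ≤ (q : ℝ) ^ (2 * (s * d)) * N := by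
      rw [hb, hN]; exact_mod_cast this
    rwa [Nat.cast_sub (by omega), Nat.cast_one] at h'
  have h3 : e ≤ N * X + b := by
    have hc : ∀ c : (Fin d → Fin s) → F, (univ.filter fun v => form c v = 1).card ≤
        exBox d (d * q ^ s) + (univ.filter fun v => ∃ b, Spans c v b).card := by
      intro c
      refine le_trans ?_ (Nat.add_le_add_right (good_card_le_exBox c) _)
      refine (card_le_card ?_).trans (card_union_le _ _)
      intro v hv
      simp only [mem_filter, mem_univ, true_and, mem_union, good] at hv ⊢
      tauto
    have := sum_le_sum fun c (_ : c ∈ (univ : Finset ((Fin d → Fin s) → F))) => hc c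
    rw [sum_add_distrib, sum_const, card_univ, Fintype.card_fun, Fintype.card_fun,
      Fintype.card_fin, Fintype.card_fin, smul_eq_mul] at this
    rw [he, hN, hX, hb]
    exact_mod_cast this
  have hb0 : 0 ≤ b := Nat.cast_nonneg _
  clear_value e b N X q
  have h4 : (q : ℝ) ^ (s * d) / 2 ^ d ≤ ((q : ℝ) ^ s - 1) ^ d := by
    rw [pow_mul, ← div_pow]
    gcongr
    linarith
  have h5 : (q : ℝ) ^ d / 2 ^ d ≤ ((q : ℝ) - 1) ^ d := by
    rw [← div_pow]
    gcongr
    linarith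
  have h6 : b * (q : ℝ) ^ 2 ≤ 2 ^ d * (q : ℝ) ^ (s * d) * N := by
    have h7 : b * (q : ℝ) ^ (s * d + 2) ≤ 2 ^ d * ((q : ℝ) ^ (2 * (s * d)) * N) := by
      calc b * (q : ℝ) ^ (s * d + 2) ≤ b * (q : ℝ) ^ (2 ^ d + d) := by
            gcongr; linarith
        _ = 2 ^ d * (b * ((q : ℝ) ^ d / 2 ^ d) * (q : ℝ) ^ (2 ^ d)) := by
            rw [pow_add]; field_simp
        _ ≤ 2 ^ d * (b * ((q : ℝ) - 1) ^ d * (q : ℝ) ^ (2 ^ d)) := by gcongr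
        _ ≤ _ := by gcongr
    have h8 : 0 < (q : ℝ) ^ (s * d) := by positivity
    refine le_of_mul_le_mul_left ?_ h8
    calc _ = b * (q : ℝ) ^ (s * d + 2) := by rw [pow_add]; ring
      _ ≤ _ := h7
      _ = _ := by rw [two_mul, pow_add]; ring
  have h9 : q * b ≤ (q : ℝ) ^ (s * d) / 2 ^ (d + 1) * N := by
    refine le_of_mul_le_mul_left ?_ hq0
    calc (q : ℝ) * (q * b) = b * (q : ℝ) ^ 2 := by ring
      _ ≤ 2 ^ d * (q : ℝ) ^ (s * d) * N := h6
      _ = 2 ^ (2 * d + 1) * ((q : ℝ) ^ (s * d) / 2 ^ (d + 1) * N) := by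
          rw [show 2 * d + 1 = d + (d + 1) by ring, pow_add (2 : ℝ) d]; field_simp
      _ ≤ _ := by gcongr
  have h10 : (q : ℝ) ^ (s * d) / 2 ^ d * N ≤ (q * X + (q : ℝ) ^ (s * d) / 2 ^ (d + 1)) * N := by
    calc _ ≤ ((q : ℝ) ^ s - 1) ^ d * N := by gcongr
      _ ≤ q * e := h1
      _ ≤ q * (N * X + b) := by gcongr
      _ = q * X * N + q * b := by ring
      _ ≤ q * X * N + (q : ℝ) ^ (s * d) / 2 ^ (d + 1) * N := by gcongr
      _ = _ := by ring
  have h11 := le_of_mul_le_mul_right h10 hN0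
  have h12 : (q : ℝ) ^ (s * d) / 2 ^ d = 2 * ((q : ℝ) ^ (s * d) / 2 ^ (d + 1)) := by
    rw [pow_succ]; ring
  have h13 : (q : ℝ) ^ (s * d) / 2 ^ (d + 1) ≤ q * X := by linarith
  rw [div_le_iff₀ (by positivity)] at h13
  linarith

end Tensor

/-! ### Exponents and records -/

/-- The order of `2` modulo the least prime factor `p` of `d` would divide both `d` and `p - 1`, which
are coprime. -/
lemma not_dvd_two_pow_sub_one {d : ℕ} (hd : 2 ≤ d) : ¬ d ∣ 2 ^ d - 1 := by
  intro h
  have hp : d.minFac.Prime := Nat.minFac_prime (by omega)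
  have := Fact.mk hp
  have h1 : (2 : ZMod d.minFac) ^ d = 1 := by
    have h2 : ((2 ^ d - 1 : ℕ) : ZMod d.minFac) = 0 :=
      (ZMod.natCast_eq_zero_iff _ _).2 ((Nat.minFac_dvd d).trans h)
    rw [Nat.cast_sub Nat.one_le_two_pow] at h2
    push_cast at h2
    exact sub_eq_zero.1 h2
  have h20 : (2 : ZMod d.minFac) ≠ 0 := by
    intro h0
    rw [h0, zero_pow (by omega)] at h1
    exact zero_ne_one h1
  have ho1 := orderOf_dvd_of_pow_eq_one h1
  have ho2 := ZMod.orderOf_dvd_card_sub_one h20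
  have hcop : Nat.Coprime d (d.minFac - 1) := by
    refine Nat.Coprime.symm (Nat.coprime_of_dvd fun k hk hk1 hk2 => ?_)
    have h3 := Nat.minFac_le_of_dvd hk.two_le hk2
    have h4 := Nat.le_of_dvd (by have := hp.two_le; omega) hk1
    have := hp.two_le
    omega
  have h5 : orderOf (2 : ZMod d.minFac) = 1 := Nat.eq_one_of_dvd_coprimes hcop ho1 ho2
  rw [orderOf_eq_one_iff] at h5
  have : (1 : ZMod d.minFac) = 0 := by linear_combination h5
  exact one_ne_zero this

/-- The dimension is `s = ⌈(2 ^ d - 1) / d⌉`. Non-divisibility gives the strict inequality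
`1 / s < d / (2 ^ d - 1)`, expressed by `2 ^ d ≤ s d`. -/
lemma exists_dimension {d : ℕ} (hd : 2 ≤ d) :
    ∃ s : ℕ, 1 ≤ s ∧ s * d + 2 ≤ 2 ^ d + d ∧ 2 ^ d ≤ s * d := by
  have h1 := Nat.div_add_mod (2 ^ d - 1) d
  have h2 : (2 ^ d - 1) % d < d := Nat.mod_lt _ (by omega)
  have h3 : (2 ^ d - 1) % d ≠ 0 := fun h =>
    not_dvd_two_pow_sub_one hd (Nat.dvd_of_mod_eq_zero h)
  have h4 : 1 ≤ 2 ^ d := Nat.one_le_two_pow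
  refine ⟨(2 ^ d - 1) / d + 1, Nat.le_add_left _ _, ?_, ?_⟩ <;> rw [add_mul, mul_comm, one_mul] <;> omega

/-- Convexity of `j ↦ 2 ^ j`: `(2 ^ j - 1) d ≤ j (2 ^ d - 1)`. -/
lemma two_pow_convex {j d : ℕ} (h : j ≤ d) : 2 ^ j * d + j ≤ j * 2 ^ d + d := by
  induction d, h using Nat.le_induction with
  | base => rw [mul_comm]
  | succ d hjd ih =>
    have h1 : 2 ^ j ≤ j * 2 ^ d + 1 := by
      rcases Nat.eq_zero_or_pos j with rfl | hj
      · simp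
      · have : 2 ^ j ≤ 2 ^ d := Nat.pow_le_pow_right (by norm_num) hjd
        exact this.trans ((Nat.le_mul_of_pos_left _ hj).trans (Nat.le_succ _))
    rw [pow_succ]
    nlinarith

/-- A function unbounded above has arbitrarily large points where it attains its running maximum. -/
lemma exists_record (f : ℕ → ℝ) (hf : ∀ K : ℝ, ∃ n, K < f n) (L : ℕ) :
    ∃ n, L < n ∧ 1 ≤ f n ∧ ∀ m ≤ n, f m ≤ f n := by
  classical
  set K : ℝ := 1 + ∑ m ∈ range (L + 1), |f m| with hK
  have hsum : 0 ≤ ∑ m ∈ range (L + 1), |f m| := sum_nonneg fun _ _ => abs_nonneg _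
  refine ⟨Nat.find (hf K), ?_, ?_, ?_⟩
  · by_contra hle
    push Not at hle
    have h1 := Nat.find_spec (hf K)
    have h2 : |f (Nat.find (hf K))| ≤ ∑ m ∈ range (L + 1), |f m| :=
      single_le_sum (f := fun m => |f m|) (fun _ _ => abs_nonneg _) (mem_range.2 (by omega))
    have h3 := le_abs_self (f (Nat.find (hf K)))
    linarith
  · have h1 := Nat.find_spec (hf K)
    linarith
  · intro m hm
    rcases hm.lt_or_eq with h | h
    · exact (not_lt.1 (Nat.find_min (hf K) h)).trans (Nat.find_spec (hf K)).le
    · rw [h]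

/-- `ex(n) / n ^ (d - γ)` is unbounded for every `γ > 1 / s`, by `pow_le_exBox` over prime fields. -/
lemma exBox_unbounded {d s : ℕ} (hd : 2 ≤ d) (hs1 : 1 ≤ s) (hs : s * d + 2 ≤ 2 ^ d + d)
    {γ : ℝ} (hγ : 1 < s * γ) (K : ℝ) :
    ∃ n : ℕ, K < exBox d n / (n : ℝ) ^ ((d : ℝ) - γ) := by
  have hd0 : (0 : ℝ) < d := by exact_mod_cast (by omega : 0 < d)
  set A : ℝ := 2 ^ (d + 1) * (d : ℝ) ^ ((d : ℝ) - γ) with hA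
  have hA0 : 0 < A := by positivity
  have htend := tendsto_rpow_atTop (show 0 < s * γ - 1 by linarith)
  obtain ⟨N₀, hN₀⟩ := Filter.eventually_atTop.1 (htend.eventually_gt_atTop (K * A))
  obtain ⟨q, hq1, hq⟩ := Nat.exists_infinite_primes (max (2 ^ (2 * d + 1)) ⌈N₀⌉₊)
  have := Fact.mk hq
  have hq2 : 2 ^ (2 * d + 1) ≤ q := (le_max_left _ _).trans hq1
  have hq3 : N₀ ≤ q := (Nat.le_ceil _).trans (by exact_mod_cast (le_max_right _ _).trans hq1)
  have hq0 : (0 : ℝ) < q := by exact_mod_cast hq.pos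
  have h1 := pow_le_exBox (F := ZMod q) hs hs1 (by rwa [ZMod.card])
  rw [ZMod.card] at h1
  refine ⟨d * q ^ s, (lt_div_iff₀ ?_).2 ?_⟩
  · have : (0 : ℝ) < ((d * q ^ s : ℕ) : ℝ) := by push_cast; positivity
    positivity
  have h2 := hN₀ q hq3
  have h3 : (((d * q ^ s : ℕ) : ℝ)) ^ ((d : ℝ) - γ) =
      (d : ℝ) ^ ((d : ℝ) - γ) * (q : ℝ) ^ (s * ((d : ℝ) - γ)) := by
    push_cast
    rw [Real.mul_rpow hd0.le (by positivity), ← Real.rpow_natCast, ← Real.rpow_mul hq0.le]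
  have h4 : (q : ℝ) ^ (s * d) = (q : ℝ) ^ (s * γ - 1) * (q * (q : ℝ) ^ (s * ((d : ℝ) - γ))) := by
    have h5 : (q : ℝ) * (q : ℝ) ^ (s * ((d : ℝ) - γ)) = (q : ℝ) ^ (1 + s * ((d : ℝ) - γ)) := by
      rw [Real.rpow_add hq0, Real.rpow_one]
    rw [h5, ← Real.rpow_natCast, ← Real.rpow_add hq0]
    congr 1
    push_cast
    ring
  rw [h3]
  rw [h4] at h1
  have hR : 0 < (q : ℝ) ^ (s * ((d : ℝ) - γ)) := by positivity
  have h5 : K * A * (q * (q : ℝ) ^ (s * ((d : ℝ) - γ))) <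
      2 ^ (d + 1) * (q * exBox d (d * q ^ s)) :=
    lt_of_lt_of_le (by gcongr) h1
  have h6 : (2 ^ (d + 1) * q) * (K * ((d : ℝ) ^ ((d : ℝ) - γ) * (q : ℝ) ^ (s * ((d : ℝ) - γ)))) <
      (2 ^ (d + 1) * q) * exBox d (d * q ^ s) := by
    rw [hA] at h5
    linarith
  exact lt_of_mul_lt_mul_left h6 (by positivity)

/-! ### Supersaturation and one container step at a record -/

/-- At `n`, the ratio `ex(m) / m ^ (d - γ)` is at least `1` and maximal over `0 < m ≤ n`. -/
def Record (d : ℕ) (γ : ℝ) (n : ℕ) : Prop :=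
  0 < n ∧ (n : ℝ) ^ ((d : ℝ) - γ) ≤ exBox d n ∧
    ∀ m, 0 < m → m ≤ n → (exBox d m : ℝ) ≤ exBox d n * ((m : ℝ) / n) ^ ((d : ℝ) - γ)

lemma exists_record_gt {d : ℕ} {γ : ℝ}
    (h : ∀ K : ℝ, ∃ n : ℕ, K < exBox d n / (n : ℝ) ^ ((d : ℝ) - γ)) (L : ℕ) :
    ∃ n, L < n ∧ Record d γ n := by
  obtain ⟨n, hLn, h1, hmax⟩ := exists_record _ h L
  have hn : 0 < n := by omega
  have hn0 : (0 : ℝ) < n := by exact_mod_cast hn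
  have hnp : 0 < (n : ℝ) ^ ((d : ℝ) - γ) := by positivity
  refine ⟨n, hLn, hn, by rwa [one_le_div hnp] at h1, fun m hm hmn => ?_⟩
  have hm0 : (0 : ℝ) < m := by exact_mod_cast hm
  have hmp : 0 < (m : ℝ) ^ ((d : ℝ) - γ) := by positivity
  have h2 := hmax m hmn
  rw [div_le_iff₀ hmp] at h2
  rw [Real.div_rpow hm0.le hn0.le]
  calc _ ≤ _ := h2
    _ = _ := by ring

/-- Balanced supersaturation at a record `n`: a `d`-uniform `G` with `2 ^ (d + 2) t ^ (-γ) ex(n)`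
edges carries a weight on its boxes that is balanced at density `p = (4 d t) ^ θ`, with total at
least a constant times `|G|`. Otherwise `balanced_or_cover` gives a cheap cover, and
`no_cheap_cover` with `m` of order `t n` contradicts the bound on `ex(m)` at a record. The value
`θ = d / (2 ^ d - 1)` makes the hypothesis `hpm` of `no_cheap_cover` hold for all `j ≤ d`, by
`two_pow_convex`. -/
lemma exists_balanced {d n : ℕ} {γ θ t : ℝ} (hd : 2 ≤ d) (hγ : 0 < γ) (hθ0 : 0 < θ)
    (hθ : θ * (2 ^ d - 1) = d) (hrec : Record d γ n) {G : Finset (Finset (Fin n))}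
    (hG : ∀ e ∈ G, e.card = d) (ht0 : 0 < t) (ht1 : 4 * d * t ≤ 1) (htn : 1 ≤ n * t)
    (ht : t ^ γ * G.card = 2 ^ (d + 2) * exBox d n) :
    ∃ w : Finset (Finset (Fin n)) → ℝ, (∀ E, 0 ≤ w E) ∧
      (∀ E, w E ≠ 0 → E ⊆ G ∧ E.card = 2 ^ d ∧ BoxIn d E) ∧
      (∀ T, T.Nonempty → (4 * d * t) ^ θ * deg w T ≤ 2 * ((4 * d * t) ^ θ) ^ T.card) ∧
      ((2 : ℝ) ^ (2 ^ d + 1))⁻¹ * G.card ≤ deg w ∅ := by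
  classical
  obtain ⟨hn, hlow, hmax⟩ := hrec
  have hn0 : (0 : ℝ) < n := by exact_mod_cast hn
  have hd0 : (2 : ℝ) ≤ d := by exact_mod_cast hd
  set z : ℝ := 4 * d * t with hz
  have hz0 : 0 < z := by positivity
  have hp0 : 0 < z ^ θ := by positivity
  have hp1 : z ^ θ ≤ 1 := Real.rpow_le_one hz0.le ht1 hθ0.le
  set 𝓑 : Finset (Finset (Finset (Fin n))) := univ.filter fun E =>
    ∃ g : Fin d × Bool → Fin n, Function.Injective g ∧ box g ⊆ G ∧ E = box g with h𝓑
  have hBmem : ∀ B, B ∈ 𝓑 ↔ ∃ g : Fin d × Bool → Fin n,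
      Function.Injective g ∧ box g ⊆ G ∧ B = box g := by
    intro B; simp [h𝓑]
  have hBcard : ∀ B ∈ 𝓑, B.card = 2 ^ d := by
    intro B hB
    obtain ⟨g, hg, -, rfl⟩ := (hBmem B).1 hB
    exact card_box hg
  rcases balanced_or_cover 𝓑 (2 ^ d) Nat.one_le_two_pow hBcard (z ^ θ)
    (((2 : ℝ) ^ (2 ^ d + 1))⁻¹ * G.card) hp0 hp1 with ⟨w, hw0, hwB, hwT, hwe⟩ | ⟨𝒢, h1, h2, h3⟩
  · refine ⟨w, hw0, fun E hE => ?_, hwT, hwe⟩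
    obtain ⟨g, hg, hgG, rfl⟩ := (hBmem E).1 (hwB E hE)
    exact ⟨hgG, card_box hg, g, hg, Subset.rfl⟩
  exfalso
  set c : ℕ := ⌈n * t⌉₊ with hc
  have hc1 : 1 ≤ c := Nat.one_le_ceil_iff.2 (by linarith)
  have hcl : n * t ≤ c := Nat.le_ceil _
  have hcu : (c : ℝ) ≤ 2 * (n * t) := by
    have := Nat.ceil_lt_add_one (show 0 ≤ n * t by positivity)
    linarith
  set m : ℕ := 2 * d * c with hm
  have hmR : (m : ℝ) = 2 * d * c := by rw [hm]; push_cast; ring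
  have hmz : (m : ℝ) / n ≤ z := by
    rw [div_le_iff₀ hn0, hmR]
    calc 2 * (d : ℝ) * c ≤ 2 * d * (2 * (n * t)) := by gcongr
      _ = z * n := by rw [hz]; ring
  have hmn : m ≤ n := by
    have : (m : ℝ) / n ≤ 1 := hmz.trans ht1
    rw [div_le_one hn0] at this
    exact_mod_cast this
  have hdm : 2 * d ≤ m := Nat.le_mul_of_pos_right _ hc1
  have hm0 : 0 < m := by omega
  have hx0 : (0 : ℝ) < (m : ℝ) / n := div_pos (by exact_mod_cast hm0) hn0
  have htx : t ≤ (m : ℝ) / n := by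
    rw [le_div_iff₀ hn0, hmR]
    have : (c : ℝ) ≤ 2 * d * c := by
      have : (0 : ℝ) ≤ c := by positivity
      nlinarith
    linarith
  have hpm : ∀ j ≤ d, ((m : ℝ) / n) ^ j * z ^ θ ≤ (z ^ θ) ^ 2 ^ j := by
    intro j hj
    calc ((m : ℝ) / n) ^ j * z ^ θ ≤ z ^ j * z ^ θ := by gcongr
      _ = z ^ ((j : ℝ) + θ) := by rw [Real.rpow_add hz0, Real.rpow_natCast]
      _ ≤ z ^ (θ * (2 ^ j : ℕ)) := by
          refine Real.rpow_le_rpow_of_exponent_ge hz0 ht1 ?_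
          have h4 : (2 : ℝ) ^ j * d + j ≤ j * 2 ^ d + d := by exact_mod_cast two_pow_convex hj
          have h5 : (0 : ℝ) < 2 ^ d - 1 := by
            have : (1 : ℝ) < 2 ^ d := one_lt_pow₀ (by norm_num) (by omega)
            linarith
          rw [← hθ] at h4
          push_cast
          refine le_of_mul_le_mul_right ?_ h5
          linarith
      _ = _ := by rw [Real.rpow_mul hz0.le, Real.rpow_natCast]
  have hkey := no_cheap_cover (d := d) (m := m) (G := G) (𝒢 := 𝒢) (p := z ^ θ) hn hmn hdm hG
    (fun T hT => ⟨(h1 T hT).1, by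
      obtain ⟨B, hB, hTB⟩ := (h1 T hT).2
      obtain ⟨g, hg, -, rfl⟩ := (hBmem B).1 hB
      exact ⟨g, hg, hTB⟩⟩)
    (fun g hg hgG => h2 _ ((hBmem _).2 ⟨g, hg, hgG, rfl⟩)) hp0 hp1 hpm (by
      refine h3.trans (le_of_eq ?_)
      rw [pow_succ]
      field_simp)
  have hX0 : (0 : ℝ) < exBox d n := lt_of_lt_of_le (by positivity) hlow
  have h4 := hkey.trans (hmax m hm0 hmn)
  set x : ℝ := (m : ℝ) / n with hx
  have h5 : (m : ℝ) / (2 * n) = x / 2 := by rw [hx]; field_simp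
  rw [h5, div_pow] at h4
  have h6 : x ^ ((d : ℝ) - γ) * x ^ γ = x ^ d := by
    rw [← Real.rpow_add hx0, sub_add_cancel, Real.rpow_natCast]
  have hxd : 0 < x ^ d := by positivity
  -- Multiplying by `x ^ γ` shows `N x ^ γ ≤ 2 ^ (d + 1) ex(n)`, half of the value forced by `ht`.
  have h7 : (G.card : ℝ) * x ^ γ * x ^ d ≤ 2 ^ (d + 1) * exBox d n * x ^ d := by
    have := mul_le_mul_of_nonneg_right h4 (show 0 ≤ 2 ^ (d + 1) * x ^ γ by positivity)
    calc (G.card : ℝ) * x ^ γ * x ^ d = G.card / 2 * (x ^ d / 2 ^ d) * (2 ^ (d + 1) * x ^ γ) := by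
          rw [pow_succ]; field_simp
      _ ≤ _ := this
      _ = 2 ^ (d + 1) * exBox d n * (x ^ ((d : ℝ) - γ) * x ^ γ) := by ring
      _ = _ := by rw [h6]
  have h8 := le_of_mul_le_mul_right h7 hxd
  have h9 : t ^ γ * G.card ≤ G.card * x ^ γ := by
    rw [mul_comm]
    gcongr
  rw [ht, pow_succ] at h9
  have : (0 : ℝ) < 2 ^ (d + 1) * exBox d n := by positivity
  linarith

/-- Cost of one container step for `N = M X` edges at density `p = K M ^ (-1 - 2 η)`. Since
`p N = K M ^ (-2 η) X` and `log (1 / p)` is `O(M ^ η)`, the cost is `exp (O(X M ^ (-η)))`. -/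
lemma cost_le {p M X K η ρ : ℝ} {N r y : ℕ} (hη : 0 < η) (hρ : ρ = 1 + 2 * η) (hM : 1 ≤ M)
    (hK : 1 ≤ K) (hX : 0 < X) (hN : (N : ℝ) = M * X) (hp : p = K * M ^ (-ρ))
    (hpN : 1 ≤ p * N) (hy : y = ⌈p * N⌉₊) :
    ((1 + p) ^ N * p⁻¹ ^ y) ^ r ≤ Real.exp (X * (r * K * (1 + 2 * ρ / η) * M ^ (-η))) := by
  have hM0 : 0 < M := by linarith
  have hρ0 : 0 < ρ := by linarith
  have hp0 : 0 < p := by rw [hp]; positivity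
  have hyu : (y : ℝ) ≤ 2 * (p * N) := by
    have := Nat.ceil_lt_add_one (show 0 ≤ p * N by linarith)
    rw [hy]; linarith
  set l : ℝ := ρ * (M ^ η / η) with hl
  have hl0 : 0 ≤ l := by positivity
  have hinv : p⁻¹ ≤ Real.exp l := by
    rw [← Real.log_le_iff_le_exp (by positivity), Real.log_inv, hp,
      Real.log_mul (by positivity) (by positivity), Real.log_rpow hM0]
    have h1 := Real.log_nonneg hK
    have h2 := mul_le_mul_of_nonneg_left (Real.log_le_rpow_div hM0.le hη) hρ0.le
    linarith
  have hpN' : p * N = K * M ^ (-η) * M ^ (-η) * X := by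
    have : M ^ (-η) * M ^ (-η) = M ^ (-ρ) * M := by
      rw [← Real.rpow_add hM0, ← Real.rpow_add_one hM0.ne', hρ]
      congr 1; ring
    rw [mul_assoc K, this, hp, hN]; ring
  have hMη : M ^ (-η) ≤ 1 := Real.rpow_le_one_of_one_le_of_nonpos hM (by linarith)
  have hMM : M ^ (-η) * M ^ η = 1 := by rw [← Real.rpow_add hM0]; simp
  calc ((1 + p) ^ N * p⁻¹ ^ y) ^ r
      ≤ (Real.exp p ^ N * Real.exp l ^ y) ^ r := by
        gcongr
        linarith [Real.add_one_le_exp p]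
    _ = Real.exp (r * (p * N + l * y)) := by
        rw [← Real.exp_nat_mul, ← Real.exp_nat_mul, ← Real.exp_add, ← Real.exp_nat_mul]
        congr 1; ring
    _ ≤ _ := by
        refine Real.exp_le_exp.2 ?_
        calc (r : ℝ) * (p * N + l * y) ≤ r * (p * N + l * (2 * (p * N))) := by gcongr
          _ = r * K * X * M ^ (-η) * (M ^ (-η) + 2 * ρ / η * (M ^ (-η) * M ^ η)) := by
              rw [hpN', hl]; ring
          _ ≤ r * K * X * M ^ (-η) * (1 + 2 * ρ / η * 1) := by
              rw [hMM]; gcongr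
          _ = _ := by ring

/-- The box-free `d`-uniform hypergraphs on `Fin n`. -/
noncomputable def boxFree (d n : ℕ) : Finset (Finset (Finset (Fin n))) :=
  open Classical in univ.filter fun E => (∀ e ∈ E, e.card = d) ∧ ¬ HasBox d n E

/-- One container step at a record: counting box-free subhypergraphs of a `G` with at least
`M₀ ex(n)` edges reduces to subsets of size `(1 - δ) |G|`, at the cost of a factor
`exp (K ex(n) M ^ (-η))` where `M = |G| / ex(n)`. -/
lemma count_step {d : ℕ} {γ θ η : ℝ} (hd : 2 ≤ d) (hγ : 0 < γ) (hθ1 : θ ≤ 1)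
    (hη : 0 < η) (hηγ : θ / γ = 1 + 2 * η) (hθ : θ * (2 ^ d - 1) = d) :
    ∃ M₀ K δ : ℝ, 1 ≤ M₀ ∧ 0 < K ∧ 0 < δ ∧ δ < 1 ∧ 1 ≤ (1 - δ) * M₀ ∧
      ∀ n, Record d γ n → ∀ G : Finset (Finset (Fin n)), (∀ e ∈ G, e.card = d) →
        M₀ * exBox d n ≤ G.card → ∀ Q : ℝ, 0 ≤ Q →
        (∀ C ⊆ G, (C.card : ℝ) ≤ (1 - δ) * G.card →
          (((boxFree d n).filter (· ⊆ C)).card : ℝ) ≤ Q) →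
        (((boxFree d n).filter (· ⊆ G)).card : ℝ) ≤
          Real.exp (exBox d n * (K * ((G.card : ℝ) / exBox d n) ^ (-η))) * Q := by
  classical
  obtain ⟨p₀, δ, hp₀, hp₀1, hδ0, hδ1, hcont⟩ := container_count (2 ^ d) 2
    (((2 : ℝ) ^ (2 ^ d + 1))⁻¹) (by norm_num) (by positivity)
  have hd0 : (2 : ℝ) ≤ d := by exact_mod_cast hd
  have hθγ : γ < θ := by
    have : 1 < θ / γ := by linarith
    rwa [one_lt_div hγ] at this
  have hθ0 : 0 < θ := by linarith
  set K₂ : ℝ := 4 * d * (2 ^ (d + 2)) ^ (1 / γ) with hK₂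
  have hK₂1 : 1 ≤ K₂ := by
    have h1 : (1 : ℝ) ≤ (2 ^ (d + 2)) ^ (1 / γ) :=
      Real.one_le_rpow (one_le_pow₀ (by norm_num)) (by positivity)
    rw [hK₂]; nlinarith
  have hK₂0 : 0 < K₂ := by linarith
  set K₃ : ℝ := K₂ ^ θ with hK₃
  have hK₃1 : 1 ≤ K₃ := Real.one_le_rpow hK₂1 hθ0.le
  have hK₃0 : 0 < K₃ := by linarith
  refine ⟨max (1 - δ)⁻¹ (max (K₂ ^ γ) ((K₃ / p₀) ^ (γ / θ))),
    (2 ^ d : ℕ) * K₃ * (1 + 2 * (θ / γ) / η), δ, ?_, by positivity, hδ0, hδ1, ?_, ?_⟩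
  · exact le_max_of_le_left ((one_le_inv₀ (by linarith)).2 (by linarith))
  · rw [← div_le_iff₀' (by linarith), one_div]
    exact le_max_left _ _
  intro n hrec G hG hMG Q hQ hC
  obtain ⟨hn, hlow, hmax⟩ := id hrec
  set X : ℝ := (exBox d n : ℝ) with hX
  have hn0 : (0 : ℝ) < n := by exact_mod_cast hn
  have hn1 : (1 : ℝ) ≤ n := by exact_mod_cast hn
  have hX0 : 0 < X := lt_of_lt_of_le (by positivity) hlow
  set M : ℝ := (G.card : ℝ) / X with hM
  rw [← le_div_iff₀ hX0, ← hM, max_le_iff, max_le_iff] at hMG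
  obtain ⟨hM1, hM2, hM3⟩ := hMG
  have hM1' : 1 ≤ M := le_trans ((one_le_inv₀ (by linarith)).2 (by linarith)) hM1
  have hM0 : 0 < M := by linarith
  have hMn : M ≤ (n : ℝ) ^ γ := by
    have h1 : (G.card : ℝ) ≤ (n : ℝ) ^ d := by
      have h2 : G.card ≤ (powersetCard d (univ : Finset (Fin n))).card :=
        card_le_card fun e he => mem_powersetCard.2 ⟨subset_univ _, hG e he⟩
      rw [card_powersetCard, card_univ, Fintype.card_fin] at h2
      exact_mod_cast h2.trans (Nat.choose_le_pow n d)
    rw [hM, div_le_iff₀ hX0]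
    calc (G.card : ℝ) ≤ (n : ℝ) ^ d := h1
      _ = (n : ℝ) ^ γ * (n : ℝ) ^ ((d : ℝ) - γ) := by
          rw [← Real.rpow_add hn0, ← Real.rpow_natCast]; congr 1; ring
      _ ≤ _ := by gcongr
  have hN : (G.card : ℝ) = M * X := by rw [hM]; field_simp
  have hNX : X ≤ G.card := by rw [hN]; nlinarith
  clear_value M
  clear hM
  set t : ℝ := (2 ^ (d + 2) / M) ^ (1 / γ) with ht
  have ht0 : 0 < t := by positivity
  have htγ : t ^ γ = 2 ^ (d + 2) / M := by
    rw [ht, ← Real.rpow_mul (by positivity), one_div, inv_mul_cancel₀ hγ.ne', Real.rpow_one]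
  have hz : 4 * d * t = K₂ * M ^ (-(1 / γ)) := by
    rw [ht, hK₂, Real.div_rpow (by positivity) hM0.le, Real.rpow_neg hM0.le]; ring
  have ht1 : 4 * d * t ≤ 1 := by
    rw [hz, Real.rpow_neg hM0.le, ← div_eq_mul_inv, div_le_one (by positivity)]
    calc K₂ = (K₂ ^ γ) ^ (1 / γ) := by
          rw [← Real.rpow_mul hK₂0.le, mul_one_div_cancel hγ.ne', Real.rpow_one]
      _ ≤ _ := by gcongr
  have htn : 1 ≤ n * t := by
    have h1 : 1 ≤ (n * t) ^ γ := by
      rw [Real.mul_rpow hn0.le ht0.le, htγ, mul_div_assoc', one_le_div hM0]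
      have : (1 : ℝ) ≤ 2 ^ (d + 2) := one_le_pow₀ (by norm_num)
      nlinarith
    by_contra hlt
    push Not at hlt
    exact absurd (Real.rpow_lt_one (by positivity) hlt hγ) (not_lt.2 h1)
  obtain ⟨w, hw0, hwE, hwT, hwe⟩ := exists_balanced hd hγ hθ0 hθ hrec hG ht0 ht1 htn (by
    rw [htγ, hN, ← hX]; field_simp)
  set p : ℝ := (4 * d * t) ^ θ with hp
  have hpM : p = K₃ * M ^ (-(θ / γ)) := by
    rw [hp, hz, Real.mul_rpow hK₂0.le (by positivity), ← Real.rpow_mul hM0.le]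
    congr 2; ring
  have hp0 : 0 < p := by positivity
  have hpp₀ : p ≤ p₀ := by
    rw [hpM, Real.rpow_neg hM0.le, ← div_eq_mul_inv, div_le_iff₀ (by positivity),
      ← div_le_iff₀' hp₀]
    calc K₃ / p₀ = ((K₃ / p₀) ^ (γ / θ)) ^ (θ / γ) := by
          rw [← Real.rpow_mul (by positivity), div_mul_div_cancel₀ hθ0.ne', div_self hγ.ne',
            Real.rpow_one]
      _ ≤ _ := by gcongr
  have hpN : 1 ≤ p * G.card := by
    have h1 : (n : ℝ)⁻¹ ≤ p := by
      calc (n : ℝ)⁻¹ = (n : ℝ) ^ (-1 : ℝ) := (Real.rpow_neg_one _).symm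
        _ ≤ (n : ℝ) ^ (-θ) := Real.rpow_le_rpow_of_exponent_le hn1 (by linarith)
        _ = ((n : ℝ) ^ γ) ^ (-(θ / γ)) := by
            rw [← Real.rpow_mul hn0.le]; congr 1; field_simp
        _ ≤ M ^ (-(θ / γ)) :=
            Real.rpow_le_rpow_of_nonpos hM0 hMn (neg_nonpos.2 (by positivity))
        _ ≤ p := by rw [hpM]; exact le_mul_of_one_le_left (by positivity) hK₃1
    have h2 : (n : ℝ) ≤ G.card := by
      calc (n : ℝ) = (n : ℝ) ^ (1 : ℝ) := (Real.rpow_one _).symm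
        _ ≤ (n : ℝ) ^ ((d : ℝ) - γ) := Real.rpow_le_rpow_of_exponent_le hn1 (by linarith)
        _ ≤ _ := hlow.trans hNX
    calc (1 : ℝ) = (n : ℝ)⁻¹ * n := (inv_mul_cancel₀ hn0.ne').symm
      _ ≤ _ := by gcongr
  have hGpos : 0 < G.card := by
    have : (0 : ℝ) < G.card := hX0.trans_le hNX
    exact_mod_cast this
  have key := hcont G w (boxFree d n) p Q ⌈p * G.card⌉₊ hp0 hpp₀ (Nat.le_ceil _) hGpos hQ hw0
    (fun E hE => ⟨(hwE E hE).1, (hwE E hE).2.1⟩) hwT hwe hC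
  have hsub : (boxFree d n).filter (· ⊆ G) ⊆
      (boxFree d n).filter fun I => I ⊆ G ∧ ∀ E ⊆ I, w E = 0 := by
    intro I hI
    rw [mem_filter] at hI ⊢
    refine ⟨hI.1, hI.2, fun E hE => ?_⟩
    by_contra hne
    obtain ⟨g, hg, hgE⟩ := (hwE E hne).2.2
    have h1 := hI.1
    simp only [boxFree, mem_filter, mem_univ, true_and] at h1
    exact h1.2 (hasBox_iff.2 ⟨g, hg, hgE.trans hE⟩)
  calc (((boxFree d n).filter (· ⊆ G)).card : ℝ) ≤ _ := by exact_mod_cast card_le_card hsub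
    _ ≤ _ := key
    _ ≤ _ := mul_le_mul_of_nonneg_right
      (cost_le hη hηγ hM1' hK₃1 hX0 hN hpM hpN rfl) hQ

/-! ### Iterating the container step -/

/-- Bound on the exponent, in units of `ex(n)`, for a container with `t · ex(n)` edges. It is bounded
in `t`, and its increase from `(1 - δ) t` to `t` pays for one container step. -/
noncomputable def potential (M₀ B η t : ℝ) : ℝ := M₀ + B * (1 - (max t 1) ^ (-η))

lemma potential_mono {M₀ B η t t' : ℝ} (hB : 0 ≤ B) (hη : 0 ≤ η) (h : t ≤ t') :
    potential M₀ B η t ≤ potential M₀ B η t' := by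
  unfold potential
  have h1 : (max t' 1) ^ (-η) ≤ (max t 1) ^ (-η) :=
    Real.rpow_le_rpow_of_nonpos (lt_max_of_lt_right one_pos) (max_le_max_right 1 h) (by linarith)
  gcongr

lemma le_potential {M₀ B η t : ℝ} (hB : 0 ≤ B) (hη : 0 ≤ η) : M₀ ≤ potential M₀ B η t := by
  unfold potential
  have h1 : (max t 1) ^ (-η) ≤ 1 :=
    Real.rpow_le_one_of_one_le_of_nonpos (le_max_right _ _) (by linarith)
  have : 0 ≤ B * (1 - (max t 1) ^ (-η)) := mul_nonneg hB (by linarith)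
  linarith

lemma potential_le {M₀ B η t : ℝ} (hB : 0 ≤ B) : potential M₀ B η t ≤ M₀ + B := by
  unfold potential
  have h1 : 0 ≤ (max t 1) ^ (-η) := Real.rpow_nonneg (le_max_of_le_right zero_le_one) _
  nlinarith

/-- Strong induction on `|G|`: below `M₀ X` edges all subsets are counted, and above this the step
costs form a geometric series absorbed by `potential`. -/
lemma count_le_of_step {n d : ℕ} {M₀ K δ η X : ℝ} (hη : 0 < η) (hM₀ : 1 ≤ M₀) (hK : 0 < K)
    (hδ0 : 0 < δ) (hδ1 : δ < 1) (hδM : 1 ≤ (1 - δ) * M₀) (hX : 0 < X)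
    (hstep : ∀ G : Finset (Finset (Fin n)), (∀ e ∈ G, e.card = d) →
        M₀ * X ≤ G.card → ∀ Q : ℝ, 0 ≤ Q →
        (∀ C ⊆ G, (C.card : ℝ) ≤ (1 - δ) * G.card →
          (((boxFree d n).filter (· ⊆ C)).card : ℝ) ≤ Q) →
        (((boxFree d n).filter (· ⊆ G)).card : ℝ) ≤
          Real.exp (X * (K * ((G.card : ℝ) / X) ^ (-η))) * Q)
    (G : Finset (Finset (Fin n))) (hG : ∀ e ∈ G, e.card = d) :
    (((boxFree d n).filter (· ⊆ G)).card : ℝ) ≤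
      Real.exp (X * potential M₀ (K / ((1 - δ) ^ (-η) - 1)) η (G.card / X)) := by
  have hgap : 0 < (1 - δ) ^ (-η) - 1 := by
    have := Real.one_lt_rpow_of_pos_of_lt_one_of_neg (show 0 < 1 - δ by linarith)
      (by linarith) (neg_lt_zero.2 hη)
    linarith
  set B : ℝ := K / ((1 - δ) ^ (-η) - 1) with hB
  have hB0 : 0 < B := by positivity
  have hBK : B * ((1 - δ) ^ (-η) - 1) = K := by rw [hB]; field_simp
  clear_value B
  induction hk : G.card using Nat.strong_induction_on generalizing G with
  | _ k ih =>
  subst hk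
  by_cases hcase : M₀ * X ≤ G.card
  · set M : ℝ := (G.card : ℝ) / X with hM
    have hMM : M₀ ≤ M := by rwa [hM, le_div_iff₀ hX]
    have hM0 : 0 < M := by linarith
    have hδM' : 1 ≤ (1 - δ) * M := by nlinarith
    have hGpos : (0 : ℝ) < G.card := lt_of_lt_of_le (by positivity) hcase
    have h1 := hstep G hG hcase (Real.exp (X * potential M₀ B η ((1 - δ) * M)))
      (Real.exp_pos _).le (by
        intro C hCG hC
        have hlt : C.card < G.card := by
          have : (C.card : ℝ) < G.card := lt_of_le_of_lt hC (by nlinarith)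
          exact_mod_cast this
        refine (ih _ hlt C (fun e he => hG e (hCG he)) rfl).trans ?_
        refine Real.exp_le_exp.2 (mul_le_mul_of_nonneg_left ?_ hX.le)
        refine potential_mono hB0.le hη.le ?_
        rw [hM, div_le_iff₀ hX]
        calc (C.card : ℝ) ≤ _ := hC
          _ = _ := by field_simp)
    refine h1.trans (le_of_eq ?_)
    rw [← hM, ← Real.exp_add, ← mul_add]
    congr 2
    unfold potential
    rw [max_eq_left hδM', max_eq_left (by linarith),
      Real.mul_rpow (by linarith) hM0.le, ← hBK]
    ring
  · push Not at hcase
    have h1 : ((boxFree d n).filter (· ⊆ G)).card ≤ 2 ^ G.card := by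
      rw [← card_powerset]
      exact card_le_card fun I hI => mem_powerset.2 (mem_filter.1 hI).2
    calc (((boxFree d n).filter (· ⊆ G)).card : ℝ) ≤ (2 : ℝ) ^ G.card := by exact_mod_cast h1
      _ ≤ Real.exp 1 ^ G.card := by
          gcongr
          linarith [Real.add_one_le_exp 1]
      _ = Real.exp G.card := by rw [← Real.exp_nat_mul, mul_one]
      _ ≤ Real.exp (X * potential M₀ B η (G.card / X)) := by
          refine Real.exp_le_exp.2 (hcase.le.trans ?_)
          rw [mul_comm]
          exact mul_le_mul_of_nonneg_left (le_potential hB0.le hη.le) hX.le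

lemma card_boxFree (d n : ℕ) :
    Nat.card {E : Finset (Finset (Fin n)) // (∀ e ∈ E, e.card = d) ∧ ¬ HasBox d n E} =
      ((boxFree d n).filter (· ⊆ powersetCard d univ)).card := by
  classical
  rw [Nat.card_eq_fintype_card, Fintype.card_subtype]
  congr 1
  ext E
  simp only [boxFree, mem_filter, mem_univ, true_and]
  refine ⟨fun h => ⟨h, fun e he => mem_powersetCard.2 ⟨subset_univ _, h.1 e he⟩⟩, fun h => h.1⟩

end BoxCount

/-- Corollary 4 (counting box-free hypergraphs): for any `d ≥ 2` there is a constant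
`C > 0` and an infinite set of positive integers `n` for which the number of labeled
`K_{2,…,2}^{(d)}`-free `d`-uniform hypergraphs on vertex set `{1,…,n}` is at most
`2 ^ (C ⬝ ex_d(n, K_{2,…,2}^{(d)}))`. -/
theorem counting_box_free_hypergraphs (d : ℕ) (hd : 2 ≤ d) :
    ∃ C : ℝ, 0 < C ∧
      {n : ℕ | 0 < n ∧
        (Nat.card {E : Finset (Finset (Fin n)) //
            (∀ e ∈ E, e.card = d) ∧ ¬ HasBox d n E} : ℝ)
          ≤ (2 : ℝ) ^ (C * (exBox d n : ℝ))}.Infinite := by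
  obtain ⟨s, hs1, hsu, hsl⟩ := BoxCount.exists_dimension hd
  have hd0 : (2 : ℝ) ≤ d := by exact_mod_cast hd
  have hs0 : (1 : ℝ) ≤ s := by exact_mod_cast hs1
  have hsl' : (2 : ℝ) ^ d ≤ s * d := by exact_mod_cast hsl
  have hdlt : (d : ℝ) + 1 ≤ 2 ^ d := by exact_mod_cast Nat.lt_two_pow_self (n := d)
  set θ : ℝ := d / (2 ^ d - 1) with hθdef
  have hden : (0 : ℝ) < 2 ^ d - 1 := by linarith
  have hθ : θ * (2 ^ d - 1) = d := by rw [hθdef]; field_simp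
  have hθ1 : θ ≤ 1 := by rw [hθdef, div_le_one hden]; linarith
  have hsθ : 1 / (s : ℝ) < θ := by
    rw [hθdef, div_lt_div_iff₀ (by linarith) hden]; linarith
  clear_value θ
  -- Any exponent strictly between `1 / s` and `θ` works.
  set γ : ℝ := (1 / s + θ) / 2 with hγdef
  have hs' : 0 < 1 / (s : ℝ) := by positivity
  have hγ1 : 1 / (s : ℝ) < γ := by rw [hγdef]; linarith
  have hγθ : γ < θ := by rw [hγdef]; linarith
  clear_value γ
  have hγ : 0 < γ := hs'.trans hγ1
  have hsγ : 1 < s * γ := by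
    rw [div_lt_iff₀ (by linarith)] at hγ1; linarith
  have hη : 0 < (θ / γ - 1) / 2 := by
    have : 1 < θ / γ := (one_lt_div hγ).2 hγθ
    linarith
  obtain ⟨M₀, K, δ, hM₀, hK, hδ0, hδ1, hδM, hstep⟩ :=
    BoxCount.count_step (η := (θ / γ - 1) / 2) hd hγ hθ1 hη (by ring) hθ
  set η : ℝ := (θ / γ - 1) / 2
  have hgap : 0 < (1 - δ) ^ (-η) - 1 := by
    have := Real.one_lt_rpow_of_pos_of_lt_one_of_neg (show 0 < 1 - δ by linarith)
      (by linarith) (neg_lt_zero.2 hη)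
    linarith
  set B : ℝ := K / ((1 - δ) ^ (-η) - 1) with hB
  have hB0 : 0 < B := by positivity
  have hlog : 0 < Real.log 2 := Real.log_pos (by norm_num)
  refine ⟨(M₀ + B) / Real.log 2, by positivity, Set.infinite_of_forall_exists_gt fun L => ?_⟩
  obtain ⟨n, hLn, hrec⟩ :=
    BoxCount.exists_record_gt (BoxCount.exBox_unbounded hd hs1 hsu hsγ) L
  have hn0 : (0 : ℝ) < n := by exact_mod_cast hrec.1
  have hX : (0 : ℝ) < exBox d n := lt_of_lt_of_le (by positivity) hrec.2.1
  refine ⟨n, ⟨hrec.1, ?_⟩, hLn⟩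
  rw [BoxCount.card_boxFree]
  refine (BoxCount.count_le_of_step hη hM₀ hK hδ0 hδ1 hδM hX (hstep n hrec) _
    fun e he => (Finset.mem_powersetCard.1 he).2).trans ?_
  rw [Real.rpow_def_of_pos (by norm_num : (0 : ℝ) < 2)]
  refine Real.exp_le_exp.2 ?_
  calc (exBox d n : ℝ) * BoxCount.potential M₀ B η _ ≤ exBox d n * (M₀ + B) :=
        mul_le_mul_of_nonneg_left (BoxCount.potential_le hB0.le) hX.le
    _ = _ := by field_simp
end
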